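/- Let q be a prime power and let Q_1, Q_2 ∈ F_q[x_0,…,x_4] be quadratic forms whose common zero locus X = V(Q_1,Q_2) ⊂ P^4 is a smooth complete intersection surface over \bar{F}_q (a del Pezzo surface of degree 4). Then there exists a constant c > 0 (depending on q, Q_1, Q_2 but not on e) such that for every e ≥ 0, the number of tuples (x_0(t),…,x_4(t)) ∈ F_q[t]^5 with gcd = 1 in F_q[t], max_i deg x_i ≤ e, Q_1(x(t)) = Q_2(x(t)) = 0 in F_q[t], and such that the vector (x_0(t),…,x_4(t)) ∈ \bar{F}_q(t)^5 does not lie in the \bar{F}_q(t)-linear span of any 2-dimensional \bar{F}_q-linear subspace W ⊆ \bar{F}_q^5 on which both Q_1 and Q_2 vanish identically, is at most c · (16q)^e. Equivalently, N_U(q^e) = O(16^e q^e) where U is the complement of the lines of X. -/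

import Mathlib

/-!
The argument has two independent halves: a bound for the dimension of the space of rational curves
of degree `e` on `X`, and a weighted Bézout inequality which turns that bound into a count of
`F_q`-points. Write `K` for the algebraic closure of `F_q`.

**Dimension.** Let `x ∈ L[t]^5` be a unimodular vector of degree exactly `e`, over an extension `L`
of `K`, which lies on `X` but not on a line of `X`. The field generated over `K` by the coefficients
of `x` has transcendence degree at most `e + 3` (`trdeg_le`). Since `trdeg` is at most the dimension
of the space of derivations, in every characteristic (`trdeg_le_of_rank_der`), it suffices to bound
`Der_K(L, L)` when `L` is that field.

Some member of the pencil of quadrics through `X` is singular (`exists_singular`), and by smoothness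
its vertex is unique and lies off the other quadrics. In suitable coordinates (`exists_hyperbolic`)
the surface is therefore `y₀ y₃ = y₁ y₂`, `w² + w L(y) + R(y) = 0`: a double cover of `P¹ × P¹`,
i.e. a conic bundle in two ways. A curve on it has the form `(ur, us, vr, vs, w)` (`segre`), with
`(u, v)` of degree `A`, `(r, s)` of degree `B`, `A + B = e`, and `A ≤ B` after exchanging the two
rulings. The equation is now a quadratic form `q` in `(r, s, w)` with coefficients in `(u, v)`.
Its half-discriminant `disc(u, v)` is a quartic form, squarefree because `X` is smooth
(`Smooth.sep`), and not zero along the curve because the curve is not a line (`disc_ne_zero`).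

Let `g` be the gcd of `∂q/∂r, ∂q/∂s, ∂q/∂w` along the curve, let `n` be the analogous order of
vanishing at infinity, and put `T = deg g + n`. Then `g² ∣ disc(u, v)` (`sq_dvd_disc`, and
`disc_deg` at infinity). As `disc` is squarefree, `g` divides `ω(D) = u·Dv − v·Du` for every
derivation `D` (`dvd_ω`, `ω_deg`); as `ω(D)` has degree at most `2A`, it moves in a space of
dimension `2A − T + 1`. If `ω(D) = 0` then `D` kills the normalised pair `(u, v)`, the vector
`D(r, s, w)` is orthogonal to the gradient, and hence `(r, s, w) × D(r, s, w)` is `κ` times the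
gradient divided by `g`, where `κ` has degree at most `B − A + T`. If moreover `κ = 0`, then `D`
only rescales `(r, s, w)`. The sum of the three dimensions,
`(2A − T + 1) + (B − A + T + 1) + 1 = A + B + 3`, does not depend on `T` (`Curve.rank_der_le`).

**Counting.** The vectors of degree exactly `e` over `F_q` are solutions in affine space of
dimension `5(e + 1)` of the `2(2e + 1)` quadratic equations expressing that `x` lies on `X`, together
with the equations `x_i ^ q = x_i`. Replace the latter by `e + 3 = 5(e + 1) − 2(2e + 1)` generic
linear combinations of the polynomials `x_i ^ q − x_i`. By the dimension bound the points to be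
counted are isolated solutions of the resulting square system (`field_isAlgebraic`, `isol_point`).
A Bézout bound then gives `q^(e+3) · 2^(4e+2)`, which is a constant times `(16q)^e`, and summing
over the degrees up to `e` gives the theorem.

The Bézout inequality is proved by counting jets (`card_le_prod`). Choose coordinates so that the
`j`-th generic combination has linear part `−X_j` at every point, give `X_j` the weight `q` and the
remaining coordinates the weight `2`. Then the generic combinations have degree and weight `q` and
the quadratic equations have degree `2`, and weight at least `2`, at each point of the solution set
`S` (`FF_mem_wtI`). Consequently one can correct polynomials modulo the system degree by degree, and
all jets of weight less than `m` at the points of `S` are realised by polynomials of degree less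
than `m + δ` with `δ` constant (`card_mul_low_le`). Comparing dimensions as `m` grows yields
`|S| ≤ ∏ weights`, with no intersection multiplicities involved.
-/

set_option linter.unusedSimpArgs false
set_option linter.unusedVariables false
set_option linter.unusedSectionVars false

/-! ### Quadratic forms in `(r, s, w)` over a pencil -/

namespace DP4

/-- The coefficients of `q = w² + w (e r + d s) + a r² + f r s + b s²`, where `e, d` are linear and
`a, f, b` are quadratic forms in `(u, v)`. The matrix `l` holds the coefficients of the bilinear
part: rows are indexed by `u, v`, columns by `r, s`. The matrix `ρ` holds those of the part free of
`w`: rows are indexed by `u², uv, v²`, columns by `r², rs, s²`. -/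
structure BiForm (K : Type) where
  l : Fin 2 → Fin 2 → K
  ρ : Fin 3 → Fin 3 → K

namespace BiForm

/-- Application of a ring homomorphism to the coefficients. -/
def map {K R : Type} [CommRing K] [CommRing R] (f : K →+* R) (F : BiForm K) : BiForm R where
  l i j := f (F.l i j)
  ρ i j := f (F.ρ i j)

/-- Exchange of the roles of `(u, v)` and `(r, s)`. -/
def swap {K : Type} (F : BiForm K) : BiForm K where
  l i j := F.l j i
  ρ i j := F.ρ j i

variable {R : Type} [CommRing R] (F : BiForm R)

/-- The coefficient of `r²` in `q`. -/
def a (u v : R) : R := F.ρ 0 0 * u ^ 2 + F.ρ 1 0 * u * v + F.ρ 2 0 * v ^ 2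
/-- The coefficient of `rs` in `q`. -/
def f (u v : R) : R := F.ρ 0 1 * u ^ 2 + F.ρ 1 1 * u * v + F.ρ 2 1 * v ^ 2
/-- The coefficient of `s²` in `q`. -/
def b (u v : R) : R := F.ρ 0 2 * u ^ 2 + F.ρ 1 2 * u * v + F.ρ 2 2 * v ^ 2
/-- The coefficient of `wr` in `q`. -/
def e (u v : R) : R := F.l 0 0 * u + F.l 1 0 * v
/-- The coefficient of `ws` in `q`. -/
def d (u v : R) : R := F.l 0 1 * u + F.l 1 1 * v

/-- The value of the form, quadratic in `(r, s, w)` for fixed `(u, v)`. -/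
def q (u v r s w : R) : R :=
  w ^ 2 + w * (F.e u v * r + F.d u v * s) + F.a u v * r ^ 2 + F.f u v * r * s + F.b u v * s ^ 2
/-- The partial derivative of `q` in `r`. -/
def qr (u v r s w : R) : R := F.e u v * w + 2 * F.a u v * r + F.f u v * s
/-- The partial derivative of `q` in `s`. -/
def qs (u v r s w : R) : R := F.d u v * w + F.f u v * r + 2 * F.b u v * s
/-- The partial derivative of `q` in `w`. -/
def qw (u v r s w : R) : R := 2 * w + F.e u v * r + F.d u v * s
/-- The partial derivative of `q` in `u`. -/
def qu (u v r s w : R) : R :=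
  w * (F.l 0 0 * r + F.l 0 1 * s) + (2 * F.ρ 0 0 * u + F.ρ 1 0 * v) * r ^ 2
    + (2 * F.ρ 0 1 * u + F.ρ 1 1 * v) * r * s + (2 * F.ρ 0 2 * u + F.ρ 1 2 * v) * s ^ 2
/-- The partial derivative of `q` in `v`. -/
def qv (u v r s w : R) : R :=
  w * (F.l 1 0 * r + F.l 1 1 * s) + (2 * F.ρ 2 0 * v + F.ρ 1 0 * u) * r ^ 2
    + (2 * F.ρ 2 1 * v + F.ρ 1 1 * u) * r * s + (2 * F.ρ 2 2 * v + F.ρ 1 2 * u) * s ^ 2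

/-- The half-discriminant of `q` as a ternary quadratic form in `(r, s, w)`, a quartic form in `(u,
v)`. It detects degenerate fibres in every characteristic, including `2`. -/
def disc (u v : R) : R :=
  4 * F.a u v * F.b u v + F.d u v * F.e u v * F.f u v - F.a u v * F.d u v ^ 2
    - F.b u v * F.e u v ^ 2 - F.f u v ^ 2
/-- The partial derivative of `disc` in `u`. -/
def discU (u v : R) : R :=
  4 * (2 * F.ρ 0 0 * u + F.ρ 1 0 * v) * F.b u v + 4 * F.a u v * (2 * F.ρ 0 2 * u + F.ρ 1 2 * v)
    + F.l 0 1 * F.e u v * F.f u v + F.d u v * F.l 0 0 * F.f u v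
    + F.d u v * F.e u v * (2 * F.ρ 0 1 * u + F.ρ 1 1 * v)
    - (2 * F.ρ 0 0 * u + F.ρ 1 0 * v) * F.d u v ^ 2 - F.a u v * (2 * F.d u v * F.l 0 1)
    - (2 * F.ρ 0 2 * u + F.ρ 1 2 * v) * F.e u v ^ 2 - F.b u v * (2 * F.e u v * F.l 0 0)
    - 2 * F.f u v * (2 * F.ρ 0 1 * u + F.ρ 1 1 * v)
/-- The partial derivative of `disc` in `v`. -/
def discV (u v : R) : R :=
  4 * (2 * F.ρ 2 0 * v + F.ρ 1 0 * u) * F.b u v + 4 * F.a u v * (2 * F.ρ 2 2 * v + F.ρ 1 2 * u)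
    + F.l 1 1 * F.e u v * F.f u v + F.d u v * F.l 1 0 * F.f u v
    + F.d u v * F.e u v * (2 * F.ρ 2 1 * v + F.ρ 1 1 * u)
    - (2 * F.ρ 2 0 * v + F.ρ 1 0 * u) * F.d u v ^ 2 - F.a u v * (2 * F.d u v * F.l 1 1)
    - (2 * F.ρ 2 2 * v + F.ρ 1 2 * u) * F.e u v ^ 2 - F.b u v * (2 * F.e u v * F.l 1 0)
    - 2 * F.f u v * (2 * F.ρ 2 1 * v + F.ρ 1 1 * u)

theorem q_swap (u v r s w : R) : F.swap.q u v r s w = F.q r s u v w := by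
  simp only [swap, q, a, b, d, e, f]; ring
theorem qr_swap (u v r s w : R) : F.swap.qr u v r s w = F.qu r s u v w := by
  simp only [swap, qr, qu, a, b, d, e, f]; ring
theorem qs_swap (u v r s w : R) : F.swap.qs u v r s w = F.qv r s u v w := by
  simp only [swap, qs, qv, a, b, d, e, f]; ring
theorem qu_swap (u v r s w : R) : F.swap.qu u v r s w = F.qr r s u v w := by
  simp only [swap, qr, qu, a, b, d, e, f]; ring
theorem qv_swap (u v r s w : R) : F.swap.qv u v r s w = F.qs r s u v w := by
  simp only [swap, qs, qv, a, b, d, e, f]; ring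
theorem qw_swap (u v r s w : R) : F.swap.qw u v r s w = F.qw r s u v w := by
  simp only [swap, qw, a, b, d, e, f]; ring

theorem euler_rsw (u v r s w : R) :
    F.qr u v r s w * r + F.qs u v r s w * s + F.qw u v r s w * w = 2 * F.q u v r s w := by
  simp only [q, qr, qs, qw]; ring
theorem euler_uv (u v r s w : R) :
    u * F.qu u v r s w + v * F.qv u v r s w = r * F.qr u v r s w + s * F.qs u v r s w := by
  simp only [qr, qs, qu, qv, a, b, d, e, f]; ring
theorem euler_disc (u v : R) : u * F.discU u v + v * F.discV u v = 4 * F.disc u v := by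
  simp only [disc, discU, discV, a, b, d, e, f]; ring

/-- On the surface `q = 0`, the form `r² disc` lies in the square of the ideal generated by the
partial derivatives in `s` and `w`. -/
theorem r_disc (u v r s w : R) : r ^ 2 * F.disc u v =
    (4 * F.b u v - F.d u v ^ 2) * F.q u v r s w
      - (F.b u v * F.qw u v r s w ^ 2 - F.d u v * F.qs u v r s w * F.qw u v r s w
        + F.qs u v r s w ^ 2) := by
  simp only [disc, q, qs, qw]; ring
/-- On the surface `q = 0`, the form `s² disc` lies in the square of the ideal generated by the
partial derivatives in `r` and `w`. -/
theorem s_disc (u v r s w : R) : s ^ 2 * F.disc u v =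
    (4 * F.a u v - F.e u v ^ 2) * F.q u v r s w
      - (F.a u v * F.qw u v r s w ^ 2 - F.e u v * F.qr u v r s w * F.qw u v r s w
        + F.qr u v r s w ^ 2) := by
  simp only [disc, q, qr, qw]; ring

section map
variable {S : Type} [CommRing S] (φ : R →+* S)
theorem map_disc (u v : R) : φ (F.disc u v) = (F.map φ).disc (φ u) (φ v) := by
  have h4 : φ 4 = 4 := _root_.map_ofNat φ 4
  have h2 : φ 2 = 2 := _root_.map_ofNat φ 2
  simp [disc, a, b, d, e, f, map, h4, h2]
theorem map_discU (u v : R) : φ (F.discU u v) = (F.map φ).discU (φ u) (φ v) := by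
  have h4 : φ 4 = 4 := _root_.map_ofNat φ 4
  have h2 : φ 2 = 2 := _root_.map_ofNat φ 2
  simp [discU, a, b, d, e, f, map, h4, h2]
theorem map_discV (u v : R) : φ (F.discV u v) = (F.map φ).discV (φ u) (φ v) := by
  have h4 : φ 4 = 4 := _root_.map_ofNat φ 4
  have h2 : φ 2 = 2 := _root_.map_ofNat φ 2
  simp [discV, a, b, d, e, f, map, h4, h2]
theorem map_map {T : Type} [CommRing T] (ψ : S →+* T) :
    (F.map φ).map ψ = F.map (ψ.comp φ) := rfl
end map

section der
variable {K : Type} [CommRing K] [Algebra K R] (G : BiForm K) (δ : Derivation K R R)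
theorem der_disc (u v : R) : δ ((G.map (algebraMap K R)).disc u v) =
    (G.map (algebraMap K R)).discU u v * δ u + (G.map (algebraMap K R)).discV u v * δ v := by
  have h4 : δ 4 = 0 := δ.map_natCast 4
  simp only [disc, discU, discV, a, b, d, e, f, map, map_add, map_sub, Derivation.leibniz,
    Derivation.leibniz_pow, Derivation.map_algebraMap, smul_eq_mul, nsmul_eq_mul, h4]
  push_cast
  ring
theorem der_q (u v r s w : R) : δ ((G.map (algebraMap K R)).q u v r s w) =
    (G.map (algebraMap K R)).qu u v r s w * δ u + (G.map (algebraMap K R)).qv u v r s w * δ v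
    + (G.map (algebraMap K R)).qr u v r s w * δ r + (G.map (algebraMap K R)).qs u v r s w * δ s
    + (G.map (algebraMap K R)).qw u v r s w * δ w := by
  simp only [q, qu, qv, qr, qs, qw, a, b, d, e, f, map, map_add, map_sub, Derivation.leibniz,
    Derivation.leibniz_pow, Derivation.map_algebraMap, smul_eq_mul, nsmul_eq_mul]
  push_cast
  ring
end der

/-- If the quartic `disc` has no multiple root then powers of `u` and `v` lie in the ideal
generated by `disc` and its two partial derivatives. By the Nullstellensatz this holds for
indeterminates, so the exponent is uniform over all `K`-algebras. -/
theorem exists_pow_mem {K : Type} [Field K] [IsAlgClosed K] (F : BiForm K)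
    (hsep : ∀ u v : K, F.disc u v = 0 → F.discU u v = 0 → F.discV u v = 0 → u = 0 ∧ v = 0) :
    ∃ k : ℕ, ∀ (R : Type) [CommRing R] [Algebra K R] (u v : R),
      (∃ A B C : R, u ^ k = A * (F.map (algebraMap K R)).disc u v
        + B * (F.map (algebraMap K R)).discU u v + C * (F.map (algebraMap K R)).discV u v) ∧
      (∃ A B C : R, v ^ k = A * (F.map (algebraMap K R)).disc u v
        + B * (F.map (algebraMap K R)).discU u v + C * (F.map (algebraMap K R)).discV u v) := by
  classical
  let G := F.map (algebraMap K (MvPolynomial (Fin 2) K))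
  let X0 : MvPolynomial (Fin 2) K := MvPolynomial.X 0
  let X1 : MvPolynomial (Fin 2) K := MvPolynomial.X 1
  let I : Ideal (MvPolynomial (Fin 2) K) := Ideal.span {G.disc X0 X1, G.discU X0 X1, G.discV X0 X1}
  have key : ∀ i : Fin 2, (MvPolynomial.X i : MvPolynomial (Fin 2) K) ∈ I.radical := by
    intro i
    rw [← MvPolynomial.vanishingIdeal_zeroLocus_eq_radical (K := K), MvPolynomial.mem_vanishingIdeal_iff]
    intro x hx
    rw [MvPolynomial.mem_zeroLocus_iff] at hx
    have hc : ((MvPolynomial.aeval x : MvPolynomial (Fin 2) K →ₐ[K] K) : MvPolynomial (Fin 2) K →+* K).comp (algebraMap K (MvPolynomial (Fin 2) K))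
        = RingHom.id K := by
      ext c; simp
    have h1 := hx _ (Ideal.subset_span (show G.disc X0 X1 ∈ _ by simp))
    have h2 := hx _ (Ideal.subset_span (show G.discU X0 X1 ∈ _ by simp))
    have h3 := hx _ (Ideal.subset_span (show G.discV X0 X1 ∈ _ by simp))
    have g1 := G.map_disc ((MvPolynomial.aeval x : MvPolynomial (Fin 2) K →ₐ[K] K) : MvPolynomial (Fin 2) K →+* K) X0 X1
    have g2 := G.map_discU ((MvPolynomial.aeval x : MvPolynomial (Fin 2) K →ₐ[K] K) : MvPolynomial (Fin 2) K →+* K) X0 X1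
    have g3 := G.map_discV ((MvPolynomial.aeval x : MvPolynomial (Fin 2) K →ₐ[K] K) : MvPolynomial (Fin 2) K →+* K) X0 X1
    have hG : G.map ((MvPolynomial.aeval x : MvPolynomial (Fin 2) K →ₐ[K] K) : MvPolynomial (Fin 2) K →+* K) = F := by
      simp only [G, map_map, hc]; rfl
    rw [hG] at g1 g2 g3
    simp only [RingHom.coe_coe, X0, X1, MvPolynomial.aeval_X] at g1 g2 g3
    have := hsep (x 0) (x 1) (g1.symm.trans h1) (g2.symm.trans h2) (g3.symm.trans h3)
    fin_cases i <;> simp [this.1, this.2]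
  obtain ⟨k0, hk0⟩ := key 0
  obtain ⟨k1, hk1⟩ := key 1
  refine ⟨k0 + k1, fun R _ _ u v => ?_⟩
  let ev : MvPolynomial (Fin 2) K →ₐ[K] R := MvPolynomial.aeval ![u, v]
  have main : ∀ p ∈ I, ∃ A B C : R, ev p = A * (F.map (algebraMap K R)).disc u v
        + B * (F.map (algebraMap K R)).discU u v + C * (F.map (algebraMap K R)).discV u v := by
    intro p hp
    rw [Ideal.mem_span_insert] at hp
    obtain ⟨A, z, hz, rfl⟩ := hp
    rw [Ideal.mem_span_pair] at hz
    obtain ⟨B, C, rfl⟩ := hz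
    refine ⟨ev A, ev B, ev C, ?_⟩
    have hc : (ev : MvPolynomial (Fin 2) K →+* R).comp (algebraMap K (MvPolynomial (Fin 2) K)) = algebraMap K R := by
      ext c; simp
    have hG : G.map (ev : MvPolynomial (Fin 2) K →+* R) = F.map (algebraMap K R) := by
      simp only [G, map_map, hc]
    have g1 := G.map_disc (ev : MvPolynomial (Fin 2) K →+* R) X0 X1
    have g2 := G.map_discU (ev : MvPolynomial (Fin 2) K →+* R) X0 X1
    have g3 := G.map_discV (ev : MvPolynomial (Fin 2) K →+* R) X0 X1
    rw [hG] at g1 g2 g3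
    have e0 : ev X0 = u := by simp [ev, X0]
    have e1 : ev X1 = v := by simp [ev, X1]
    simp only [RingHom.coe_coe, e0, e1] at g1 g2 g3
    simp only [map_add, map_mul, g1, g2, g3]
    ring
  constructor
  · have := main _ (I.mul_mem_right (MvPolynomial.X 0 ^ k1) hk0)
    simpa [ev, pow_add] using this
  · have := main _ (I.mul_mem_left (MvPolynomial.X 1 ^ k0) hk1)
    simpa [ev, pow_add] using this

end BiForm
end DP4

/-! ### Top coefficients and coefficientwise derivations of polynomials -/

namespace DP4
open Polynomial

/-- `p` has degree at most `n`, and its coefficient in degree `n` is `c` (possibly zero). -/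
structure Lead {L : Type} [CommRing L] (p : L[X]) (n : ℕ) (c : L) : Prop where
  le : p.natDegree ≤ n
  coeff : p.coeff n = c

namespace Lead
variable {L : Type} [CommRing L] {p p' : L[X]} {m n k : ℕ} {c c' : L}

theorem self (h : p.natDegree ≤ n) : Lead p n (p.coeff n) := ⟨h, rfl⟩
theorem cast (h : Lead p m c) (hk : m = k := by omega) : Lead p k c := hk ▸ h
theorem add (h : Lead p n c) (h' : Lead p' m c') (hk : m = n := by omega) :
    Lead (p + p') n (c + c') := by
  subst hk
  exact ⟨natDegree_add_le_of_degree_le h.le h'.le, by rw [coeff_add, h.coeff, h'.coeff]⟩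
theorem sub (h : Lead p n c) (h' : Lead p' m c') (hk : m = n := by omega) :
    Lead (p - p') n (c - c') := by
  subst hk
  exact ⟨natDegree_sub_le_of_le h.le h'.le |>.trans (by simp),
    by rw [coeff_sub, h.coeff, h'.coeff]⟩
theorem mul (h : Lead p m c) (h' : Lead p' n c') : Lead (p * p') (m + n) (c * c') :=
  ⟨natDegree_mul_le_of_le h.le h'.le, by
    rw [coeff_mul_add_eq_of_natDegree_le h.le h'.le, h.coeff, h'.coeff]⟩
theorem sq (h : Lead p m c) : Lead (p ^ 2) (m + m) (c ^ 2) := by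
  rw [pow_two, pow_two]; exact h.mul h
theorem const (K : Type) [CommRing K] [Algebra K L] (x : K) :
    Lead (algebraMap K L[X] x) 0 (algebraMap K L x) := by
  rw [Polynomial.algebraMap_apply]
  exact ⟨by simp, by simp⟩
theorem two : Lead (2 : L[X]) 0 2 := ⟨by simp, by simp⟩
theorem four : Lead (4 : L[X]) 0 4 := ⟨by simp, by simp⟩

end Lead

section bi
variable {K L : Type} [CommRing K] [CommRing L] [Algebra K L] (F : BiForm K) {u v r s w : L[X]}
  {A B : ℕ} {cu cv cr cs cw : L} (hu : Lead u A cu) (hv : Lead v A cv)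
  (hr : Lead r B cr) (hs : Lead s B cs) (hw : Lead w (A + B) cw)
include hu hv

theorem lead_a : Lead ((F.map (algebraMap K L[X])).a u v) (2 * A)
    ((F.map (algebraMap K L)).a cu cv) :=
  ((((Lead.const K _).mul hu.sq).add (((Lead.const K _).mul hu).mul hv)).add
    ((Lead.const K _).mul hv.sq)).cast
theorem lead_f : Lead ((F.map (algebraMap K L[X])).f u v) (2 * A)
    ((F.map (algebraMap K L)).f cu cv) :=
  ((((Lead.const K _).mul hu.sq).add (((Lead.const K _).mul hu).mul hv)).add
    ((Lead.const K _).mul hv.sq)).cast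
theorem lead_b : Lead ((F.map (algebraMap K L[X])).b u v) (2 * A)
    ((F.map (algebraMap K L)).b cu cv) :=
  ((((Lead.const K _).mul hu.sq).add (((Lead.const K _).mul hu).mul hv)).add
    ((Lead.const K _).mul hv.sq)).cast
theorem lead_e : Lead ((F.map (algebraMap K L[X])).e u v) A
    ((F.map (algebraMap K L)).e cu cv) :=
  (((Lead.const K _).mul hu).add ((Lead.const K _).mul hv)).cast
theorem lead_d : Lead ((F.map (algebraMap K L[X])).d u v) A
    ((F.map (algebraMap K L)).d cu cv) :=
  (((Lead.const K _).mul hu).add ((Lead.const K _).mul hv)).cast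

theorem lead_lin (x y : K) : Lead (2 * algebraMap K L[X] x * u + algebraMap K L[X] y * v) A
    (2 * algebraMap K L x * cu + algebraMap K L y * cv) :=
  (((Lead.two.mul (Lead.const K _)).mul hu).add ((Lead.const K _).mul hv)).cast

theorem lead_disc : Lead ((F.map (algebraMap K L[X])).disc u v) (4 * A)
    ((F.map (algebraMap K L)).disc cu cv) := by
  have ha := lead_a F hu hv
  have hb := lead_b F hu hv
  have hf := lead_f F hu hv
  have he := lead_e F hu hv
  have hd := lead_d F hu hv
  exact ((((((Lead.four.mul ha).mul hb).add ((hd.mul he).mul hf)).sub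
    (ha.mul hd.sq)).sub (hb.mul he.sq)).sub hf.sq).cast

theorem lead_discU : Lead ((F.map (algebraMap K L[X])).discU u v) (3 * A)
    ((F.map (algebraMap K L)).discU cu cv) := by
  have ha := lead_a F hu hv
  have hb := lead_b F hu hv
  have hf := lead_f F hu hv
  have he := lead_e F hu hv
  have hd := lead_d F hu hv
  have h1 := fun x y => lead_lin (K := K) hu hv x y
  have hk := fun x => Lead.const (L := L) K x
  exact ((((((((((((Lead.four.mul (h1 _ _)).mul hb).add ((Lead.four.mul ha).mul (h1 _ _))).add
    (((hk _).mul he).mul hf)).add ((hd.mul (hk _)).mul hf)).add ((hd.mul he).mul (h1 _ _))).sub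
    ((h1 _ _).mul hd.sq)).sub (ha.mul ((Lead.two.mul hd).mul (hk _)))).sub
    ((h1 _ _).mul he.sq)).sub (hb.mul ((Lead.two.mul he).mul (hk _)))).sub
    ((Lead.two.mul hf).mul (h1 _ _)))).cast

theorem lead_discV : Lead ((F.map (algebraMap K L[X])).discV u v) (3 * A)
    ((F.map (algebraMap K L)).discV cu cv) := by
  have ha := lead_a F hu hv
  have hb := lead_b F hu hv
  have hf := lead_f F hu hv
  have he := lead_e F hu hv
  have hd := lead_d F hu hv
  have h1 := fun x y => lead_lin (K := K) hv hu x y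
  have hk := fun x => Lead.const (L := L) K x
  exact ((((((((((((Lead.four.mul (h1 _ _)).mul hb).add ((Lead.four.mul ha).mul (h1 _ _))).add
    (((hk _).mul he).mul hf)).add ((hd.mul (hk _)).mul hf)).add ((hd.mul he).mul (h1 _ _))).sub
    ((h1 _ _).mul hd.sq)).sub (ha.mul ((Lead.two.mul hd).mul (hk _)))).sub
    ((h1 _ _).mul he.sq)).sub (hb.mul ((Lead.two.mul he).mul (hk _)))).sub
    ((Lead.two.mul hf).mul (h1 _ _)))).cast

include hr hs hw

theorem lead_qr : ((F.map (algebraMap K L[X])).qr u v r s w).natDegree ≤ 2 * A + B := by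
  have ha := lead_a F hu hv
  have hf := lead_f F hu hv
  have he := lead_e F hu hv
  exact (((he.mul hw).add ((Lead.two.mul ha).mul hr)).add (hf.mul hs)).le.trans (by omega)

theorem lead_qs : ((F.map (algebraMap K L[X])).qs u v r s w).natDegree ≤ 2 * A + B := by
  have hb := lead_b F hu hv
  have hf := lead_f F hu hv
  have hd := lead_d F hu hv
  exact (((hd.mul hw).add (hf.mul hr)).add ((Lead.two.mul hb).mul hs)).le.trans (by omega)

theorem lead_qw : ((F.map (algebraMap K L[X])).qw u v r s w).natDegree ≤ A + B := by
  have he := lead_e F hu hv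
  have hd := lead_d F hu hv
  exact (((Lead.two.mul hw).add (he.mul hr)).add (hd.mul hs)).le.trans (by omega)
end bi

/-- The extension of a derivation of `L` to `L[X]`, acting on coefficients. -/
noncomputable def dd {K L : Type} [Field K] [Field L] [Algebra K L] (D : Derivation K L L) :
    Derivation K L[X] L[X] :=
  (PolynomialModule.equivPolynomialSelf (R := L)).toLinearMap.compDer D.mapCoeffs

section dd
variable {K L : Type} [Field K] [Field L] [Algebra K L] (D D' : Derivation K L L)

theorem dd_coeff (p : L[X]) (i : ℕ) : (dd D p).coeff i = D (p.coeff i) := by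
  rw [dd]
  exact Derivation.mapCoeffs_apply D p i

theorem dd_natDegree {p : L[X]} {n : ℕ} (h : p.natDegree ≤ n) : (dd D p).natDegree ≤ n := by
  rw [natDegree_le_iff_coeff_eq_zero] at h ⊢
  intro N hN
  rw [dd_coeff, h N hN, map_zero]

theorem dd_add (p : L[X]) : dd (D + D') p = dd D p + dd D' p := by
  ext i; simp [dd_coeff]
theorem dd_smul (c : L) (p : L[X]) : dd (c • D) p = C c * dd D p := by
  ext i; simp [dd_coeff]
theorem dd_X : dd D (X : L[X]) = 0 := by
  ext i; rw [dd_coeff, coeff_X]; split_ifs <;> simp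
end dd

/-- A vector space filtered by three linear maps has dimension at most the sum of the dimensions
of the successive targets, the last one being a line. -/
theorem finrank_le_three {L V : Type} [Field L] [AddCommGroup V] [Module L V]
    (f₁ f₂ : V →ₗ[L] L[X]) (f₃ : V →ₗ[L] L) (S₁ S₂ : Submodule L L[X])
    [FiniteDimensional L S₁] [FiniteDimensional L S₂] 
    (h₁ : ∀ D, f₁ D ∈ S₁) (h₂ : ∀ D, f₁ D = 0 → f₂ D ∈ S₂)
    (h₃ : ∀ D, f₁ D = 0 → f₂ D = 0 → f₃ D = 0 → D = 0) :
    Module.rank L V ≤ (Module.finrank L S₁ + Module.finrank L S₂ + 1 : ℕ) := by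
  let k₁ := LinearMap.ker f₁
  let g₁ : V →ₗ[L] S₁ := f₁.codRestrict S₁ h₁
  let g₂ : LinearMap.ker f₁ →ₗ[L] S₂ :=
    (f₂.comp (LinearMap.ker f₁).subtype).codRestrict S₂ (fun D => h₂ D D.2)
  let g₃ : LinearMap.ker g₂ →ₗ[L] L :=
    f₃.comp ((LinearMap.ker f₁).subtype.comp (LinearMap.ker g₂).subtype)
  have e₁ : LinearMap.ker g₁ = LinearMap.ker f₁ := LinearMap.ker_codRestrict _ _ _
  have i₃ : Function.Injective g₃ := by
    rw [← LinearMap.ker_eq_bot, LinearMap.ker_eq_bot']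
    rintro ⟨⟨D, hD⟩, hD'⟩ h
    have : f₂ D = 0 := by
      have := LinearMap.mem_ker.1 hD'
      exact congrArg Subtype.val this
    have := h₃ D hD this h
    subst this
    rfl
  have r₃ : Module.rank L (LinearMap.ker g₂) ≤ 1 := by
    have := LinearMap.rank_le_of_injective g₃ i₃
    simpa using this
  have r₂ := LinearMap.rank_range_add_rank_ker g₂
  have r₁ := LinearMap.rank_range_add_rank_ker g₁
  have s₁ : Module.rank L (LinearMap.range g₁) ≤ Module.rank L S₁ := Submodule.rank_le _
  have s₂ : Module.rank L (LinearMap.range g₂) ≤ Module.rank L S₂ := Submodule.rank_le _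
  rw [e₁] at r₁
  rw [← r₁, ← r₂]
  push_cast
  rw [Module.finrank_eq_rank, Module.finrank_eq_rank, add_assoc]
  gcongr

end DP4

/-! ### Curves on the double cover and the movement of the conic-bundle coordinate -/

namespace DP4
open Polynomial

/-- A greatest common divisor of three polynomials, with unimodular cofactors. -/
theorem exists_gcd₃ {L : Type} [Field L] (α β γ : L[X]) (h : ¬ (α = 0 ∧ β = 0 ∧ γ = 0)) :
    ∃ g α' β' γ' h₁ h₂ h₃ : L[X], g ≠ 0 ∧ α = g * α' ∧ β = g * β' ∧ γ = g * γ' ∧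
      h₁ * α' + h₂ * β' + h₃ * γ' = 1 := by
  classical
  set g₁ := EuclideanDomain.gcd α β with hg₁
  set g := EuclideanDomain.gcd g₁ γ with hg
  have hα : g ∣ α := (EuclideanDomain.gcd_dvd_left _ _).trans (EuclideanDomain.gcd_dvd_left _ _)
  have hβ : g ∣ β := (EuclideanDomain.gcd_dvd_left _ _).trans (EuclideanDomain.gcd_dvd_right _ _)
  have hγ : g ∣ γ := EuclideanDomain.gcd_dvd_right _ _
  obtain ⟨α', rα⟩ := hα
  obtain ⟨β', rβ⟩ := hβ
  obtain ⟨γ', rγ⟩ := hγ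
  have hg0 : g ≠ 0 := by
    intro h0
    rw [h0] at rα rβ rγ
    exact h ⟨by simpa using rα, by simpa using rβ, by simpa using rγ⟩
  have e₁ := EuclideanDomain.gcd_eq_gcd_ab α β
  have e₂ := EuclideanDomain.gcd_eq_gcd_ab g₁ γ
  rw [← hg₁] at e₁
  rw [← hg] at e₂
  set x := EuclideanDomain.gcdA g₁ γ
  set y := EuclideanDomain.gcdB g₁ γ
  set x' := EuclideanDomain.gcdA α β
  set y' := EuclideanDomain.gcdB α β
  refine ⟨g, α', β', γ', x * x', x * y', y, hg0, rα, rβ, rγ, ?_⟩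
  apply mul_left_cancel₀ hg0
  have : g = (α * x' + β * y') * x + γ * y := by rw [← e₁]; exact e₂
  calc g * (x * x' * α' + x * y' * β' + y * γ') 
      = ((g * α') * x' + (g * β') * y') * x + (g * γ') * y := by ring
    _ = g := by rw [← rα, ← rβ, ← rγ, ← this]
    _ = g * 1 := (mul_one g).symm

/-- The common order of vanishing `n` at infinity of three polynomials, regarded as binary forms of
the prescribed degrees `M, M, N`. -/
theorem exists_deficiency {L : Type} [Field L] (α β γ : L[X]) (M N : ℕ)
    (h : ¬ (α = 0 ∧ β = 0 ∧ γ = 0)) (hα : α.natDegree ≤ M) (hβ : β.natDegree ≤ M)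
    (hγ : γ.natDegree ≤ N) :
    ∃ n : ℕ, (X ^ n * α).natDegree ≤ M ∧ (X ^ n * β).natDegree ≤ M ∧ (X ^ n * γ).natDegree ≤ N ∧
      ((α ≠ 0 ∧ α.natDegree + n = M) ∨ (β ≠ 0 ∧ β.natDegree + n = M) ∨
        (γ ≠ 0 ∧ γ.natDegree + n = N)) := by
  classical
  let P : ℕ → Prop := fun n => (α ≠ 0 ∧ α.natDegree + n = M) ∨ (β ≠ 0 ∧ β.natDegree + n = M) ∨
        (γ ≠ 0 ∧ γ.natDegree + n = N)
  have hP : ∃ n, P n := by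
    by_cases h1 : α = 0
    · by_cases h2 : β = 0
      · have h3 : γ ≠ 0 := fun h3 => h ⟨h1, h2, h3⟩
        exact ⟨N - γ.natDegree, Or.inr (Or.inr ⟨h3, by omega⟩)⟩
      · exact ⟨M - β.natDegree, Or.inr (Or.inl ⟨h2, by omega⟩)⟩
    · exact ⟨M - α.natDegree, Or.inl ⟨h1, by omega⟩⟩
  have key : ∀ (p : L[X]) (m : ℕ), p.natDegree ≤ m → (p ≠ 0 → P (m - p.natDegree)) →
      (X ^ (Nat.find hP) * p).natDegree ≤ m := by
    intro p m hp hh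
    by_cases h0 : p = 0
    · simp [h0]
    · have := Nat.find_min' hP (hh h0)
      rw [natDegree_X_pow_mul _ h0]
      omega
  exact ⟨Nat.find hP, key α M hα fun h0 => Or.inl ⟨h0, by omega⟩,
    key β M hβ fun h0 => Or.inr (Or.inl ⟨h0, by omega⟩),
    key γ N hγ fun h0 => Or.inr (Or.inr ⟨h0, by omega⟩), Nat.find_spec hP⟩

section core
variable {K L : Type} [Field K] [Field L] [Algebra K L] (F : BiForm K)

/-- A parametrised rational curve on the surface `q(u, v; r, s; w) = 0`, over an extension `L` of
`K`. The degrees of `(u, v)` and `(r, s)` are `A` and `B`: these are upper bounds for the entries,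
attained by one entry of each pair by `norm` and `top`. Rescaling `(u, v)` by constants is ruled out
by `norm`, which makes one top coefficient equal to `1`. By `hdisc` the curve is not contained in a
degenerate fibre of the projection to `(u : v)`. -/
structure Curve (L : Type) [Field L] [Algebra K L] (A B : ℕ) where
  u : L[X]
  v : L[X]
  r : L[X]
  s : L[X]
  w : L[X]
  huv : IsCoprime u v
  hrs : IsCoprime r s
  hu : u.natDegree ≤ A
  hv : v.natDegree ≤ A
  hr : r.natDegree ≤ B
  hs : s.natDegree ≤ B
  hw : w.natDegree ≤ A + B
  norm : u.coeff A = 1 ∨ v.coeff A = 1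
  top : r.coeff B ≠ 0 ∨ s.coeff B ≠ 0
  hq : (F.map (algebraMap K L[X])).q u v r s w = 0
  hdisc : (F.map (algebraMap K L[X])).disc u v ≠ 0

variable {F} {A B : ℕ} (c : Curve F L A B)

namespace Curve

/-- The value along the curve of the partial derivative in `r`. -/
noncomputable def α := (F.map (algebraMap K L[X])).qr c.u c.v c.r c.s c.w
/-- The value along the curve of the partial derivative in `s`. -/
noncomputable def β := (F.map (algebraMap K L[X])).qs c.u c.v c.r c.s c.w
/-- The value along the curve of the partial derivative in `w`. -/
noncomputable def γ := (F.map (algebraMap K L[X])).qw c.u c.v c.r c.s c.w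
/-- The value along the curve of the half-discriminant. -/
noncomputable def Δ := (F.map (algebraMap K L[X])).disc c.u c.v
/-- The value along the curve of the `u`-derivative of the half-discriminant. -/
noncomputable def Δu := (F.map (algebraMap K L[X])).discU c.u c.v
/-- The value along the curve of the `v`-derivative of the half-discriminant. -/
noncomputable def Δv := (F.map (algebraMap K L[X])).discV c.u c.v
/-- The value along the curve of the coefficient of `r²`. -/
noncomputable def pa := (F.map (algebraMap K L[X])).a c.u c.v
/-- The value along the curve of the coefficient of `s²`. -/
noncomputable def pb := (F.map (algebraMap K L[X])).b c.u c.v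
/-- The value along the curve of the coefficient of `ws`. -/
noncomputable def pd := (F.map (algebraMap K L[X])).d c.u c.v
/-- The value along the curve of the coefficient of `wr`. -/
noncomputable def pe := (F.map (algebraMap K L[X])).e c.u c.v

theorem r_eq : c.r ^ 2 * c.Δ = -(c.pb * c.γ ^ 2 - c.pd * c.β * c.γ + c.β ^ 2) := by
  have := (F.map (algebraMap K L[X])).r_disc c.u c.v c.r c.s c.w
  rw [c.hq] at this
  simpa [Δ, pb, γ, pd, β] using this
theorem s_eq : c.s ^ 2 * c.Δ = -(c.pa * c.γ ^ 2 - c.pe * c.α * c.γ + c.α ^ 2) := by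
  have := (F.map (algebraMap K L[X])).s_disc c.u c.v c.r c.s c.w
  rw [c.hq] at this
  simpa [Δ, pa, γ, pe, α] using this

/-- The relative gradient of `q` does not vanish identically along the curve: otherwise the
discriminant would. -/
theorem grad_ne : ¬ (c.α = 0 ∧ c.β = 0 ∧ c.γ = 0) := by
  rintro ⟨h1, h2, h3⟩
  have hr := c.r_eq
  have hs := c.s_eq
  rw [h2, h3] at hr
  rw [h1, h3] at hs
  have hD : c.Δ ≠ 0 := c.hdisc
  have r0 : c.r = 0 := by simpa [hD] using hr
  have s0 : c.s = 0 := by simpa [hD] using hs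
  have := c.hrs
  rw [r0, s0] at this
  exact not_isCoprime_zero_zero this

theorem grad_deg : c.α.natDegree ≤ 2 * A + B ∧ c.β.natDegree ≤ 2 * A + B ∧ 
    c.γ.natDegree ≤ A + B :=
  ⟨lead_qr F (.self c.hu) (.self c.hv) (.self c.hr) (.self c.hs) (.self c.hw),
   lead_qs F (.self c.hu) (.self c.hv) (.self c.hr) (.self c.hs) (.self c.hw),
   lead_qw F (.self c.hu) (.self c.hv) (.self c.hr) (.self c.hs) (.self c.hw)⟩

/-- Where the curve passes through singular points of fibres, the discriminant vanishes to twice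
the order of the relative gradient. -/
theorem sq_dvd_disc {g : L[X]} (h1 : g ∣ c.α) (h2 : g ∣ c.β) (h3 : g ∣ c.γ) : g ^ 2 ∣ c.Δ := by
  obtain ⟨α', h1⟩ := h1
  obtain ⟨β', h2⟩ := h2
  obtain ⟨γ', h3⟩ := h3
  have hr : g ^ 2 ∣ c.r ^ 2 * c.Δ :=
    ⟨-(c.pb * γ' ^ 2 - c.pd * β' * γ' + β' ^ 2), by rw [c.r_eq, h2, h3]; ring⟩
  have hs : g ^ 2 ∣ c.s ^ 2 * c.Δ :=
    ⟨-(c.pa * γ' ^ 2 - c.pe * α' * γ' + α' ^ 2), by rw [c.s_eq, h1, h3]; ring⟩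
  obtain ⟨x, y, hxy⟩ : IsCoprime (c.r ^ 2) (c.s ^ 2) := c.hrs.pow
  have : c.Δ = x * (c.r ^ 2 * c.Δ) + y * (c.s ^ 2 * c.Δ) := by linear_combination (-c.Δ) * hxy
  rw [this]
  exact dvd_add (dvd_mul_of_dvd_right hr _) (dvd_mul_of_dvd_right hs _)

/-- The counterpart of `sq_dvd_disc` at infinity: if the relative gradient vanishes to order `n`
there, then the discriminant, a form of degree `4A` in the parameter, vanishes to order `2n`. -/
theorem disc_deg {n : ℕ} (h1 : (X ^ n * c.α).natDegree ≤ 2 * A + B)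
    (h2 : (X ^ n * c.β).natDegree ≤ 2 * A + B) (h3 : (X ^ n * c.γ).natDegree ≤ A + B) :
    c.Δ.natDegree + 2 * n ≤ 4 * A := by
  have hD : c.Δ ≠ 0 := c.hdisc
  have key : ∀ (r b d x z : L[X]), r.natDegree ≤ B → r.coeff B ≠ 0 → b.natDegree ≤ 2 * A →
      d.natDegree ≤ A → (X ^ n * x).natDegree ≤ 2 * A + B → (X ^ n * z).natDegree ≤ A + B →
      r ^ 2 * c.Δ = -(b * z ^ 2 - d * x * z + x ^ 2) → c.Δ.natDegree + 2 * n ≤ 4 * A := by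
    intro r b d x z hr hr' hb hd hx hz heq
    have r0 : r ≠ 0 := by rintro rfl; simp at hr'
    have hrd : r.natDegree = B := le_antisymm hr (le_natDegree_of_ne_zero hr')
    have e1 : X ^ (2 * n) * (r ^ 2 * c.Δ) =
        -(b * (X ^ n * z) ^ 2 - d * (X ^ n * x) * (X ^ n * z) + (X ^ n * x) ^ 2) := by
      rw [heq]; ring
    have Lb := Lead.self hb
    have Ld := Lead.self hd
    have Lx := Lead.self hx
    have Lz := Lead.self hz
    have := (((Lb.mul Lz.sq).sub ((Ld.mul Lx).mul Lz)).add Lx.sq).le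
    rw [← natDegree_neg, ← e1, natDegree_X_pow_mul _ (mul_ne_zero (pow_ne_zero _ r0) hD),
      natDegree_mul (pow_ne_zero _ r0) hD, natDegree_pow, hrd] at this
    omega
  rcases c.top with h | h
  · exact key c.r c.pb c.pd c.β c.γ c.hr h (lead_b F (.self c.hu) (.self c.hv)).le
      (lead_d F (.self c.hu) (.self c.hv)).le h2 h3 c.r_eq
  · exact key c.s c.pa c.pe c.α c.γ c.hs h (lead_a F (.self c.hu) (.self c.hv)).le
      (lead_e F (.self c.hu) (.self c.hv)).le h1 h3 c.s_eq

/-- The Wronskian `u·Dv − v·Du`, which measures the movement of `(u : v)` under a derivation `D` of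
the coefficients. -/
noncomputable def ω (D : Derivation K L L) : L[X] := c.u * dd D c.v - c.v * dd D c.u

theorem ddΔ (D : Derivation K L L) : dd D c.Δ = c.Δu * dd D c.u + c.Δv * dd D c.v :=
  BiForm.der_disc F (dd D) c.u c.v

theorem euler : c.u * c.Δu + c.v * c.Δv = 4 * c.Δ := BiForm.euler_disc _ c.u c.v

theorem Δu_ω (D : Derivation K L L) : c.Δu * c.ω D = 4 * c.Δ * dd D c.v - c.v * dd D c.Δ := by
  rw [ω, ddΔ]; linear_combination (dd D c.v) * c.euler

theorem Δv_ω (D : Derivation K L L) : c.Δv * c.ω D = c.u * dd D c.Δ - 4 * c.Δ * dd D c.u := by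
  rw [ω, ddΔ]; linear_combination (-dd D c.u) * c.euler

variable [IsAlgClosed K]

/-- A root of `g` is a multiple root of the polynomial `disc(u, v)`, and stays one to first order
under deformation. As the quartic `disc` has simple roots, `(u : v)` cannot move there. -/
theorem dvd_ω (hsep : ∀ u v : K, F.disc u v = 0 → F.discU u v = 0 → F.discV u v = 0 → u = 0 ∧ v = 0)
    {g : L[X]} (hg : g ^ 2 ∣ c.Δ) (D : Derivation K L L) : g ∣ c.ω D := by
  have hg1 : g ∣ c.Δ := (dvd_pow_self g two_ne_zero).trans hg
  have hg2 : g ∣ dd D c.Δ := by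
    obtain ⟨m, hm⟩ := hg
    rw [hm, Derivation.leibniz, Derivation.leibniz_pow]
    simp only [smul_eq_mul, nsmul_eq_mul]
    refine dvd_add ?_ ?_
    · exact dvd_mul_of_dvd_left (dvd_pow_self g two_ne_zero) _
    · refine dvd_mul_of_dvd_right (dvd_mul_of_dvd_right (dvd_mul_of_dvd_left ?_ _) _) _
      simp
  have hU : g ∣ c.Δu * c.ω D := by
    rw [Δu_ω]
    exact dvd_sub (dvd_mul_of_dvd_left (dvd_mul_of_dvd_right hg1 _) _) (dvd_mul_of_dvd_right hg2 _)
  have hV : g ∣ c.Δv * c.ω D := by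
    rw [Δv_ω]
    exact dvd_sub (dvd_mul_of_dvd_right hg2 _) (dvd_mul_of_dvd_left (dvd_mul_of_dvd_right hg1 _) _)
  -- `g` divides `p · ω(D)` for every `p` in the ideal of `disc` and its partial derivatives, hence
  -- for `u ^ k` and `v ^ k`, which are coprime
  obtain ⟨k, hk⟩ := BiForm.exists_pow_mem F hsep
  obtain ⟨⟨a1, b1, c1, h1⟩, ⟨a2, b2, c2, h2⟩⟩ := hk L[X] c.u c.v
  change _ = a1 * c.Δ + b1 * c.Δu + c1 * c.Δv at h1
  change _ = a2 * c.Δ + b2 * c.Δu + c2 * c.Δv at h2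
  have key : ∀ p a b d : L[X], p = a * c.Δ + b * c.Δu + d * c.Δv → g ∣ p * c.ω D := by
    intro p a b d hp
    rw [hp, add_mul, add_mul, mul_assoc b, mul_assoc d]
    exact dvd_add (dvd_add (dvd_mul_of_dvd_left (dvd_mul_of_dvd_right hg1 _) _)
      (dvd_mul_of_dvd_right hU _)) (dvd_mul_of_dvd_right hV _)
  obtain ⟨x, y, hxy⟩ : IsCoprime (c.u ^ k) (c.v ^ k) := c.huv.pow
  have : c.ω D = x * (c.u ^ k * c.ω D) + y * (c.v ^ k * c.ω D) := by
    linear_combination (-c.ω D) * hxy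
  rw [this]
  exact dvd_add (dvd_mul_of_dvd_right (key _ _ _ _ h1) _) (dvd_mul_of_dvd_right (key _ _ _ _ h2) _)

/-- The counterpart of `dvd_ω` at infinity: `ω(D)` has degree at most `2A`, and it loses `n`
degrees if the discriminant loses `2n`. -/
theorem ω_deg (hsep : ∀ u v : K, F.disc u v = 0 → F.discU u v = 0 → F.discV u v = 0 → u = 0 ∧ v = 0)
    {n : ℕ} (hn : c.Δ.natDegree + 2 * n ≤ 4 * A) (D : Derivation K L L) :
    (X ^ n * c.ω D).natDegree ≤ 2 * A := by
  have Lu := Lead.self c.hu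
  have Lv := Lead.self c.hv
  have Ldu := Lead.self (dd_natDegree D c.hu)
  have Ldv := Lead.self (dd_natDegree D c.hv)
  rcases Nat.eq_zero_or_pos n with rfl | hpos
  · rw [pow_zero, one_mul]
    exact ((Lu.mul Ldv).sub (Lv.mul Ldu)).le.trans (by omega)
  have hΔ := lead_disc F Lu Lv
  have hΔu := lead_discU F Lu Lv
  have hΔv := lead_discV F Lu Lv
  -- for `n > 0` the point at infinity lies over a root of `disc`, so one partial derivative of
  -- `disc` has full degree `3A` along the curve
  have h0 : (F.map (algebraMap K L)).disc (c.u.coeff A) (c.v.coeff A) = 0 := by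
    rw [← hΔ.coeff]
    exact coeff_eq_zero_of_natDegree_lt (by change c.Δ.natDegree < _; omega)
  have hXΔ : (X ^ n * c.Δ).natDegree ≤ 4 * A := by
    rw [natDegree_X_pow_mul _ (show c.Δ ≠ 0 from c.hdisc)]; change c.Δ.natDegree + n ≤ _; omega
  have hXdΔ : (X ^ n * dd D c.Δ).natDegree ≤ 4 * A := by
    refine natDegree_mul_le.trans ?_
    have := dd_natDegree D (le_refl c.Δ.natDegree)
    rw [natDegree_X_pow]; omega
  have fin : ∀ p P : L[X], p.natDegree ≤ 3 * A → p.coeff (3 * A) ≠ 0 → 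
      (X ^ n * P).natDegree ≤ 5 * A → p * c.ω D = P → (X ^ n * c.ω D).natDegree ≤ 2 * A := by
    intro p P hp hp0 hP heq
    have p0 : p ≠ 0 := by rintro rfl; simp at hp0
    have hpd : p.natDegree = 3 * A := le_antisymm hp (le_natDegree_of_ne_zero hp0)
    by_cases hω : c.ω D = 0
    · simp [hω]
    rw [← heq, natDegree_X_pow_mul _ (mul_ne_zero p0 hω), natDegree_mul p0 hω] at hP
    rw [natDegree_X_pow_mul _ hω]
    omega
  by_cases hU : (F.map (algebraMap K L)).discU (c.u.coeff A) (c.v.coeff A) = 0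
  · by_cases hV : (F.map (algebraMap K L)).discV (c.u.coeff A) (c.v.coeff A) = 0
    · exfalso
      obtain ⟨k, hk⟩ := BiForm.exists_pow_mem F hsep
      obtain ⟨⟨a1, b1, c1, h1⟩, ⟨a2, b2, c2, h2⟩⟩ := hk L (c.u.coeff A) (c.v.coeff A)
      rw [h0, hU, hV] at h1 h2
      rcases c.norm with h | h
      · rw [h] at h1; simp at h1
      · rw [h] at h2; simp at h2
    · refine fin c.Δv _ hΔv.le (by rw [Δv, hΔv.coeff]; exact hV) ?_ (c.Δv_ω D)
      have e : X ^ n * (c.u * dd D c.Δ - 4 * c.Δ * dd D c.u) =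
        c.u * (X ^ n * dd D c.Δ) - 4 * (X ^ n * c.Δ) * dd D c.u := by ring
      rw [e]
      exact ((Lu.mul (.self hXdΔ)).sub ((Lead.four.mul (.self hXΔ)).mul Ldu)).le.trans (by omega)
  · refine fin c.Δu _ hΔu.le (by rw [Δu, hΔu.coeff]; exact hU) ?_ (c.Δu_ω D)
    have e : X ^ n * (4 * c.Δ * dd D c.v - c.v * dd D c.Δ) =
      4 * (X ^ n * c.Δ) * dd D c.v - c.v * (X ^ n * dd D c.Δ) := by ring
    rw [e]
    exact (((Lead.four.mul (.self hXΔ)).mul Ldv).sub (Lv.mul (.self hXdΔ))).le.trans (by omega)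

end Curve
end core
end DP4

/-! ### The dimension count for the derivations -/

namespace DP4
open Polynomial
namespace Curve
variable {K L : Type} [Field K] [Field L] [Algebra K L] {F : BiForm K} {A B : ℕ} (c : Curve F L A B)

/-- A derivation with `ω D = 0` kills the normalised pair `(u, v)`. -/
theorem dd_uv_eq_zero (D : Derivation K L L) (h : c.ω D = 0) : dd D c.u = 0 ∧ dd D c.v = 0 := by
  have hω : c.u * dd D c.v = c.v * dd D c.u := sub_eq_zero.1 h
  obtain ⟨x, y, hxy⟩ := c.huv
  have hu : dd D c.u = c.u * (x * dd D c.u + y * dd D c.v) := by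
    linear_combination (-dd D c.u) * hxy - y * hω
  have hv : dd D c.v = c.v * (x * dd D c.u + y * dd D c.v) := by
    linear_combination (-dd D c.v) * hxy + x * hω
  set l := x * dd D c.u + y * dd D c.v
  have key : ∀ p : L[X], p.natDegree ≤ A → p.coeff A = 1 → dd D p = p * l → l = 0 := by
    intro p hp hp1 hl
    by_contra hl0
    have p0 : p ≠ 0 := by rintro rfl; simp at hp1
    have hpA : p.natDegree = A := le_antisymm hp (le_natDegree_of_ne_zero (by rw [hp1]; simp))
    have h1 : (dd D p).coeff A = 0 := by rw [dd_coeff, hp1, Derivation.map_one_eq_zero]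
    have h2 := dd_natDegree D hp
    have h3 : (dd D p).natDegree = A + l.natDegree := by rw [hl, natDegree_mul p0 hl0, hpA]
    have h4 : dd D p ≠ 0 := by rw [hl]; exact mul_ne_zero p0 hl0
    have h5 : (dd D p).natDegree = A := by omega
    rw [← h5, coeff_natDegree, leadingCoeff_eq_zero] at h1
    exact h4 h1
  have hl : l = 0 := by
    rcases c.norm with h | h
    · exact key _ c.hu h hu
    · exact key _ c.hv h hv
  rw [hu, hv, hl]; simp

/-- The factor of proportionality between `M × D M`, where `M = (r, s, w)`, and the primitive part
`(α₁, β₁, γ₁)` of the relative gradient, for derivations `D` which kill `(u, v)`. The `hᵢ` are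
Bézout coefficients: `h₁ α₁ + h₂ β₁ + h₃ γ₁ = 1`. -/
noncomputable def κ (h₁ h₂ h₃ : L[X]) (D : Derivation K L L) : L[X] :=
  h₁ * (c.s * dd D c.w - c.w * dd D c.s) + h₂ * (c.w * dd D c.r - c.r * dd D c.w)
    + h₃ * (c.r * dd D c.s - c.s * dd D c.r)

/-- The derivations of the field of coefficients are filtered by three linear maps: `ω` with values
in the multiples of `g` (dimension `2A − T + 1`), on its kernel `κ` (dimension `B − A + T + 1`),
and on the kernel of both the action on a top coefficient of `(r, s)` (dimension `1`). Here `T` is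
the number of zeros of the relative gradient along the curve, including those at infinity. -/
theorem rank_der_le [IsAlgClosed K]
    (hsep : ∀ u v : K, F.disc u v = 0 → F.discU u v = 0 → F.discV u v = 0 → u = 0 ∧ v = 0)
    (hAB : A ≤ B)
    (hgen : ∀ D : Derivation K L L, dd D c.u = 0 → dd D c.v = 0 → dd D c.r = 0 → dd D c.s = 0 →
      dd D c.w = 0 → D = 0) :
    Module.rank L (Derivation K L L) ≤ (A + B + 3 : ℕ) := by
  obtain ⟨dα, dβ, dγ⟩ := c.grad_deg
  obtain ⟨g, α', β', γ', h₁, h₂, h₃, hg0, hα, hβ, hγ, hbez⟩ := exists_gcd₃ c.α c.β c.γ c.grad_ne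
  obtain ⟨n, nα, nβ, nγ, hex⟩ := exists_deficiency c.α c.β c.γ _ _ c.grad_ne dα dβ dγ
  have hΔn := c.disc_deg nα nβ nγ
  have hgΔ := c.sq_dvd_disc (Dvd.intro _ hα.symm) (Dvd.intro _ hβ.symm) (Dvd.intro _ hγ.symm)
  have hT : 2 * (g.natDegree + n) ≤ 4 * A := by
    have := natDegree_le_of_dvd hgΔ c.hdisc
    rw [natDegree_pow] at this
    change _ ≤ c.Δ.natDegree at this
    omega
  set T := g.natDegree + n with hTdef
  -- differentiating `q = 0` shows that `D M` is orthogonal to the gradient, and so is `M` by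
  -- homogeneity; hence `M × D M` is proportional to the primitive gradient
  have cross : ∀ D : Derivation K L L, c.ω D = 0 →
      c.s * dd D c.w - c.w * dd D c.s = α' * c.κ h₁ h₂ h₃ D ∧
      c.w * dd D c.r - c.r * dd D c.w = β' * c.κ h₁ h₂ h₃ D ∧
      c.r * dd D c.s - c.s * dd D c.r = γ' * c.κ h₁ h₂ h₃ D := by
    intro D hD
    obtain ⟨hu, hv⟩ := c.dd_uv_eq_zero D hD
    have e₁ := BiForm.der_q F (dd D) c.u c.v c.r c.s c.w
    rw [c.hq, hu, hv, map_zero] at e₁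
    change 0 = _ * 0 + _ * 0 + c.α * _ + c.β * _ + c.γ * _ at e₁
    have e₂ := BiForm.euler_rsw (F.map (algebraMap K L[X])) c.u c.v c.r c.s c.w
    rw [c.hq] at e₂
    change c.α * _ + c.β * _ + c.γ * _ = 2 * 0 at e₂
    have e₃ : α' * dd D c.r + β' * dd D c.s + γ' * dd D c.w = 0 := by
      apply mul_left_cancel₀ hg0
      rw [hα, hβ, hγ] at e₁
      linear_combination -e₁
    have e₄ : α' * c.r + β' * c.s + γ' * c.w = 0 := by
      apply mul_left_cancel₀ hg0
      rw [hα, hβ, hγ] at e₂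
      linear_combination e₂
    unfold κ
    refine ⟨?_, ?_, ?_⟩
    · linear_combination (-(c.s * dd D c.w - c.w * dd D c.s)) * hbez
        + (h₂ * dd D c.w - h₃ * dd D c.s) * e₄ + (h₃ * c.s - h₂ * c.w) * e₃
    · linear_combination (-(c.w * dd D c.r - c.r * dd D c.w)) * hbez
        + (h₃ * dd D c.r - h₁ * dd D c.w) * e₄ + (h₁ * c.w - h₃ * c.r) * e₃
    · linear_combination (-(c.r * dd D c.s - c.s * dd D c.r)) * hbez
        + (h₁ * dd D c.s - h₂ * dd D c.r) * e₄ + (h₂ * c.r - h₁ * c.s) * e₃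
  let f₁ : Derivation K L L →ₗ[L] L[X] :=
    { toFun := c.ω
      map_add' := fun D D' => by simp only [ω, dd_add]; ring
      map_smul' := fun a D => by
        simp only [ω, dd_smul, RingHom.id_apply, smul_eq_C_mul]; ring }
  let f₂ : Derivation K L L →ₗ[L] L[X] :=
    { toFun := c.κ h₁ h₂ h₃
      map_add' := fun D D' => by simp only [κ, dd_add]; ring
      map_smul' := fun a D => by
        simp only [κ, dd_smul, RingHom.id_apply, smul_eq_C_mul]; ring }
  obtain ⟨z, hz⟩ : ∃ z : L, (z = c.r.coeff B ∧ c.r.coeff B ≠ 0) ∨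
      (z = c.s.coeff B ∧ c.s.coeff B ≠ 0) := by
    rcases c.top with h | h
    · exact ⟨_, Or.inl ⟨rfl, h⟩⟩
    · exact ⟨_, Or.inr ⟨rfl, h⟩⟩
  let f₃ : Derivation K L L →ₗ[L] L :=
    { toFun := fun D => D z
      map_add' := fun D D' => by simp
      map_smul' := fun a D => by simp }
  let S₁ : Submodule L L[X] := (degreeLT L (2 * A - T + 1)).map (LinearMap.mulLeft L g)
  let S₂ : Submodule L L[X] := degreeLT L (B + T - A + 1)
  haveI i₀ : ∀ m, FiniteDimensional L (degreeLT L m) := fun m =>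
    Module.Finite.equiv (degreeLTEquiv L m).symm
  have fr : ∀ m, Module.finrank L (degreeLT L m) = m := fun m => by
    rw [LinearEquiv.finrank_eq (degreeLTEquiv L m)]; simp
  haveI i₁ : FiniteDimensional L S₁ := inferInstance
  haveI i₂ : FiniteDimensional L S₂ := i₀ _
  have hlt : ∀ (p : L[X]) (m : ℕ), p.natDegree ≤ m → p ∈ degreeLT L (m + 1) := by
    intro p m h
    rw [mem_degreeLT]
    exact lt_of_le_of_lt degree_le_natDegree (by exact_mod_cast Nat.lt_succ_of_le h)
  have main := finrank_le_three f₁ f₂ f₃ S₁ S₂ ?_ ?_ ?_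
  · refine main.trans ?_
    have h1 : Module.finrank L S₁ ≤ 2 * A - T + 1 :=
      (Submodule.finrank_map_le _ _).trans (fr _).le
    have h2 : Module.finrank L S₂ = B + T - A + 1 := fr _
    exact_mod_cast (by omega)
  · intro D
    obtain ⟨m, hm⟩ := c.dvd_ω hsep hgΔ D
    have hd := c.ω_deg hsep hΔn D
    refine ⟨m, ?_, hm.symm⟩
    by_cases hm0 : m = 0
    · rw [hm0]; exact Submodule.zero_mem _
    apply hlt
    rw [hm, natDegree_X_pow_mul _ (mul_ne_zero hg0 hm0), natDegree_mul hg0 hm0] at hd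
    omega
  · intro D hD
    apply hlt
    change (c.κ h₁ h₂ h₃ D).natDegree ≤ _
    obtain ⟨x₁, x₂, x₃⟩ := cross D hD
    by_cases hk : c.κ h₁ h₂ h₃ D = 0
    · simp [hk]
    have Lr := Lead.self c.hr
    have Ls := Lead.self c.hs
    have Lw := Lead.self c.hw
    have Ldr := Lead.self (dd_natDegree D c.hr)
    have Lds := Lead.self (dd_natDegree D c.hs)
    have Ldw := Lead.self (dd_natDegree D c.hw)
    have fin : ∀ p p' x M, p = g * p' → p ≠ 0 → x = p' * c.κ h₁ h₂ h₃ D → x.natDegree ≤ M →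
        (c.κ h₁ h₂ h₃ D).natDegree + p.natDegree ≤ M + g.natDegree := by
      intro p p' x M e₁ p0 e₂ hM
      have p0' : p' ≠ 0 := by rintro rfl; simp at e₁; exact p0 e₁
      rw [e₂, natDegree_mul p0' hk] at hM
      rw [e₁, natDegree_mul hg0 p0']
      omega
    rcases hex with ⟨p0, h⟩ | ⟨p0, h⟩ | ⟨p0, h⟩
    · have := fin _ _ _ (A + 2 * B) hα p0 x₁ (((Ls.mul Ldw).sub (Lw.mul Lds)).le.trans (by omega))
      omega
    · have := fin _ _ _ (A + 2 * B) hβ p0 x₂ (((Lw.mul Ldr).sub (Lr.mul Ldw)).le.trans (by omega))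
      omega
    · have := fin _ _ _ (2 * B) hγ p0 x₃ (((Lr.mul Lds).sub (Ls.mul Ldr)).le.trans (by omega))
      omega
  · intro D h1 h2 h3
    change c.κ h₁ h₂ h₃ D = 0 at h2
    change D z = 0 at h3
    obtain ⟨hu, hv⟩ := c.dd_uv_eq_zero D h1
    obtain ⟨x₁, x₂, x₃⟩ := cross D h1
    rw [h2, mul_zero] at x₁ x₂ x₃
    obtain ⟨x, y, hxy⟩ := c.hrs
    -- `M × D M = 0` means that `D M = l M`; the multiplier `l` vanishes since `M` and `D M` have
    -- the same degree bounds and `D` kills a nonzero top coefficient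
    have er : dd D c.r = c.r * (x * dd D c.r + y * dd D c.s) := by
      linear_combination (-dd D c.r) * hxy - y * x₃
    have es : dd D c.s = c.s * (x * dd D c.r + y * dd D c.s) := by
      linear_combination (-dd D c.s) * hxy + x * x₃
    have ew : dd D c.w = c.w * (x * dd D c.r + y * dd D c.s) := by
      linear_combination (-dd D c.w) * hxy - x * x₂ + y * x₁
    set l := x * dd D c.r + y * dd D c.s
    have key : ∀ p : L[X], p.natDegree ≤ B → p.coeff B ≠ 0 → D (p.coeff B) = 0 →
        dd D p = p * l → l = 0 := by
      intro p hp hp1 hD hl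
      by_contra hl0
      have p0 : p ≠ 0 := by rintro rfl; simp at hp1
      have hpA : p.natDegree = B := le_antisymm hp (le_natDegree_of_ne_zero hp1)
      have h1 : (dd D p).coeff B = 0 := by rw [dd_coeff, hD]
      have h2 := dd_natDegree D hp
      have h3 : (dd D p).natDegree = B + l.natDegree := by rw [hl, natDegree_mul p0 hl0, hpA]
      have h4 : dd D p ≠ 0 := by rw [hl]; exact mul_ne_zero p0 hl0
      have h5 : (dd D p).natDegree = B := by omega
      rw [← h5, coeff_natDegree, leadingCoeff_eq_zero] at h1
      exact h4 h1
    have hl : l = 0 := by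
      rcases hz with ⟨h, h0⟩ | ⟨h, h0⟩
      · exact key _ c.hr h0 (h ▸ h3) er
      · exact key _ c.hs h0 (h ▸ h3) es
    rw [hl, mul_zero] at er es ew
    exact hgen D hu hv er es ew

end Curve
end DP4

/-! ### Degenerate fibres and smoothness -/

namespace DP4
open Polynomial

theorem exists_quadratic_root {K : Type} [Field K] [IsAlgClosed K] (e a : K) :
    ∃ x : K, x ^ 2 - e * x + a = 0 := by
  have h : (X ^ 2 - C e * X + C a : K[X]).natDegree = 2 := by compute_degree!
  obtain ⟨x, hx⟩ := IsAlgClosed.exists_root (X ^ 2 - C e * X + C a : K[X])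
    (by exact_mod_cast degree_ne_of_natDegree_ne (n := 0) (by omega))
  exact ⟨x, by simpa [IsRoot] using hx⟩

theorem exists_binary_zero {K : Type} [Field K] [IsAlgClosed K] (a b c : K) :
    ∃ r s : K, (r ≠ 0 ∨ s ≠ 0) ∧ a * r ^ 2 + b * r * s + c * s ^ 2 = 0 := by
  by_cases ha : a = 0
  · exact ⟨1, 0, Or.inl one_ne_zero, by simp [ha]⟩
  obtain ⟨x, hx⟩ := exists_quadratic_root (-(b / a)) (c / a)
  refine ⟨x, 1, Or.inr one_ne_zero, ?_⟩
  field_simp at hx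
  linear_combination hx

namespace BiForm

theorem r_discU {R : Type} [CommRing R] (F : BiForm R) (u v r s w : R) (h : F.q u v r s w = 0)
    (hs : F.qs u v r s w = 0) (hw : F.qw u v r s w = 0) :
    r ^ 2 * F.discU u v = (4 * F.b u v - F.d u v ^ 2) * F.qu u v r s w := by
  have : r ^ 2 * F.discU u v = (4 * F.b u v - F.d u v ^ 2) * F.qu u v r s w
      + (4 * (2 * F.ρ 0 2 * u + F.ρ 1 2 * v) - 2 * F.d u v * F.l 0 1) * F.q u v r s w
      - ((2 * F.ρ 0 2 * u + F.ρ 1 2 * v) * F.qw u v r s w ^ 2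
        + 2 * F.b u v * F.qw u v r s w * (F.l 0 0 * r + F.l 0 1 * s)
        - F.l 0 1 * F.qs u v r s w * F.qw u v r s w
        - F.d u v * (F.l 0 1 * w + (2 * F.ρ 0 1 * u + F.ρ 1 1 * v) * r
          + 2 * (2 * F.ρ 0 2 * u + F.ρ 1 2 * v) * s) * F.qw u v r s w
        - F.d u v * F.qs u v r s w * (F.l 0 0 * r + F.l 0 1 * s)
        + 2 * F.qs u v r s w * (F.l 0 1 * w + (2 * F.ρ 0 1 * u + F.ρ 1 1 * v) * r
          + 2 * (2 * F.ρ 0 2 * u + F.ρ 1 2 * v) * s)) := by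
    simp only [discU, q, qs, qw, qu, a, b, d, e, f]; ring
  rw [this, h, hs, hw]; ring

theorem s_discU {R : Type} [CommRing R] (F : BiForm R) (u v r s w : R) (h : F.q u v r s w = 0)
    (hr : F.qr u v r s w = 0) (hw : F.qw u v r s w = 0) :
    s ^ 2 * F.discU u v = (4 * F.a u v - F.e u v ^ 2) * F.qu u v r s w := by
  let G : BiForm R := ⟨fun i j => F.l i (1 - j), fun i j => F.ρ i (2 - j)⟩
  have e₁ : ∀ u v r s w, G.q u v s r w = F.q u v r s w := by
    intros; simp [G, q, a, b, d, e, f]; ring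
  have e₂ : ∀ u v r s w, G.qs u v s r w = F.qr u v r s w := by
    intros; simp [G, qs, qr, a, b, d, e, f]; ring
  have e₃ : ∀ u v r s w, G.qw u v s r w = F.qw u v r s w := by
    intros; simp [G, qw, a, b, d, e, f]; ring
  have e₄ : ∀ u v r s w, G.qu u v s r w = F.qu u v r s w := by
    intros; simp [G, qu, a, b, d, e, f]; ring
  have e₅ : G.discU u v = F.discU u v := by simp [G, discU, a, b, d, e, f]; ring
  have := G.r_discU u v s r w (by rw [e₁, h]) (by rw [e₂, hr]) (by rw [e₃, hw])
  rw [e₅, e₄] at this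
  simpa [G, a, b, d, e] using this

theorem r_discV {R : Type} [CommRing R] (F : BiForm R) (u v r s w : R) (h : F.q u v r s w = 0)
    (hs : F.qs u v r s w = 0) (hw : F.qw u v r s w = 0) :
    r ^ 2 * F.discV u v = (4 * F.b u v - F.d u v ^ 2) * F.qv u v r s w := by
  let G : BiForm R := ⟨fun i j => F.l (1 - i) j, fun i j => F.ρ (2 - i) j⟩
  have e₁ : ∀ u v r s w, G.q v u r s w = F.q u v r s w := by
    intros; simp [G, q, a, b, d, e, f]; ring
  have e₂ : ∀ u v r s w, G.qs v u r s w = F.qs u v r s w := by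
    intros; simp [G, qs, qr, a, b, d, e, f]; ring
  have e₃ : ∀ u v r s w, G.qw v u r s w = F.qw u v r s w := by
    intros; simp [G, qw, a, b, d, e, f]; ring
  have e₄ : ∀ u v r s w, G.qu v u r s w = F.qv u v r s w := by
    intros; simp [G, qu, qv, a, b, d, e, f]; 
  have e₅ : G.discU v u = F.discV u v := by simp [G, discU, discV, a, b, d, e, f]; ring
  have e₆ : G.b v u = F.b u v := by simp [G, b]; ring
  have e₇ : G.d v u = F.d u v := by simp [G, d]; ring
  have := G.r_discU v u r s w (by rw [e₁, h]) (by rw [e₂, hs]) (by rw [e₃, hw])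
  rwa [e₅, e₄, e₆, e₇] at this

theorem s_discV {R : Type} [CommRing R] (F : BiForm R) (u v r s w : R) (h : F.q u v r s w = 0)
    (hr : F.qr u v r s w = 0) (hw : F.qw u v r s w = 0) :
    s ^ 2 * F.discV u v = (4 * F.a u v - F.e u v ^ 2) * F.qv u v r s w := by
  let G : BiForm R := ⟨fun i j => F.l (1 - i) j, fun i j => F.ρ (2 - i) j⟩
  have e₁ : ∀ u v r s w, G.q v u r s w = F.q u v r s w := by
    intros; simp [G, q, a, b, d, e, f]; ring
  have e₂ : ∀ u v r s w, G.qr v u r s w = F.qr u v r s w := by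
    intros; simp [G, qs, qr, a, b, d, e, f]; ring
  have e₃ : ∀ u v r s w, G.qw v u r s w = F.qw u v r s w := by
    intros; simp [G, qw, a, b, d, e, f]; ring
  have e₄ : ∀ u v r s w, G.qu v u r s w = F.qv u v r s w := by
    intros; simp [G, qu, qv, a, b, d, e, f]; 
  have e₅ : G.discU v u = F.discV u v := by simp [G, discU, discV, a, b, d, e, f]; ring
  have e₆ : G.a v u = F.a u v := by simp [G, a]; ring
  have e₇ : G.e v u = F.e u v := by simp [G, e]; ring
  have := G.s_discU v u r s w (by rw [e₁, h]) (by rw [e₂, hr]) (by rw [e₃, hw])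
  rwa [e₅, e₄, e₆, e₇] at this

variable {K : Type} [Field K] [IsAlgClosed K] (F : BiForm K)

/-- Where the discriminant vanishes, `q` is a product of two linear forms in `(r, s, w)`. -/
theorem exists_factor {u v : K} (h : F.disc u v = 0) :
    ∃ μ₁ μ₂ ν₁ ν₂ : K, F.e u v = μ₁ + μ₂ ∧ F.a u v = μ₁ * μ₂ ∧ F.d u v = ν₁ + ν₂ ∧
      F.b u v = ν₁ * ν₂ ∧ F.f u v = μ₁ * ν₂ + μ₂ * ν₁ := by
  obtain ⟨μ, hμ⟩ := exists_quadratic_root (F.e u v) (F.a u v)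
  obtain ⟨ν, hν⟩ := exists_quadratic_root (F.d u v) (F.b u v)
  have key : (F.f u v - (μ * (F.d u v - ν) + (F.e u v - μ) * ν)) *
      (F.f u v - (μ * ν + (F.e u v - μ) * (F.d u v - ν))) = 0 := by
    have ha : F.a u v = F.e u v * μ - μ ^ 2 := by linear_combination hμ
    have hb : F.b u v = F.d u v * ν - ν ^ 2 := by linear_combination hν
    unfold disc at h
    rw [ha, hb] at h
    linear_combination -h
  rcases mul_eq_zero.1 key with h1 | h1
  · exact ⟨μ, F.e u v - μ, ν, F.d u v - ν, by ring, by linear_combination hμ, by ring,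
      by linear_combination hν, by linear_combination h1⟩
  · exact ⟨μ, F.e u v - μ, F.d u v - ν, ν, by ring, by linear_combination hμ, by ring,
      by linear_combination hν, by linear_combination h1⟩

/-- The bihomogeneous model is smooth. -/
def Smooth : Prop := ∀ u v r s w : K, (u ≠ 0 ∨ v ≠ 0) → (r ≠ 0 ∨ s ≠ 0) → F.q u v r s w = 0 →
  F.qu u v r s w = 0 → F.qv u v r s w = 0 → F.qr u v r s w = 0 → F.qs u v r s w = 0 →
  F.qw u v r s w = 0 → False

theorem Smooth.swap {F : BiForm K} (h : F.Smooth) : F.swap.Smooth := by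
  intro u v r s w h1 h2 h3 h4 h5 h6 h7 h8
  rw [q_swap] at h3; rw [qu_swap] at h4; rw [qv_swap] at h5; rw [qr_swap] at h6
  rw [qs_swap] at h7; rw [qw_swap] at h8
  exact h r s u v w h2 h1 h3 h6 h7 h4 h5 h8

/-- Smoothness of the model makes the discriminant quartic squarefree. -/
theorem Smooth.sep {F : BiForm K} (hF : F.Smooth) (u v : K) (h : F.disc u v = 0)
    (hU : F.discU u v = 0) (hV : F.discV u v = 0) : u = 0 ∧ v = 0 := by
  by_contra huv
  have huv' : u ≠ 0 ∨ v ≠ 0 := by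
    by_contra h'; push Not at h'; exact huv h'
  obtain ⟨μ₁, μ₂, ν₁, ν₂, he, ha, hd, hb, hf⟩ := F.exists_factor h
  -- the fibre over `(u : v)` is a pair of lines: if it is a double line, the surface is singular
  -- at one of its points; if the lines are distinct, the surface is singular at their intersection
  by_cases hm : μ₁ = μ₂ ∧ ν₁ = ν₂
  · obtain ⟨rfl, rfl⟩ := hm
    have hq : ∀ r s, F.q u v r s (-(μ₁ * r + ν₁ * s)) = 0 := fun r s => by
      unfold q; rw [he, ha, hd, hb, hf]; ring
    have hr : ∀ r s, F.qr u v r s (-(μ₁ * r + ν₁ * s)) = 0 := fun r s => by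
      unfold qr; rw [he, ha, hf]; ring
    have hs : ∀ r s, F.qs u v r s (-(μ₁ * r + ν₁ * s)) = 0 := fun r s => by
      unfold qs; rw [hd, hb, hf]; ring
    have hw : ∀ r s, F.qw u v r s (-(μ₁ * r + ν₁ * s)) = 0 := fun r s => by
      unfold qw; rw [he, hd]; ring
    have hE : ∀ r s, u * F.qu u v r s (-(μ₁ * r + ν₁ * s)) + v * F.qv u v r s (-(μ₁ * r + ν₁ * s))
        = 0 := fun r s => by rw [euler_uv, hr, hs]; ring
    rcases huv' with hu | hv
    · obtain ⟨r, s, hrs, h0⟩ := exists_binary_zero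
        (-μ₁ * F.l 1 0 + (2 * F.ρ 2 0 * v + F.ρ 1 0 * u))
        (-μ₁ * F.l 1 1 - ν₁ * F.l 1 0 + (2 * F.ρ 2 1 * v + F.ρ 1 1 * u))
        (-ν₁ * F.l 1 1 + (2 * F.ρ 2 2 * v + F.ρ 1 2 * u))
      have hV0 : F.qv u v r s (-(μ₁ * r + ν₁ * s)) = 0 := by
        unfold qv; linear_combination h0
      have hU0 : F.qu u v r s (-(μ₁ * r + ν₁ * s)) = 0 := by
        have := hE r s
        rw [hV0, mul_zero, add_zero] at this
        exact (mul_eq_zero.1 this).resolve_left hu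
      exact hF _ _ r s _ (Or.inl hu) hrs (hq r s) hU0 hV0 (hr r s) (hs r s) (hw r s)
    · obtain ⟨r, s, hrs, h0⟩ := exists_binary_zero
        (-μ₁ * F.l 0 0 + (2 * F.ρ 0 0 * u + F.ρ 1 0 * v))
        (-μ₁ * F.l 0 1 - ν₁ * F.l 0 0 + (2 * F.ρ 0 1 * u + F.ρ 1 1 * v))
        (-ν₁ * F.l 0 1 + (2 * F.ρ 0 2 * u + F.ρ 1 2 * v))
      have hU0 : F.qu u v r s (-(μ₁ * r + ν₁ * s)) = 0 := by
        unfold qu; linear_combination h0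
      have hV0 : F.qv u v r s (-(μ₁ * r + ν₁ * s)) = 0 := by
        have := hE r s
        rw [hU0, mul_zero, zero_add] at this
        exact (mul_eq_zero.1 this).resolve_left hv
      exact hF _ _ r s _ (Or.inr hv) hrs (hq r s) hU0 hV0 (hr r s) (hs r s) (hw r s)
  · set r := ν₁ - ν₂ with hrd
    set s := μ₂ - μ₁ with hsd
    set w := -(μ₁ * r + ν₁ * s) with hwd
    have hw2 : w = -(μ₂ * r + ν₂ * s) := by rw [hwd, hrd, hsd]; ring
    have hrs : r ≠ 0 ∨ s ≠ 0 := by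
      by_contra h'
      push Not at h'
      exact hm ⟨(sub_eq_zero.1 h'.2).symm, sub_eq_zero.1 h'.1⟩
    have hq : F.q u v r s w = 0 := by
      unfold q; rw [he, ha, hd, hb, hf, hwd, hrd, hsd]; ring
    have hr : F.qr u v r s w = 0 := by
      unfold qr; rw [he, ha, hf, hwd, hrd, hsd]; ring
    have hs : F.qs u v r s w = 0 := by
      unfold qs; rw [hd, hb, hf, hwd, hrd, hsd]; ring
    have hw : F.qw u v r s w = 0 := by
      unfold qw; rw [he, hd, hwd, hrd, hsd]; ring
    have k1 : 4 * F.b u v - F.d u v ^ 2 = -r ^ 2 := by rw [hb, hd, hrd]; ring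
    have k2 : 4 * F.a u v - F.e u v ^ 2 = -s ^ 2 := by rw [ha, he, hsd]; ring
    have fin : F.qu u v r s w = 0 ∧ F.qv u v r s w = 0 := by
      rcases hrs with h0 | h0
      · have h1 := F.r_discU u v r s w hq hs hw
        have h2 := F.r_discV u v r s w hq hs hw
        rw [k1, hU, mul_zero] at h1
        rw [k1, hV, mul_zero] at h2
        exact ⟨(mul_eq_zero.1 h1.symm).resolve_left (neg_ne_zero.2 (pow_ne_zero _ h0)),
          (mul_eq_zero.1 h2.symm).resolve_left (neg_ne_zero.2 (pow_ne_zero _ h0))⟩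
      · have h1 := F.s_discU u v r s w hq hr hw
        have h2 := F.s_discV u v r s w hq hr hw
        rw [k2, hU, mul_zero] at h1
        rw [k2, hV, mul_zero] at h2
        exact ⟨(mul_eq_zero.1 h1.symm).resolve_left (neg_ne_zero.2 (pow_ne_zero _ h0)),
          (mul_eq_zero.1 h2.symm).resolve_left (neg_ne_zero.2 (pow_ne_zero _ h0))⟩
    exact hF u v r s w huv' hrs hq fin.1 fin.2 hr hs hw

theorem disc_smul {R : Type} [CommRing R] (F : BiForm R) (c u v : R) :
    F.disc (c * u) (c * v) = c ^ 4 * F.disc u v := by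
  simp only [disc, a, b, d, e, f]; ring

/-- If the discriminant vanishes identically along the curve, the fibration coordinate
`(u : v)` is constant. -/
theorem exists_const_of_disc_eq_zero {L : Type} [Field L] [Algebra K L]
    (hsep : ∀ u v : K, F.disc u v = 0 → F.discU u v = 0 → F.discV u v = 0 → u = 0 ∧ v = 0)
    (u v : L[X]) (h : (F.map (algebraMap K L[X])).disc u v = 0) (huv : u ≠ 0 ∨ v ≠ 0) :
    ∃ u₀ v₀ : K, (u₀ ≠ 0 ∨ v₀ ≠ 0) ∧ F.disc u₀ v₀ = 0 ∧ ∃ l : L[X],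
      u = l * algebraMap K L[X] u₀ ∧ v = l * algebraMap K L[X] v₀ := by
  have hinj : Function.Injective (algebraMap K L[X]) := FaithfulSMul.algebraMap_injective K L[X]
  by_cases hv : v = 0
  · have hu : u ≠ 0 := by simpa [hv] using huv
    refine ⟨1, 0, Or.inl one_ne_zero, ?_, u, by simp, by simp [hv]⟩
    have h1 : u = u * algebraMap K L[X] 1 := by simp
    have h2 : v = u * algebraMap K L[X] 0 := by simp [hv]
    rw [h1, h2, disc_smul, ← map_disc] at h
    have := (mul_eq_zero.1 h).resolve_left (pow_ne_zero _ hu)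
    exact (map_eq_zero_iff _ hinj).1 this
  · let M := FractionRing L[X]
    let t : M := algebraMap L[X] M u / algebraMap L[X] M v
    let P : K[X] := (F.map (algebraMap K K[X])).disc X 1
    have hv' : algebraMap L[X] M v ≠ 0 := by
      rw [Ne, map_eq_zero_iff _ (IsFractionRing.injective L[X] M)]; exact hv
    have hmapP : ∀ (S : Type) [CommRing S] [Algebra K S] (x : S), 
        aeval x P = (F.map (algebraMap K S)).disc x 1 := by
      intro S _ _ x
      have h1 := map_disc (F.map (algebraMap K K[X])) ((aeval x : K[X] →ₐ[K] S) : K[X] →+* S) X 1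
      have hc : ((aeval x : K[X] →ₐ[K] S) : K[X] →+* S).comp (algebraMap K K[X]) =
          algebraMap K S := by ext c; simp
      rw [map_map, hc] at h1
      simp only [RingHom.coe_coe, aeval_X, map_one] at h1
      exact h1
    have hP : P ≠ 0 := by
      intro hP0
      have h1 := der_disc F (derivative' : Derivation K K[X] K[X]) X 1
      have h2 := (F.map (algebraMap K K[X])).euler_disc X 1
      change _ = 4 * P at h2
      change derivative' P = _ at h1
      rw [hP0] at h1 h2
      simp only [map_zero, derivative'_apply, derivative_X, derivative_one, mul_one, mul_zero,
        add_zero] at h1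
      rw [← h1] at h2
      simp only [mul_zero, zero_add, one_mul] at h2
      have ev : (evalRingHom (0 : K)).comp (algebraMap K K[X]) = RingHom.id K := by ext c; simp
      have g0 := map_disc (F.map (algebraMap K K[X])) (evalRingHom (0 : K)) X 1
      have g1 := map_discU (F.map (algebraMap K K[X])) (evalRingHom (0 : K)) X 1
      have g2 := map_discV (F.map (algebraMap K K[X])) (evalRingHom (0 : K)) X 1
      rw [map_map, ev] at g0 g1 g2
      rw [h2] at g2
      rw [← h1] at g1
      change (evalRingHom (0 : K)) P = _ at g0
      rw [hP0] at g0
      simp only [map_zero, coe_evalRingHom, eval_X, map_one] at g0 g1 g2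
      exact one_ne_zero (hsep 0 1 g0.symm g1.symm g2.symm).2
    have htP : aeval t P = 0 := by
      rw [hmapP]
      have hM : (algebraMap L[X] M).comp (algebraMap K L[X]) = algebraMap K M :=
        (IsScalarTower.algebraMap_eq K L[X] M).symm
      have h1 := map_disc (F.map (algebraMap K L[X])) (algebraMap L[X] M) u v
      rw [map_map, hM, h, map_zero] at h1
      have h2 : algebraMap L[X] M u = algebraMap L[X] M v * t := by
        rw [mul_comm]; exact (div_mul_cancel₀ _ hv').symm
      rw [h2, ← mul_one (algebraMap L[X] M v), mul_assoc, one_mul, disc_smul] at h1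
      exact (mul_eq_zero.1 h1.symm).resolve_left (pow_ne_zero _ hv')
    have halg : IsAlgebraic K t := ⟨P, hP, htP⟩
    have hint : IsIntegral K t := halg.isIntegral
    obtain ⟨x, hx⟩ := minpoly.mem_range_of_degree_eq_one K t
      (IsAlgClosed.degree_eq_one_of_irreducible K (minpoly.irreducible hint))
    refine ⟨x, 1, Or.inr one_ne_zero, ?_, v, ?_, by simp⟩
    · rw [← hx, aeval_algebraMap_apply] at htP
      have := (map_eq_zero_iff _ (FaithfulSMul.algebraMap_injective K M)).1 htP
      rw [hmapP] at this
      exact this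
    · apply IsFractionRing.injective L[X] M
      rw [map_mul, ← IsScalarTower.algebraMap_apply K L[X] M, hx]
      rw [mul_comm]; exact (div_mul_cancel₀ _ hv').symm

end BiForm
end DP4

/-! ### Parametrised curves on a smooth double cover -/

namespace DP4
open Polynomial
variable {K L : Type} [Field K] [IsAlgClosed K] [Field L] [Algebra K L]

namespace BiForm
variable (F : BiForm K)

/-- The curve `(u, v; r, s; w)` lies on a line of the ruling `(u : v) = const`. -/
def OnLine (u v r s w : L[X]) : Prop :=
  ∃ u₀ v₀ μ ν : K, (u₀ ≠ 0 ∨ v₀ ≠ 0) ∧ (∀ r s : K, F.q u₀ v₀ r s (-(μ * r + ν * s)) = 0) ∧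
    ∃ l : L[X], u = l * algebraMap K L[X] u₀ ∧ v = l * algebraMap K L[X] v₀ ∧
      w = -(l * (algebraMap K L[X] μ * r + algebraMap K L[X] ν * s))

theorem map_q {R S : Type} [CommRing R] [CommRing S] (F : BiForm R) (φ : R →+* S)
    (u v r s w : R) :
    φ (F.q u v r s w) = (F.map φ).q (φ u) (φ v) (φ r) (φ s) (φ w) := by
  simp [q, a, b, d, e, f, map]

/-- If `disc` vanished along the curve, the curve would lie in a single degenerate fibre, which is
a union of two lines. -/
theorem disc_ne_zero {F : BiForm K} (hF : F.Smooth) {u v r s w : L[X]} (huv : IsCoprime u v)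
    (hq : (F.map (algebraMap K L[X])).q u v r s w = 0) (hl : ¬ F.OnLine u v r s w) :
    (F.map (algebraMap K L[X])).disc u v ≠ 0 := by
  intro h
  have h0 : u ≠ 0 ∨ v ≠ 0 := by
    by_contra h'; push Not at h'; rw [h'.1, h'.2] at huv; exact not_isCoprime_zero_zero huv
  obtain ⟨u₀, v₀, h1, h2, l, rfl, rfl⟩ := F.exists_const_of_disc_eq_zero hF.sep u v h h0
  obtain ⟨μ₁, μ₂, ν₁, ν₂, he, ha, hd, hb, hf⟩ := F.exists_factor h2
  have key : (w + l * (algebraMap K L[X] μ₁ * r + algebraMap K L[X] ν₁ * s)) *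
      (w + l * (algebraMap K L[X] μ₂ * r + algebraMap K L[X] ν₂ * s)) = 0 := by
    have he' := congrArg (algebraMap K L[X]) he
    have ha' := congrArg (algebraMap K L[X]) ha
    have hd' := congrArg (algebraMap K L[X]) hd
    have hb' := congrArg (algebraMap K L[X]) hb
    have hf' := congrArg (algebraMap K L[X]) hf
    simp only [e, a, d, b, f, map_add, map_mul, map_pow] at he' ha' hd' hb' hf'
    rw [← hq]
    simp only [q, e, a, d, b, f, map]
    linear_combination (-w * l * r) * he' - (w * l * s) * hd' - l ^ 2 * r ^ 2 * ha' 
      - l ^ 2 * s ^ 2 * hb' - l ^ 2 * r * s * hf'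
  rcases mul_eq_zero.1 key with h3 | h3
  · refine hl ⟨u₀, v₀, μ₁, ν₁, h1, fun r s => ?_, l, rfl, rfl, by linear_combination h3⟩
    unfold q; rw [he, ha, hd, hb, hf]; ring
  · refine hl ⟨u₀, v₀, μ₂, ν₂, h1, fun r s => ?_, l, rfl, rfl, by linear_combination h3⟩
    unfold q; rw [he, ha, hd, hb, hf]; ring

theorem q_scale {R : Type} [CommRing R] (F : BiForm R) (t t' u v r s w : R) (h : t' * t = 1) :
    F.q (t' * u) (t' * v) (t * r) (t * s) w = F.q u v r s w := by
  simp only [q, a, b, d, e, f]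
  have h2 : t' ^ 2 * t ^ 2 = 1 := by rw [← mul_pow, h, one_pow]
  linear_combination (w * ((F.l 0 0 * u + F.l 1 0 * v) * r + (F.l 0 1 * u + F.l 1 1 * v) * s)) * h
    + ((F.ρ 0 0 * u ^ 2 + F.ρ 1 0 * u * v + F.ρ 2 0 * v ^ 2) * r ^ 2
      + (F.ρ 0 1 * u ^ 2 + F.ρ 1 1 * u * v + F.ρ 2 1 * v ^ 2) * r * s
      + (F.ρ 0 2 * u ^ 2 + F.ρ 1 2 * u * v + F.ρ 2 2 * v ^ 2) * s ^ 2) * h2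

/-- The dimension bound for curves with `A ≤ B`, after normalising a top coefficient of `(u, v)` to
`1` by moving a constant from `(u, v)` to `(r, s)`. -/
theorem rank_of_le {F : BiForm K} (hF : F.Smooth) {u v r s w : L[X]} (huv : IsCoprime u v)
    (hrs : IsCoprime r s) {A B : ℕ} (hAB : A ≤ B) (hu : u.natDegree ≤ A) (hv : v.natDegree ≤ A)
    (hr : r.natDegree ≤ B) (hs : s.natDegree ≤ B) (hw : w.natDegree ≤ A + B)
    (htop : u.coeff A ≠ 0 ∨ v.coeff A ≠ 0) (htop' : r.coeff B ≠ 0 ∨ s.coeff B ≠ 0)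
    (hq : (F.map (algebraMap K L[X])).q u v r s w = 0) (hl : ¬ F.OnLine u v r s w)
    (hgen : ∀ D : Derivation K L L, dd D (u * r) = 0 → dd D (u * s) = 0 → dd D (v * r) = 0 →
      dd D (v * s) = 0 → dd D w = 0 → D = 0) :
    Module.rank L (Derivation K L L) ≤ (A + B + 3 : ℕ) := by
  have hdisc := disc_ne_zero hF huv hq hl
  obtain ⟨z, hz0, hz⟩ : ∃ z : L, z ≠ 0 ∧ (z = u.coeff A ∨ z = v.coeff A) := by
    rcases htop with h | h
    · exact ⟨_, h, Or.inl rfl⟩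
    · exact ⟨_, h, Or.inr rfl⟩
  have hC : C z⁻¹ * C z = (1 : L[X]) := by rw [← C_mul, inv_mul_cancel₀ hz0, C_1]
  have un : ∀ t : L, t ≠ 0 → IsUnit (C t) := fun t ht => isUnit_C.2 (isUnit_iff_ne_zero.2 ht)
  have hz' : z⁻¹ ≠ 0 := inv_ne_zero hz0
  let c : Curve F L A B :=
    { u := C z⁻¹ * u
      v := C z⁻¹ * v
      r := C z * r
      s := C z * s
      w := w
      huv := (isCoprime_mul_unit_left (un _ hz') u v).2 huv
      hrs := (isCoprime_mul_unit_left (un _ hz0) r s).2 hrs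
      hu := (natDegree_C_mul_le _ _).trans hu
      hv := (natDegree_C_mul_le _ _).trans hv
      hr := (natDegree_C_mul_le _ _).trans hr
      hs := (natDegree_C_mul_le _ _).trans hs
      hw := hw
      norm := by
        rw [coeff_C_mul, coeff_C_mul]
        rcases hz with h | h
        · left; rw [← h, inv_mul_cancel₀ hz0]
        · right; rw [← h, inv_mul_cancel₀ hz0]
      top := by
        rw [coeff_C_mul, coeff_C_mul]
        exact htop'.imp (mul_ne_zero hz0) (mul_ne_zero hz0)
      hq := by rw [q_scale _ _ _ _ _ _ _ _ hC, hq]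
      hdisc := by
        rw [disc_smul]
        exact mul_ne_zero (pow_ne_zero _ (C_ne_zero.2 hz')) hdisc }
  refine c.rank_der_le hF.sep hAB fun D h1 h2 h3 h4 h5 => ?_
  have key : ∀ p p' : L[X], dd D (C z⁻¹ * p) = 0 → dd D (C z * p') = 0 → dd D (p * p') = 0 := by
    intro p p' h h'
    have : p * p' = (C z⁻¹ * p) * (C z * p') := by linear_combination (-p * p') * hC
    rw [this, Derivation.leibniz, h, h']; simp
  exact hgen D (key _ _ h1 h3) (key _ _ h1 h4) (key _ _ h2 h3) (key _ _ h2 h4) h5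

/-- The dimension bound for curves of bidegree `(A, B)`, by symmetry between the two rulings. -/
theorem rank_le {F : BiForm K} (hF : F.Smooth) {u v r s w : L[X]} (huv : IsCoprime u v)
    (hrs : IsCoprime r s) {A B : ℕ} (hu : u.natDegree ≤ A) (hv : v.natDegree ≤ A)
    (hr : r.natDegree ≤ B) (hs : s.natDegree ≤ B) (hw : w.natDegree ≤ A + B)
    (htop : u.coeff A ≠ 0 ∨ v.coeff A ≠ 0) (htop' : r.coeff B ≠ 0 ∨ s.coeff B ≠ 0)
    (hq : (F.map (algebraMap K L[X])).q u v r s w = 0) (hl : ¬ F.OnLine u v r s w)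
    (hl' : ¬ F.swap.OnLine r s u v w)
    (hgen : ∀ D : Derivation K L L, dd D (u * r) = 0 → dd D (u * s) = 0 → dd D (v * r) = 0 →
      dd D (v * s) = 0 → dd D w = 0 → D = 0) :
    Module.rank L (Derivation K L L) ≤ (A + B + 3 : ℕ) := by
  rcases le_total A B with hAB | hAB
  · exact rank_of_le hF huv hrs hAB hu hv hr hs hw htop htop' hq hl hgen
  · rw [add_comm A B]
    refine rank_of_le hF.swap hrs huv hAB hr hs hu hv (by omega) htop' htop ?_ hl' ?_
    · have : F.swap.map (algebraMap K L[X]) = (F.map (algebraMap K L[X])).swap := rfl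
      rw [this, q_swap, hq]
    · intro D h1 h2 h3 h4 h5
      refine hgen D ?_ ?_ ?_ ?_ h5
      · rwa [mul_comm]
      · rwa [mul_comm]
      · rwa [mul_comm]
      · rwa [mul_comm]

end BiForm

/-- A quadruple of polynomials with `y₀ y₃ = y₁ y₂` factors through the Segre embedding. -/
theorem segre (y₀ y₁ y₂ y₃ : L[X]) (h : y₀ * y₃ = y₁ * y₂)
    (hy : ¬ (y₀ = 0 ∧ y₁ = 0 ∧ y₂ = 0 ∧ y₃ = 0)) :
    ∃ u v r s : L[X], IsCoprime u v ∧ y₀ = u * r ∧ y₁ = u * s ∧ y₂ = v * r ∧ y₃ = v * s := by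
  classical
  have main : ∀ a b c d : L[X], a * d = c * b → ¬ (a = 0 ∧ b = 0) →
      ∃ u v r s : L[X], IsCoprime u v ∧ a = u * r ∧ c = u * s ∧ b = v * r ∧ d = v * s := by
    intro a b c d hh h0
    set g := EuclideanDomain.gcd a b with hg
    obtain ⟨u, hu⟩ : g ∣ a := EuclideanDomain.gcd_dvd_left _ _
    obtain ⟨v, hv⟩ : g ∣ b := EuclideanDomain.gcd_dvd_right _ _
    have hg0 : g ≠ 0 := by
      intro h1; rw [h1] at hu hv; exact h0 ⟨by simpa using hu, by simpa using hv⟩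
    have e := EuclideanDomain.gcd_eq_gcd_ab a b
    rw [← hg] at e
    set p := EuclideanDomain.gcdA a b
    set q := EuclideanDomain.gcdB a b
    have hpq : p * u + q * v = 1 := by
      apply mul_left_cancel₀ hg0
      linear_combination (-p) * hu - q * hv - e
    have hh' : u * d = c * v := by
      apply mul_left_cancel₀ hg0
      linear_combination hh - d * hu + c * hv
    refine ⟨u, v, g, p * c + q * d, ⟨p, q, hpq⟩, by rw [hu]; ring, ?_, by rw [hv]; ring, ?_⟩
    · linear_combination (-c) * hpq - q * hh'
    · linear_combination (-d) * hpq + p * hh'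
  by_cases h0 : y₀ = 0 ∧ y₂ = 0
  · obtain ⟨u, v, r, s, huv, h1, h2, h3, h4⟩ := main y₁ y₃ y₀ y₂ h.symm
      (fun h' => hy ⟨h0.1, h'.1, h0.2, h'.2⟩)
    exact ⟨u, v, s, r, huv, h2, h1, h4, h3⟩
  · exact main y₀ y₂ y₁ y₃ h h0

end DP4

/-! ### The double cover inside four-dimensional projective space -/

namespace DP4
open Polynomial
variable {K L : Type} [Field K] [IsAlgClosed K] [Field L] [Algebra K L]

/-- Coefficients of `w² + w · L(y) + R(y)`, with `L` linear and `R` quadratic in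
`y = (y₀, y₁, y₂, y₃)`. -/
structure Model (K : Type) where
  l : Fin 4 → K
  R : Fin 4 → Fin 4 → K

namespace Model
variable (m : Model K)

/-- The value of `w² + w · L(y) + R(y)` at `(y, w)`, over any `K`-algebra. -/
def QB {S : Type} [CommRing S] [Algebra K S] (y : Fin 5 → S) : S :=
  let i := algebraMap K S
  y 4 ^ 2 + y 4 * (i (m.l 0) * y 0 + i (m.l 1) * y 1 + i (m.l 2) * y 2 + i (m.l 3) * y 3)
    + i (m.R 0 0) * y 0 ^ 2 + i (m.R 1 1) * y 1 ^ 2 + i (m.R 2 2) * y 2 ^ 2 + i (m.R 3 3) * y 3 ^ 2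
    + i (m.R 0 1) * (y 0 * y 1) + i (m.R 0 2) * (y 0 * y 2) + i (m.R 0 3) * (y 0 * y 3)
    + i (m.R 1 2) * (y 1 * y 2) + i (m.R 1 3) * (y 1 * y 3) + i (m.R 2 3) * (y 2 * y 3)

/-- The pullback of `w² + w · L(y) + R(y)` along `y = (ur, us, vr, vs)`. -/
def toBi : BiForm K where
  l := ![![m.l 0, m.l 1], ![m.l 2, m.l 3]]
  ρ := ![![m.R 0 0, m.R 0 1, m.R 1 1], ![m.R 0 2, m.R 0 3 + m.R 1 2, m.R 1 3],
    ![m.R 2 2, m.R 2 3, m.R 3 3]]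

theorem QB_eq {S : Type} [CommRing S] [Algebra K S] (u v r s w : S) :
    m.QB ![u * r, u * s, v * r, v * s, w] = (m.toBi.map (algebraMap K S)).q u v r s w := by
  simp [QB, toBi, BiForm.q, BiForm.map, BiForm.a, BiForm.b, BiForm.d, BiForm.e, BiForm.f]
  ring

/-- The dimension bound for curves on the surface `y₀ y₃ = y₁ y₂`, `w² + w · L(y) + R(y) = 0`, by
factoring them through the Segre embedding. -/
theorem rank_le (hsm : m.toBi.Smooth) (y : Fin 5 → L[X]) (e : ℕ)
    (hdeg : ∀ i, (y i).natDegree ≤ e) (htop : ∃ i, (y i).coeff e ≠ 0)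
    (huni : ∃ b : Fin 5 → L[X], ∑ i, b i * y i = 1)
    (hA : y 0 * y 3 = y 1 * y 2) (hB : m.QB y = 0)
    (hline : ¬ ∃ w₁ w₂ : Fin 5 → K, LinearIndependent K ![w₁, w₂] ∧
      (∀ a b : K, (a * w₁ 0 + b * w₂ 0) * (a * w₁ 3 + b * w₂ 3)
          = (a * w₁ 1 + b * w₂ 1) * (a * w₁ 2 + b * w₂ 2) ∧
        m.QB (fun i => a * w₁ i + b * w₂ i) = 0) ∧
      ∃ f g : L[X], ∀ i, y i = algebraMap K L[X] (w₁ i) * f + algebraMap K L[X] (w₂ i) * g)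
    (hgen : ∀ D : Derivation K L L, (∀ i, dd D (y i) = 0) → D = 0) :
    Module.rank L (Derivation K L L) ≤ (e + 3 : ℕ) := by
  have hB' := hB
  simp only [QB] at hB'
  obtain ⟨bz, hbz⟩ := huni
  rw [Fin.sum_univ_five] at hbz
  have hπ : ∀ p : L[X], Prime p → ¬ (p ∣ y 0 ∧ p ∣ y 1 ∧ p ∣ y 2 ∧ p ∣ y 3) := by
    rintro p hp ⟨⟨z0, h0⟩, ⟨z1, h1⟩, ⟨z2, h2⟩, ⟨z3, h3⟩⟩
    rw [h0, h1, h2, h3] at hB'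
    have h4 : p ∣ y 4 ^ 2 := by
      refine ⟨_, eq_neg_of_add_eq_zero_left (b := p * (y 4 * (algebraMap K L[X] (m.l 0) * z0
        + algebraMap K L[X] (m.l 1) * z1 + algebraMap K L[X] (m.l 2) * z2
        + algebraMap K L[X] (m.l 3) * z3) + p * (algebraMap K L[X] (m.R 0 0) * z0 ^ 2
        + algebraMap K L[X] (m.R 1 1) * z1 ^ 2 + algebraMap K L[X] (m.R 2 2) * z2 ^ 2
        + algebraMap K L[X] (m.R 3 3) * z3 ^ 2 + algebraMap K L[X] (m.R 0 1) * (z0 * z1)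
        + algebraMap K L[X] (m.R 0 2) * (z0 * z2) + algebraMap K L[X] (m.R 0 3) * (z0 * z3)
        + algebraMap K L[X] (m.R 1 2) * (z1 * z2) + algebraMap K L[X] (m.R 1 3) * (z1 * z3)
        + algebraMap K L[X] (m.R 2 3) * (z2 * z3)))) ?_ |>.trans (mul_neg _ _).symm⟩
      linear_combination hB'
    obtain ⟨z4, h4⟩ := hp.dvd_of_dvd_pow h4
    apply hp.not_isUnit
    rw [h0, h1, h2, h3, h4] at hbz
    exact IsUnit.of_mul_eq_one (bz 0 * z0 + bz 1 * z1 + bz 2 * z2 + bz 3 * z3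
      + bz 4 * z4) (by linear_combination hbz)
  have hy : ¬ (y 0 = 0 ∧ y 1 = 0 ∧ y 2 = 0 ∧ y 3 = 0) := by
    rintro ⟨h0, h1, h2, h3⟩
    exact hπ X prime_X (by simp [h0, h1, h2, h3])
  obtain ⟨u, v, r, s, huv, e0, e1, e2, e3⟩ := segre _ _ _ _ hA hy
  have hrs : IsCoprime r s := by
    refine isCoprime_of_prime_dvd ?_ fun p hp h1 h2 => hπ p hp ?_
    · rintro ⟨rfl, rfl⟩
      exact hy (by simp [e0, e1, e2, e3])
    · rw [e0, e1, e2, e3]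
      exact ⟨dvd_mul_of_dvd_right h1 _, dvd_mul_of_dvd_right h2 _, dvd_mul_of_dvd_right h1 _,
        dvd_mul_of_dvd_right h2 _⟩
  have hyv : y = ![u * r, u * s, v * r, v * s, y 4] := by
    ext i : 1
    fin_cases i
    · exact e0
    · exact e1
    · exact e2
    · exact e3
    · rfl
  have hq : (m.toBi.map (algebraMap K L[X])).q u v r s (y 4) = 0 := by
    rw [← QB_eq, ← hyv, hB]
  have top : ∀ p p' : L[X], IsCoprime p p' → ∃ A, p.natDegree ≤ A ∧ p'.natDegree ≤ A ∧
      (p.coeff A ≠ 0 ∨ p'.coeff A ≠ 0) := by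
    intro p p' h
    have h0 : p ≠ 0 ∨ p' ≠ 0 := by
      by_contra h'; push Not at h'; rw [h'.1, h'.2] at h; exact not_isCoprime_zero_zero h
    rcases le_total p.natDegree p'.natDegree with hh | hh
    · refine ⟨p'.natDegree, hh, le_rfl, ?_⟩
      by_cases h1 : p' = 0
      · left
        have hp := h0.resolve_right (not_not.2 h1)
        rw [h1] at hh ⊢
        simp only [natDegree_zero, Nat.le_zero] at hh
        rw [natDegree_zero, ← hh]; simpa using hp
      · right; simpa using h1
    · refine ⟨p.natDegree, le_rfl, hh, ?_⟩
      by_cases h1 : p = 0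
      · right
        have hp := h0.resolve_left (not_not.2 h1)
        rw [h1] at hh ⊢
        simp only [natDegree_zero, Nat.le_zero] at hh
        rw [natDegree_zero, ← hh]; simpa using hp
      · left; simpa using h1
  obtain ⟨A, hu, hv, hA'⟩ := top u v huv
  obtain ⟨B, hr, hs, hB''⟩ := top r s hrs
  have Lu := Lead.self hu
  have Lv := Lead.self hv
  have Lr := Lead.self hr
  have Ls := Lead.self hs
  have hw : (y 4).natDegree ≤ A + B := by
    by_contra hlt
    push Not at hlt
    have n0 : (y 0).natDegree ≤ A + B := by rw [e0]; exact (Lu.mul Lr).le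
    have n1 : (y 1).natDegree ≤ A + B := by rw [e1]; exact (Lu.mul Ls).le
    have n2 : (y 2).natDegree ≤ A + B := by rw [e2]; exact (Lv.mul Lr).le
    have n3 : (y 3).natDegree ≤ A + B := by rw [e3]; exact (Lv.mul Ls).le
    have l0 := Lead.self n0
    have l1 := Lead.self n1
    have l2 := Lead.self n2
    have l3 := Lead.self n3
    have lw := Lead.self (le_refl (y 4).natDegree)
    have lk := fun x => Lead.const (L := L) K x
    have hd1 := lw.mul (((((lk (m.l 0)).mul l0).add ((lk (m.l 1)).mul l1)).add
      ((lk (m.l 2)).mul l2)).add ((lk (m.l 3)).mul l3))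
    have hd2 := ((((((((((lk (m.R 0 0)).mul l0.sq).add ((lk (m.R 1 1)).mul l1.sq)).add
      ((lk (m.R 2 2)).mul l2.sq)).add ((lk (m.R 3 3)).mul l3.sq)).add
      ((lk (m.R 0 1)).mul (l0.mul l1))).add ((lk (m.R 0 2)).mul (l0.mul l2))).add
      ((lk (m.R 0 3)).mul (l0.mul l3))).add ((lk (m.R 1 2)).mul (l1.mul l2))).add
      ((lk (m.R 1 3)).mul (l1.mul l3))).add ((lk (m.R 2 3)).mul (l2.mul l3))
    have key : (y 4 ^ 2).natDegree < 2 * (y 4).natDegree := by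
      have aux : ∀ (T₁ T₂ : L[X]) (n₁ n₂ : ℕ), T₁.natDegree ≤ n₁ → T₂.natDegree ≤ n₂ →
          n₁ < 2 * (y 4).natDegree → n₂ < 2 * (y 4).natDegree → y 4 ^ 2 + T₁ + T₂ = 0 →
          (y 4 ^ 2).natDegree < 2 * (y 4).natDegree := by
        intro T₁ T₂ n₁ n₂ h₁ h₂ h₃ h₄ h
        have : y 4 ^ 2 = -(T₁ + T₂) := by linear_combination h
        rw [this, natDegree_neg]
        exact lt_of_le_of_lt (natDegree_add_le _ _) (max_lt (h₁.trans_lt h₃) (h₂.trans_lt h₄))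
      exact aux _ _ _ _ hd1.le hd2.le (by omega) (by omega) (by linear_combination hB')
    rw [natDegree_pow] at key
    omega
  have hAB : A + B = e := by
    apply le_antisymm
    · have : ∃ i, (y i).coeff (A + B) ≠ 0 := by
        rcases hA' with h | h <;> rcases hB'' with h' | h'
        · exact ⟨0, by rw [e0, (Lu.mul Lr).coeff]; exact mul_ne_zero h h'⟩
        · exact ⟨1, by rw [e1, (Lu.mul Ls).coeff]; exact mul_ne_zero h h'⟩
        · exact ⟨2, by rw [e2, (Lv.mul Lr).coeff]; exact mul_ne_zero h h'⟩
        · exact ⟨3, by rw [e3, (Lv.mul Ls).coeff]; exact mul_ne_zero h h'⟩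
      obtain ⟨i, hi⟩ := this
      exact (le_natDegree_of_ne_zero hi).trans (hdeg i)
    · obtain ⟨i, hi⟩ := htop
      refine (le_natDegree_of_ne_zero hi).trans ?_
      fin_cases i
      · change (y 0).natDegree ≤ _; rw [e0]; exact (Lu.mul Lr).le
      · change (y 1).natDegree ≤ _; rw [e1]; exact (Lu.mul Ls).le
      · change (y 2).natDegree ≤ _; rw [e2]; exact (Lv.mul Lr).le
      · change (y 3).natDegree ≤ _; rw [e3]; exact (Lv.mul Ls).le
      · exact hw
  rw [← hAB]
  have idm : m.toBi.map (algebraMap K K) = m.toBi := rfl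
  refine BiForm.rank_le hsm huv hrs hu hv hr hs hw hA' hB'' hq ?_ ?_ ?_
  · rintro ⟨u₀, v₀, μ, ν, h0, hz, l, hlu, hlv, hlw⟩
    refine hline ⟨![u₀, 0, v₀, 0, -μ], ![0, u₀, 0, v₀, -ν], ?_, ?_, l * r, l * s, ?_⟩
    · rw [LinearIndependent.pair_iff]
      intro a b hab
      have c0 := congrFun hab 0
      have c1 := congrFun hab 1
      have c2 := congrFun hab 2
      have c3 := congrFun hab 3
      simp at c0 c1 c2 c3
      rcases h0 with h0 | h0
      · exact ⟨c0.resolve_right h0, c1.resolve_right h0⟩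
      · exact ⟨c2.resolve_right h0, c3.resolve_right h0⟩
    · intro a b
      refine ⟨by simp; ring, ?_⟩
      have := hz a b
      rw [← idm, ← QB_eq] at this
      convert this using 2
      ext i
      fin_cases i <;> simp <;> ring
    · intro i
      fin_cases i
      · change y 0 = _; rw [e0, hlu]; simp; ring
      · change y 1 = _; rw [e1, hlu]; simp; ring
      · change y 2 = _; rw [e2, hlv]; simp; ring
      · change y 3 = _; rw [e3, hlv]; simp; ring
      · change y 4 = _; rw [hlw]; simp; ring
  · rintro ⟨r₀, s₀, μ, ν, h0, hz, l, hlr, hls, hlw⟩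
    refine hline ⟨![r₀, s₀, 0, 0, -μ], ![0, 0, r₀, s₀, -ν], ?_, ?_, l * u, l * v, ?_⟩
    · rw [LinearIndependent.pair_iff]
      intro a b hab
      have c0 := congrFun hab 0
      have c1 := congrFun hab 1
      have c2 := congrFun hab 2
      have c3 := congrFun hab 3
      simp at c0 c1 c2 c3
      rcases h0 with h0 | h0
      · exact ⟨c0.resolve_right h0, c2.resolve_right h0⟩
      · exact ⟨c1.resolve_right h0, c3.resolve_right h0⟩
    · intro a b
      refine ⟨by simp; ring, ?_⟩
      have := hz a b
      rw [BiForm.q_swap, ← idm, ← QB_eq] at this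
      convert this using 2
      ext i
      fin_cases i <;> simp <;> ring
    · intro i
      fin_cases i
      · change y 0 = _; rw [e0, hlr]; simp; ring
      · change y 1 = _; rw [e1, hls]; simp; ring
      · change y 2 = _; rw [e2, hlr]; simp; ring
      · change y 3 = _; rw [e3, hls]; simp; ring
      · change y 4 = _; rw [hlw]; simp; ring
  · intro D h0 h1 h2 h3 h4
    refine hgen D fun i => ?_
    fin_cases i
    · change dd D (y 0) = _; rw [e0, h0]
    · change dd D (y 1) = _; rw [e1, h1]
    · change dd D (y 2) = _; rw [e2, h2]
    · change dd D (y 3) = _; rw [e3, h3]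
    · exact h4

end Model
end DP4

/-! ### Quadratic forms in five variables and their pencils -/

namespace DP4
open Polynomial

/-- The value at `x` of the quadratic form with coefficient array `c`, over any algebra. -/
def qf {K S : Type} [CommRing K] [CommRing S] [Algebra K S] (c : Fin 5 → Fin 5 → K)
    (x : Fin 5 → S) : S := ∑ i, ∑ j, algebraMap K S (c i j) * (x i * x j)

/-- The gradient of the quadratic form with coefficient array `c`. -/
def gr {K S : Type} [CommRing K] [CommRing S] [Algebra K S] (c : Fin 5 → Fin 5 → K)
    (x : Fin 5 → S) (i : Fin 5) : S := ∑ j, algebraMap K S (c i j + c j i) * x j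

/-- The polar form of the quadratic form with coefficient array `c`. -/
def bf {K S : Type} [CommRing K] [CommRing S] [Algebra K S] (c : Fin 5 → Fin 5 → K)
    (x z : Fin 5 → S) : S := ∑ i, gr c x i * z i

section
variable {K S : Type} [CommRing K] [CommRing S] [Algebra K S] (c c' : Fin 5 → Fin 5 → K)

theorem bf_eq (x z : Fin 5 → S) : bf c x z =
    ∑ i, ∑ j, algebraMap K S (c i j) * (x i * z j + x j * z i) := by
  have : bf c x z = (∑ i, ∑ j, algebraMap K S (c i j) * (x j * z i))
      + ∑ i, ∑ j, algebraMap K S (c j i) * (x j * z i) := by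
    simp only [bf, gr, map_add, add_mul, Finset.sum_add_distrib, Finset.sum_mul, mul_assoc]
  rw [this, Finset.sum_comm (f := fun i j => algebraMap K S (c j i) * (x j * z i)),
    ← Finset.sum_add_distrib]
  refine Finset.sum_congr rfl fun i _ => ?_
  rw [← Finset.sum_add_distrib]
  refine Finset.sum_congr rfl fun j _ => ?_
  ring

theorem bf_comm (x z : Fin 5 → S) : bf c x z = bf c z x := by
  rw [bf_eq, bf_eq]
  refine Finset.sum_congr rfl fun i _ => Finset.sum_congr rfl fun j _ => ?_
  ring

theorem bf_self (x : Fin 5 → S) : bf c x x = 2 * qf c x := by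
  rw [bf_eq, qf, Finset.mul_sum]
  refine Finset.sum_congr rfl fun i _ => ?_
  rw [Finset.mul_sum]
  refine Finset.sum_congr rfl fun j _ => ?_
  ring

theorem qf_add (a b : S) (x z : Fin 5 → S) :
    qf c (fun i => a * x i + b * z i) = a ^ 2 * qf c x + a * b * bf c x z + b ^ 2 * qf c z := by
  rw [bf_eq]
  simp only [qf, Finset.mul_sum, ← Finset.sum_add_distrib]
  refine Finset.sum_congr rfl fun i _ => Finset.sum_congr rfl fun j _ => ?_
  ring

theorem qf_smul (a : S) (x : Fin 5 → S) : qf c (fun i => a * x i) = a ^ 2 * qf c x := by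
  simp only [qf, Finset.mul_sum]
  refine Finset.sum_congr rfl fun i _ => Finset.sum_congr rfl fun j _ => ?_
  ring

theorem gr_add (a b : S) (x z : Fin 5 → S) (i : Fin 5) :
    gr c (fun i => a * x i + b * z i) i = a * gr c x i + b * gr c z i := by
  simp only [gr, Finset.mul_sum, ← Finset.sum_add_distrib]
  refine Finset.sum_congr rfl fun i _ => ?_
  ring

theorem bf_add (a b : S) (x z t : Fin 5 → S) :
    bf c t (fun i => a * x i + b * z i) = a * bf c t x + b * bf c t z := by
  simp only [bf, Finset.mul_sum, ← Finset.sum_add_distrib]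
  refine Finset.sum_congr rfl fun i _ => ?_
  ring

theorem bf_smul (a : S) (x t : Fin 5 → S) :
    bf c t (fun i => a * x i) = a * bf c t x := by
  simp only [bf, Finset.mul_sum, ← Finset.sum_add_distrib]
  refine Finset.sum_congr rfl fun i _ => ?_
  ring

theorem bf_single (x : Fin 5 → S) (i : Fin 5) : bf c x (Pi.single i 1) = gr c x i := by
  simp [bf, Pi.single_apply]

theorem qf_comb (a b : K) (x : Fin 5 → S) :
    qf (fun i j => a * c i j + b * c' i j) x
      = algebraMap K S a * qf c x + algebraMap K S b * qf c' x := by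
  simp only [qf, Finset.mul_sum, ← Finset.sum_add_distrib, map_add, map_mul]
  refine Finset.sum_congr rfl fun i _ => Finset.sum_congr rfl fun j _ => ?_
  ring

theorem gr_comb (a b : K) (x : Fin 5 → S) (i : Fin 5) :
    gr (fun i j => a * c i j + b * c' i j) x i
      = algebraMap K S a * gr c x i + algebraMap K S b * gr c' x i := by
  simp only [gr, Finset.mul_sum, ← Finset.sum_add_distrib, map_add, map_mul]
  refine Finset.sum_congr rfl fun i _ => ?_
  ring

end

/-- In a principal ideal domain, a nonzero vector is a multiple of a unimodular one. -/
theorem exists_unimodular {R ι : Type} [CommRing R] [IsDomain R] [IsPrincipalIdealRing R]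
    [Fintype ι] (v : ι → R) (hv : v ≠ 0) :
    ∃ (g : R) (w a : ι → R), g ≠ 0 ∧ (∀ i, v i = g * w i) ∧ ∑ i, a i * w i = 1 := by
  set I := Ideal.span (Set.range v)
  obtain ⟨g, hg⟩ := (IsPrincipalIdealRing.principal I).principal
  have hvg : ∀ i, ∃ w, v i = g * w := fun i => by
    have : v i ∈ I := Ideal.subset_span ⟨i, rfl⟩
    rw [hg] at this
    exact Ideal.mem_span_singleton.1 this
  choose w hw using hvg
  have hg0 : g ≠ 0 := by
    rintro rfl
    exact hv (funext fun i => by simp [hw])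
  have hgI : g ∈ I := by rw [hg]; exact Ideal.mem_span_singleton_self g
  obtain ⟨a, ha⟩ := Ideal.mem_span_range_iff_exists_fun.1 hgI
  refine ⟨g, w, a, hg0, hw, mul_left_cancel₀ hg0 ?_⟩
  rw [Finset.mul_sum, mul_one]
  conv_rhs => rw [← ha]
  exact Finset.sum_congr rfl fun i _ => by rw [hw]; ring

/-- A skew-symmetric matrix of odd size with zero diagonal is singular. -/
theorem det_skew {R : Type} [CommRing R] (M : Matrix (Fin 5) (Fin 5) R)
    (h0 : ∀ i, M i i = 0) (h : ∀ i j, M j i = - M i j) : M.det = 0 := by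
  rw [Matrix.det_succ_row_zero]
  simp [Matrix.det_succ_row_zero, Fin.sum_univ_succ, Fin.succAbove, h0]
  rw [h 0 1, h 0 2, h 0 3, h 0 4, h 1 2, h 1 3, h 1 4, h 2 3, h 2 4, h 3 4]
  ring

variable {K : Type} [Field K]

/-- Coefficient extraction commutes with the gradient. -/
theorem coeff_gr (c : Fin 5 → Fin 5 → K) (v : Fin 5 → K[X]) (n : ℕ) (i : Fin 5) :
    (gr c v i).coeff n = gr c (fun j => (v j).coeff n) i := by
  simp only [gr, Polynomial.finsetSum_coeff]
  refine Finset.sum_congr rfl fun j _ => ?_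
  rw [Polynomial.algebraMap_eq, Polynomial.coeff_C_mul]; rfl

theorem lead_qf (c : Fin 5 → Fin 5 → K) (v : Fin 5 → K[X]) (n : ℕ)
    (hv : ∀ i, (v i).natDegree ≤ n) :
    (qf c v).natDegree ≤ n + n ∧ (qf c v).coeff (n + n) = qf c fun j => (v j).coeff n := by
  constructor
  · refine Polynomial.natDegree_sum_le_of_forall_le _ _ fun i _ =>
      Polynomial.natDegree_sum_le_of_forall_le _ _ fun j _ => ?_
    rw [Polynomial.algebraMap_eq]
    exact (natDegree_C_mul_le _ _).trans (natDegree_mul_le_of_le (hv i) (hv j))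
  · simp only [qf, Polynomial.finsetSum_coeff]
    refine Finset.sum_congr rfl fun i _ => Finset.sum_congr rfl fun j _ => ?_
    rw [Polynomial.algebraMap_eq, Polynomial.coeff_C_mul]
    rw [((Lead.self (hv i)).mul (Lead.self (hv j))).coeff]; rfl

/-- Some member of a pencil of quadratic forms in five variables has a singular point. -/
theorem exists_singular [IsAlgClosed K] (c₁ c₂ : Fin 5 → Fin 5 → K) :
    ∃ (α β : K) (v : Fin 5 → K), (α ≠ 0 ∨ β ≠ 0) ∧ v ≠ 0 ∧ α * qf c₁ v + β * qf c₂ v = 0 ∧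
      ∀ i, α * gr c₁ v i + β * gr c₂ v i = 0 := by
  -- in characteristic two the polar form of `c₁ + X c₂` is alternating of odd size, hence singular
  -- over `K[X]`; take a primitive kernel vector `v`
  by_cases h2 : (2 : K) = 0
  · let M : Matrix (Fin 5) (Fin 5) K[X] := fun i j =>
      C (c₁ i j + c₁ j i) + X * C (c₂ i j + c₂ j i)
    have h2' : (2 : K[X]) = 0 := by
      rw [← map_ofNat (C : K →+* K[X]) 2, h2, C_0]
    have hdet : M.det = 0 := by
      refine det_skew M (fun i => ?_) fun i j => ?_
      · simp only [M, map_add]; linear_combination (C (c₁ i i) + X * C (c₂ i i)) * h2'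
      · simp only [M, map_add]
        linear_combination (C (c₁ i j) + C (c₁ j i) + X * (C (c₂ i j) + C (c₂ j i))) * h2'
    obtain ⟨v', hv'0, hv'⟩ := Matrix.exists_mulVec_eq_zero_iff.2 hdet
    obtain ⟨g, v, a, hg, hvg, hav⟩ := exists_unimodular v' hv'0
    have hker : ∀ i, gr c₁ v i + X * gr c₂ v i = 0 := by
      intro i
      have := congrFun hv' i
      simp only [Matrix.mulVec, dotProduct, Pi.zero_apply] at this
      apply mul_left_cancel₀ hg
      rw [mul_zero, ← this]
      simp only [gr, Finset.mul_sum, ← Finset.sum_add_distrib]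
      refine Finset.sum_congr rfl fun j _ => ?_
      rw [hvg]; simp only [M, Polynomial.algebraMap_eq]; ring
    set d := Finset.univ.sup fun i => (v i).natDegree with hd
    have hvd : ∀ i, (v i).natDegree ≤ d := fun i =>
      Finset.le_sup (f := fun i => (v i).natDegree) (Finset.mem_univ i)
    have hvd0 : (fun i => (v i).coeff d) ≠ 0 := by
      intro h
      obtain ⟨i, -, hi⟩ := Finset.exists_mem_eq_sup Finset.univ ⟨0, Finset.mem_univ _⟩
        fun i => (v i).natDegree
      have h1 : (v i).coeff (v i).natDegree = 0 := by
        have := congrFun h i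
        rw [hd, hi] at this; exact this
      have h2 : ∀ j, v j = 0 := by
        have hi0 : v i = 0 := by simpa using h1
        have hd0 : d = 0 := by rw [hd, hi, hi0]; simp
        intro j
        have h3 := hvd j
        rw [hd0, Nat.le_zero] at h3
        rw [eq_C_of_natDegree_eq_zero h3]
        have := congrFun h j
        simp only [hd0, Pi.zero_apply] at this
        rw [this, C_0]
      rw [Finset.sum_eq_zero fun j _ => by rw [h2 j, mul_zero]] at hav
      exact zero_ne_one hav
    -- the form itself must also vanish at a specialization of `v`: either it does at infinity,
    -- where `v` specializes to its top coefficients, or its value has odd degree `2d + 1` and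
    -- hence a root
    by_cases hq2 : qf c₂ (fun i => (v i).coeff d) = 0
    · refine ⟨0, 1, _, Or.inr one_ne_zero, hvd0, by rw [hq2]; ring, fun i => ?_⟩
      have := congrArg (fun p => p.coeff (d + 1)) (hker i)
      simp only [coeff_add, coeff_X_mul, coeff_gr, coeff_zero] at this
      have h0 : (fun j => (v j).coeff (d + 1)) = fun _ => 0 := funext fun j =>
        coeff_eq_zero_of_natDegree_lt (Nat.lt_succ_of_le (hvd j))
      rw [h0] at this
      have h00 : gr c₁ (fun _ => (0 : K)) i = 0 := by simp [gr]
      linear_combination this - h00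
    · have hf : (qf c₁ v + X * qf c₂ v).coeff (d + d + 1) ≠ 0 := by
        rw [coeff_add, coeff_X_mul, (lead_qf c₂ v d hvd).2,
          coeff_eq_zero_of_natDegree_lt (Nat.lt_succ_of_le (lead_qf c₁ v d hvd).1), zero_add]
        exact hq2
      have hdeg : (qf c₁ v + X * qf c₂ v).degree ≠ 0 := by
        have := le_natDegree_of_ne_zero hf
        exact degree_ne_of_natDegree_ne (n := 0) (by omega)
      obtain ⟨t, ht⟩ := IsAlgClosed.exists_root _ hdeg
      have evq : ∀ c : Fin 5 → Fin 5 → K, (qf c v).eval t = qf c fun i => (v i).eval t := by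
        intro c
        simp [qf, eval_finsetSum]
      have evg : ∀ (c : Fin 5 → Fin 5 → K) i, (gr c v i).eval t
          = gr c (fun i => (v i).eval t) i := by
        intro c i
        simp [gr, eval_finsetSum]
      refine ⟨1, t, fun i => (v i).eval t, Or.inl one_ne_zero, ?_, ?_, fun i => ?_⟩
      · intro h
        have := congrArg (eval t) hav
        rw [eval_finsetSum, Finset.sum_eq_zero fun j _ => by
          rw [eval_mul, show eval t (v j) = 0 from congrFun h j, mul_zero]] at this
        simp at this
      · have := ht
        simp only [IsRoot, eval_add, eval_mul, eval_X, evq] at this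
        rw [one_mul]; exact this
      · have := congrArg (eval t) (hker i)
        simp only [eval_add, eval_mul, eval_X, evg, eval_zero] at this
        rw [one_mul]; exact this
  -- in odd characteristic a zero of the gradient is a zero of the form, and an eigenvector of the
  -- quotient of the two Gram matrices provides one
  · let M : (Fin 5 → Fin 5 → K) → Matrix (Fin 5) (Fin 5) K := fun c i j => c i j + c j i
    have hM : ∀ c v i, (M c).mulVec v i = gr c v i := by
      intro c v i; simp [Matrix.mulVec, dotProduct, M, gr]
    have hq : ∀ (α β : K) v, (∀ i, α * gr c₁ v i + β * gr c₂ v i = 0) →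
        α * qf c₁ v + β * qf c₂ v = 0 := by
      intro α β v h
      apply mul_left_cancel₀ h2
      have : α * bf c₁ v v + β * bf c₂ v v = 0 := by
        simp only [bf, Finset.mul_sum, ← Finset.sum_add_distrib]
        exact Finset.sum_eq_zero fun i _ => by linear_combination v i * h i
      rw [bf_self, bf_self] at this
      linear_combination this
    by_cases hdet : (M c₂).det = 0
    · obtain ⟨v, hv0, hv⟩ := Matrix.exists_mulVec_eq_zero_iff.2 hdet
      have h : ∀ i, 0 * gr c₁ v i + 1 * gr c₂ v i = 0 := fun i => by
        rw [← hM c₂, hv]; simp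
      exact ⟨0, 1, v, Or.inr one_ne_zero, hv0, hq _ _ _ h, h⟩
    · obtain ⟨μ, hμ⟩ := Module.End.exists_eigenvalue (Matrix.toLin' ((M c₂)⁻¹ * M c₁))
      obtain ⟨v, hv⟩ := hμ.exists_hasEigenvector
      have hv1 := hv.apply_eq_smul
      have h : ∀ i, 1 * gr c₁ v i + (-μ) * gr c₂ v i = 0 := by
        intro i
        have h3 : (M c₁).mulVec v = μ • (M c₂).mulVec v := by
          rw [← Matrix.mulVec_smul, ← hv1, Matrix.toLin'_apply, Matrix.mulVec_mulVec,
            ← mul_assoc, Matrix.mul_nonsing_inv _ (isUnit_iff_ne_zero.2 hdet), one_mul]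
        have := congrFun h3 i
        rw [Pi.smul_apply, hM, hM, smul_eq_mul] at this
        linear_combination this
      exact ⟨1, -μ, v, Or.inl one_ne_zero, hv.2, hq _ _ _ h, h⟩

end DP4

/-! ### Changes of coordinates and hyperbolic bases -/

namespace DP4
open Polynomial
variable {K : Type} [Field K]

/-- Smoothness of the intersection of two quadrics with coefficient arrays `A` and `B`: the two
gradients are linearly independent at every nonzero common zero. -/
def Sm (A B : Fin 5 → Fin 5 → K) : Prop := ∀ v : Fin 5 → K, v ≠ 0 → qf A v = 0 → qf B v = 0 →
  ∀ α β : K, (∀ i, α * gr A v i + β * gr B v i = 0) → α = 0 ∧ β = 0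

/-- Smoothness depends only on the pencil spanned by the two forms. -/
theorem Sm.pencil {A B : Fin 5 → Fin 5 → K} (h : Sm A B) {α β γ δ : K} (hd : α * δ - β * γ ≠ 0) :
    Sm (fun i j => α * A i j + β * B i j) (fun i j => γ * A i j + δ * B i j) := by
  intro v hv h1 h2 a b hab
  rw [qf_comb] at h1 h2
  simp only [gr_comb, Algebra.algebraMap_self, RingHom.id_apply] at h1 h2 hab
  have e1 : qf A v = 0 := by
    apply mul_left_cancel₀ hd; linear_combination δ * h1 - β * h2
  have e2 : qf B v = 0 := by
    apply mul_left_cancel₀ hd; linear_combination α * h2 - γ * h1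
  obtain ⟨h3, h4⟩ := h v hv e1 e2 (a * α + b * γ) (a * β + b * δ) fun i => by
    linear_combination hab i
  constructor
  · apply mul_left_cancel₀ hd; linear_combination δ * h3 - γ * h4
  · apply mul_left_cancel₀ hd; linear_combination α * h4 - β * h3

/-- The coefficient array of the pullback of a quadratic form along `y ↦ ∑ yₖ bₖ`. -/
def pb (c b : Fin 5 → Fin 5 → K) (k l : Fin 5) : K := ∑ i, ∑ j, c i j * (b k i * b l j)

theorem qf_pb {S : Type} [CommRing S] [Algebra K S] (c b : Fin 5 → Fin 5 → K) (y : Fin 5 → S) :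
    qf c (fun i => ∑ k, y k * algebraMap K S (b k i)) = qf (pb c b) y := by
  have e1 : ∀ i j, algebraMap K S (c i j) * ((∑ k, y k * algebraMap K S (b k i)) *
      ∑ l, y l * algebraMap K S (b l j)) =
      ∑ k, ∑ l, algebraMap K S (c i j * (b k i * b l j)) * (y k * y l) := by
    intro i j
    rw [Finset.sum_mul_sum, Finset.mul_sum]
    refine Finset.sum_congr rfl fun k _ => ?_
    rw [Finset.mul_sum]
    refine Finset.sum_congr rfl fun l _ => ?_
    simp only [map_mul]; ring
  rw [qf, Finset.sum_congr rfl fun i _ => Finset.sum_congr rfl fun j _ => e1 i j]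
  simp only [qf, pb, map_sum, Finset.sum_mul]
  have s1 : ∀ i : Fin 5, (∑ j, ∑ k, ∑ l, algebraMap K S (c i j * (b k i * b l j)) * (y k * y l))
      = ∑ k, ∑ l, ∑ j, algebraMap K S (c i j * (b k i * b l j)) * (y k * y l) := by
    intro i
    rw [Finset.sum_comm]
    exact Finset.sum_congr rfl fun k _ => Finset.sum_comm
  rw [Finset.sum_congr rfl fun i _ => s1 i, Finset.sum_comm]
  exact Finset.sum_congr rfl fun k _ => Finset.sum_comm

theorem pb_self (c b : Fin 5 → Fin 5 → K) (k : Fin 5) : pb c b k k = qf c (b k) := by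
  simp [pb, qf]

theorem pb_add (c b : Fin 5 → Fin 5 → K) (k l : Fin 5) :
    pb c b k l + pb c b l k = bf c (b k) (b l) := by
  rw [bf_eq, pb, pb, ← Finset.sum_add_distrib]
  refine Finset.sum_congr rfl fun i _ => ?_
  rw [← Finset.sum_add_distrib]
  refine Finset.sum_congr rfl fun j _ => ?_
  simp; ring

theorem bf_sum (c b : Fin 5 → Fin 5 → K) (t y : Fin 5 → K) :
    bf c t (fun i => ∑ k, y k * b k i) = ∑ k, y k * bf c t (b k) := by
  simp only [bf, Finset.mul_sum]
  rw [Finset.sum_comm]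
  refine Finset.sum_congr rfl fun i _ => Finset.sum_congr rfl fun j _ => ?_
  ring

theorem gr_pb (c b : Fin 5 → Fin 5 → K) (y : Fin 5 → K) (k : Fin 5) :
    gr (pb c b) y k = bf c (fun i => ∑ k, y k * b k i) (b k) := by
  rw [bf_comm, bf_sum]
  simp only [gr, pb_add, Algebra.algebraMap_self, RingHom.id_apply]
  exact Finset.sum_congr rfl fun j _ => by ring

theorem comb_ne_zero {b : Fin 5 → Fin 5 → K} (hb : LinearIndependent K b) {y : Fin 5 → K}
    (hy : (fun i => ∑ k, y k * b k i) = 0) : y = 0 := by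
  funext k
  refine Fintype.linearIndependent_iff.1 hb y ?_ k
  ext i
  simpa [Finset.sum_apply] using congrFun hy i

theorem exists_comb {b : Fin 5 → Fin 5 → K} (hb : LinearIndependent K b) (x : Fin 5 → K) :
    ∃ y : Fin 5 → K, ∀ i, x i = ∑ k, y k * b k i := by
  have h := hb.span_eq_top_of_card_eq_finrank' (by simp)
  have hx : x ∈ Submodule.span K (Set.range b) := h ▸ Submodule.mem_top
  obtain ⟨y, hy⟩ := (Submodule.mem_span_range_iff_exists_fun K).1 hx
  exact ⟨y, fun i => by rw [← hy]; simp [Finset.sum_apply]⟩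

theorem Sm.pb {A B b : Fin 5 → Fin 5 → K} (h : Sm A B) (hb : LinearIndependent K b) :
    Sm (pb A b) (pb B b) := by
  intro y hy h1 h2 α β hαβ
  rw [← qf_pb] at h1 h2
  refine h _ (fun h0 => hy (comb_ne_zero hb h0)) h1 h2 α β fun i => ?_
  obtain ⟨z, hz⟩ := exists_comb hb (Pi.single i 1)
  have hz' : (Pi.single i 1 : Fin 5 → K) = fun i => ∑ k, z k * b k i := funext hz
  change α * gr A (fun i => ∑ k, y k * b k i) i + β * gr B (fun i => ∑ k, y k * b k i) i = 0
  rw [← bf_single, ← bf_single, hz', bf_sum, bf_sum, Finset.mul_sum, Finset.mul_sum,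
    ← Finset.sum_add_distrib]
  refine Finset.sum_eq_zero fun k _ => ?_
  have := hαβ k
  rw [gr_pb, gr_pb] at this
  linear_combination z k * this

/-- A space of dimension at least three contains an isotropic vector which is not a multiple of a
given vector. -/
theorem exists_isotropic [IsAlgClosed K] (A : Fin 5 → Fin 5 → K) (v : Fin 5 → K)
    (W : Submodule K (Fin 5 → K)) (hW : 3 ≤ Module.finrank K W) :
    ∃ h ∈ W, h ∉ Submodule.span K {v} ∧ qf A h = 0 := by
  classical
  have h1 : ∃ p ∈ W, p ∉ Submodule.span K {v} := by
    by_contra hc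
    push Not at hc
    have := (Submodule.finrank_mono (show W ≤ Submodule.span K {v} from hc)).trans
      (finrank_span_le_card _)
    simp at this; omega
  obtain ⟨p, hpW, hp⟩ := h1
  have h2 : ∃ z ∈ W, z ∉ Submodule.span K {v, p} := by
    by_contra hc
    push Not at hc
    have h3 := (Submodule.finrank_mono (show W ≤ Submodule.span K {v, p} from hc)).trans
      (finrank_span_le_card _)
    have h4 : ({v, p} : Set (Fin 5 → K)).toFinset.card ≤ 2 := by
      rw [Set.toFinset_insert, Set.toFinset_singleton]
      exact Finset.card_le_two
    omega
  obtain ⟨z, hzW, hz⟩ := h2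
  obtain ⟨r, s, hrs, h0⟩ := exists_binary_zero (qf A p) (bf A p z) (qf A z)
  refine ⟨r • p + s • z, W.add_mem (W.smul_mem _ hpW) (W.smul_mem _ hzW), fun hm => ?_, ?_⟩
  · obtain ⟨t, ht⟩ := Submodule.mem_span_singleton.1 hm
    by_cases hs : s = 0
    · have hr := hrs.resolve_right (not_not.2 hs)
      apply hp
      rw [Submodule.mem_span_singleton]
      refine ⟨r⁻¹ * t, ?_⟩
      rw [mul_smul, ht, hs, zero_smul, add_zero, smul_smul, inv_mul_cancel₀ hr, one_smul]
    · apply hz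
      rw [Submodule.mem_span_pair]
      refine ⟨s⁻¹ * t, -(s⁻¹ * r), ?_⟩
      rw [mul_smul, ht, neg_smul, smul_add, smul_smul, smul_smul, inv_mul_cancel₀ hs, one_smul]
      abel
  · have := qf_add A r s p z
    rw [show (r • p + s • z) = fun i => r * p i + s * z i from rfl, this]
    linear_combination h0

/-- An isotropic vector off the radical completes to a hyperbolic pair. -/
theorem exists_partner (A : Fin 5 → Fin 5 → K) (h z : Fin 5 → K) (hh : qf A h = 0)
    (hz : bf A h z ≠ 0) : ∃ a b : K, qf A (fun i => a * z i + b * h i) = 0 ∧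
      bf A h (fun i => a * z i + b * h i) = 1 := by
  refine ⟨(bf A h z)⁻¹, -((bf A h z)⁻¹ ^ 2 * qf A z), ?_, ?_⟩
  · rw [qf_add, hh, bf_comm A z h]; field_simp; ring
  · rw [bf_add, bf_self, hh]; field_simp; ring

/-- A pencil member `A` with a singular point `v` has corank one, by smoothness. Over an
algebraically closed field it becomes `y₀ y₃ − y₁ y₂` in a basis made of two orthogonal hyperbolic
pairs and a multiple `b 4` of `v`, on which the other form `B` takes the value `1`. -/
theorem exists_hyperbolic [IsAlgClosed K] {A B : Fin 5 → Fin 5 → K} (hs : Sm A B) (v : Fin 5 → K)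
    (hv0 : v ≠ 0) (hAv : qf A v = 0) (hgv : ∀ i, gr A v i = 0) :
    ∃ b : Fin 5 → Fin 5 → K, LinearIndependent K b ∧ qf B (b 4) = 1 ∧ (∀ i, qf A (b i) = 0) ∧
      (∀ i, bf A (b i) (b 4) = 0) ∧ bf A (b 0) (b 3) = 1 ∧ bf A (b 1) (b 2) = -1 ∧
      bf A (b 0) (b 1) = 0 ∧ bf A (b 0) (b 2) = 0 ∧ bf A (b 1) (b 3) = 0 ∧
      bf A (b 2) (b 3) = 0 := by
  have sing : ∀ w : Fin 5 → K, w ≠ 0 → qf A w = 0 → (∀ i, gr A w i = 0) → qf B w ≠ 0 := by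
    intro w hw h1 h2 h3
    exact one_ne_zero (hs w hw h1 h3 1 0 fun i => by rw [h2 i]; ring).1
  have hbv : ∀ z, bf A v z = 0 := fun z => by simp [bf, hgv]
  -- `v` spans the singular locus of `A`
  have uniq : ∀ h : Fin 5 → K, h ∉ Submodule.span K {v} → qf A h = 0 →
      ∃ z, bf A h z ≠ 0 := by
    intro h hh h1
    by_contra hc
    push Not at hc
    obtain ⟨r, s, hrs, h0⟩ := exists_binary_zero (qf B h) (bf B h v) (qf B v)
    refine sing (fun i => r * h i + s * v i) ?_ ?_ ?_ ?_
    · intro h2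
      have h2' : r • h + s • v = 0 := h2
      by_cases hr : r = 0
      · rw [hr, zero_smul, zero_add, smul_eq_zero] at h2'
        exact h2'.elim (hrs.resolve_left (not_not.2 hr)) hv0
      · apply hh
        rw [Submodule.mem_span_singleton]
        refine ⟨-(r⁻¹ * s), ?_⟩
        rw [neg_smul, mul_smul, eq_neg_of_add_eq_zero_right h2', smul_neg, neg_neg, smul_smul,
          inv_mul_cancel₀ hr, one_smul]
    · rw [qf_add, h1, hAv, hc]; ring
    · intro i; rw [gr_add, hgv, ← bf_single, hc]; ring
    · rw [qf_add]; linear_combination h0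
  obtain ⟨h₁, -, hn₁, q₁⟩ := exists_isotropic A v ⊤ (by simp)
  obtain ⟨z₁, hz₁⟩ := uniq h₁ hn₁ q₁
  obtain ⟨a₁, c₁, q₄, p₁₄⟩ := exists_partner A h₁ z₁ q₁ hz₁
  set h₄ := fun i => a₁ * z₁ i + c₁ * h₁ i
  let fl : (Fin 5 → K) → (Fin 5 → K) →ₗ[K] K := fun t =>
    { toFun := bf A t
      map_add' := fun x y => by
        have := bf_add A 1 1 x y t
        simp only [one_mul] at this
        exact this
      map_smul' := fun a x => bf_smul A a x t }
  let W := LinearMap.ker ((fl h₁).prod (fl h₄))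
  have hmem : ∀ z, z ∈ W ↔ bf A h₁ z = 0 ∧ bf A h₄ z = 0 := fun z => by
    simp [W, fl, LinearMap.mem_ker]
  have hW : 3 ≤ Module.finrank K W := by
    have h1 := LinearMap.finrank_range_add_finrank_ker ((fl h₁).prod (fl h₄))
    have h2 := Submodule.finrank_le (LinearMap.range ((fl h₁).prod (fl h₄)))
    simp only [Module.finrank_prod, Module.finrank_self, Module.finrank_pi, Fintype.card_fin]
      at h1 h2
    change _ + Module.finrank K W = 5 at h1
    omega
  obtain ⟨h₂, hW₂, hn₂, q₂⟩ := exists_isotropic A v W hW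
  obtain ⟨z₀, hz₀⟩ := uniq h₂ hn₂ q₂
  obtain ⟨p₁₂, p₄₂⟩ := (hmem _).1 hW₂
  have p₂₁ := bf_comm A h₂ h₁ ▸ p₁₂
  have p₂₄ := bf_comm A h₂ h₄ ▸ p₄₂
  have p₄₁ := bf_comm A h₄ h₁ ▸ p₁₄
  let z₂ : Fin 5 → K := fun i => 1 * z₀ i
    + 1 * (-(bf A h₄ z₀) * h₁ i + -(bf A h₁ z₀) * h₄ i)
  have hz₂W : bf A h₁ z₂ = 0 ∧ bf A h₄ z₂ = 0 := by
    simp only [z₂, bf_add, bf_self, q₁, q₄, p₁₄, p₄₁]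
    constructor <;> ring
  have hz₂ : bf A h₂ z₂ ≠ 0 := by
    simp only [z₂, bf_add, p₂₁, p₂₄]
    simpa using hz₀
  obtain ⟨a₂, c₂, q₃, p₂₃⟩ := exists_partner A h₂ z₂ q₂ hz₂
  set k₃ := fun i => a₂ * z₂ i + c₂ * h₂ i
  have p₁₃ : bf A h₁ k₃ = 0 := by simp only [k₃, bf_add, hz₂W.1, p₁₂]; ring
  have p₄₃ : bf A h₄ k₃ = 0 := by simp only [k₃, bf_add, hz₂W.2, p₄₂]; ring
  let h₃ : Fin 5 → K := fun i => (-1) * k₃ i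
  have q₃' : qf A h₃ = 0 := by simp only [h₃, qf_smul, q₃]; ring
  have p₁₃' : bf A h₁ h₃ = 0 := by simp only [h₃, bf_smul, p₁₃]; ring
  have p₄₃' : bf A h₄ h₃ = 0 := by simp only [h₃, bf_smul, p₄₃]; ring
  have p₂₃' : bf A h₂ h₃ = -1 := by simp only [h₃, bf_smul, p₂₃]; ring
  obtain ⟨ρ, hρ⟩ := IsAlgClosed.exists_pow_nat_eq (qf B v)⁻¹ (n := 2) (by norm_num)
  have hBv := sing v hv0 hAv hgv
  have hρ0 : ρ ≠ 0 := by
    rintro rfl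
    rw [zero_pow two_ne_zero] at hρ
    exact inv_ne_zero hBv hρ.symm
  let v' : Fin 5 → K := fun i => ρ * v i
  have pv : ∀ t, bf A t v' = 0 := fun t => by
    simp only [v', bf_smul]; rw [bf_comm, hbv, mul_zero]
  have hpair : ∀ (i : Fin 5), qf A ((![h₁, h₂, h₃, h₄, v'] : Fin 5 → Fin 5 → K) i) = 0 := by
    intro i
    fin_cases i
    · exact q₁
    · exact q₂
    · exact q₃'
    · exact q₄
    · change qf A v' = 0
      simp only [v', qf_smul, hAv, mul_zero]
  refine ⟨![h₁, h₂, h₃, h₄, v'], ?_, ?_, hpair, fun i => pv _, p₁₄, p₂₃', p₁₂, p₁₃', p₂₄,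
    (bf_comm A h₃ h₄).trans p₄₃'⟩
  · rw [Fintype.linearIndependent_iff]
    intro g hg
    have hg' : (fun i => ∑ k, g k * (![h₁, h₂, h₃, h₄, v'] : Fin 5 → Fin 5 → K) k i)
        = fun i => 0 * h₁ i := by
      ext i
      simpa [Finset.sum_apply] using congrFun hg i
    have key : ∀ t, ∑ k, g k * bf A t ((![h₁, h₂, h₃, h₄, v'] : Fin 5 → Fin 5 → K) k) = 0 := by
      intro t
      rw [← bf_sum, hg', bf_smul, zero_mul]
    simp only [Fin.sum_univ_five] at key
    have k1 : ∀ t, g 0 * bf A t h₁ + g 1 * bf A t h₂ + g 2 * bf A t h₃ + g 3 * bf A t h₄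
      + g 4 * bf A t v' = 0 := key
    have e1 := k1 h₄
    have e4 := k1 h₁
    have e2 := k1 h₃
    have e3 := k1 h₂
    simp only [pv, bf_comm A h₃ h₁, bf_comm A h₃ h₂, bf_comm A h₃ h₄, bf_self, q₁, q₂, q₃', q₄,
      p₄₁, p₄₂, p₄₃', p₁₂, p₁₃', p₁₄, p₂₃', p₂₁, p₂₄] at e1 e2 e3 e4
    have g0 : g 0 = 0 := by linear_combination e1
    have g3 : g 3 = 0 := by linear_combination e4
    have g1 : g 1 = 0 := by linear_combination -e2
    have g2 : g 2 = 0 := by linear_combination -e3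
    have g4 : g 4 = 0 := by
      obtain ⟨j, hj⟩ := Function.ne_iff.1 hv0
      have := congrFun hg' j
      simp only [Fin.sum_univ_five, g0, g1, g2, g3] at this
      have h5 : 0 * h₁ j + 0 * h₂ j + 0 * h₃ j + 0 * h₄ j + g 4 * (ρ * v j) = 0 * h₁ j := this
      simp only [zero_mul, zero_add] at h5
      exact (mul_eq_zero.1 h5).resolve_right (mul_ne_zero hρ0 hj)
    intro i
    fin_cases i
    exacts [g0, g1, g2, g3, g4]
  · change qf B v' = 1
    simp only [v', qf_smul, hρ]
    exact inv_mul_cancel₀ hBv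

end DP4

/-! ### The dimension bound for curves in four-dimensional projective space -/

namespace DP4
open Polynomial
variable {K L : Type} [Field K] [IsAlgClosed K] [Field L] [Algebra K L]

/-- The polynomial vector `x` lies on a line, defined over `K`, of the intersection of the
quadrics with coefficient arrays `A` and `B`. -/
def OnLine (A B : Fin 5 → Fin 5 → K) (x : Fin 5 → L[X]) : Prop :=
  ∃ w₁ w₂ : Fin 5 → K, LinearIndependent K ![w₁, w₂] ∧
    (∀ a b : K, qf A (fun i => a * w₁ i + b * w₂ i) = 0 ∧
      qf B (fun i => a * w₁ i + b * w₂ i) = 0) ∧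
    ∃ f g : L[X], ∀ i, x i = algebraMap K L[X] (w₁ i) * f + algebraMap K L[X] (w₂ i) * g

/-- A linear relation between two scalars, not both zero, determines its coefficients up to a
common factor. -/
theorem proportional {u v p p' : K} (h : u ≠ 0 ∨ v ≠ 0) (hp : p * u + p' * v = 0) :
    ∃ α, p = α * v ∧ p' = -(α * u) := by
  rcases h with h | h
  · refine ⟨-(p' / u), ?_, by field_simp⟩
    field_simp
    linear_combination hp
  · refine ⟨p / v, by field_simp, ?_⟩
    field_simp
    linear_combination hp

/-- The dimension bound in the coordinates provided by `exists_hyperbolic`. -/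
theorem rank_normal {A B : Fin 5 → Fin 5 → K} (hs : Sm A B) (hA0 : ∀ i, A i i = 0)
    (h03 : A 0 3 + A 3 0 = 1) (h12 : A 1 2 + A 2 1 = -1) (h01 : A 0 1 + A 1 0 = 0)
    (h02 : A 0 2 + A 2 0 = 0) (h13 : A 1 3 + A 3 1 = 0) (h23 : A 2 3 + A 3 2 = 0)
    (h4 : ∀ i, A i 4 + A 4 i = 0) (hB4 : B 4 4 = 1)
    (x : Fin 5 → L[X]) (e : ℕ)
    (hdeg : ∀ i, (x i).natDegree ≤ e) (htop : ∃ i, (x i).coeff e ≠ 0)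
    (huni : ∃ b : Fin 5 → L[X], ∑ i, b i * x i = 1)
    (hA : qf A x = 0) (hB : qf B x = 0) (hline : ¬ OnLine A B x)
    (hgen : ∀ D : Derivation K L L, (∀ i, dd D (x i) = 0) → D = 0) :
    Module.rank L (Derivation K L L) ≤ (e + 3 : ℕ) := by
  let m : Model K := ⟨fun k => B 4 k.castSucc + B k.castSucc 4,
    fun k l => if k = l then B k.castSucc k.castSucc
      else B k.castSucc l.castSucc + B l.castSucc k.castSucc⟩
  have qA : ∀ {S : Type} [CommRing S] [Algebra K S] (y : Fin 5 → S),
      qf A y = y 0 * y 3 - y 1 * y 2 := by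
    intro S _ _ y
    have i03 := congrArg (algebraMap K S) h03
    have i12 := congrArg (algebraMap K S) h12
    have i01 := congrArg (algebraMap K S) h01
    have i02 := congrArg (algebraMap K S) h02
    have i13 := congrArg (algebraMap K S) h13
    have i23 := congrArg (algebraMap K S) h23
    have i04 := congrArg (algebraMap K S) (h4 0)
    have i14 := congrArg (algebraMap K S) (h4 1)
    have i24 := congrArg (algebraMap K S) (h4 2)
    have i34 := congrArg (algebraMap K S) (h4 3)
    simp only [map_add, map_neg, map_one, map_zero] at i03 i12 i01 i02 i13 i23 i04 i14 i24 i34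
    simp only [qf, Fin.sum_univ_five, hA0, map_zero]
    linear_combination y 0 * y 3 * i03 + y 1 * y 2 * i12 + y 0 * y 1 * i01 + y 0 * y 2 * i02
      + y 1 * y 3 * i13 + y 2 * y 3 * i23 + y 0 * y 4 * i04 + y 1 * y 4 * i14 + y 2 * y 4 * i24
      + y 3 * y 4 * i34
  have qB : ∀ {S : Type} [CommRing S] [Algebra K S] (y : Fin 5 → S), qf B y = m.QB y := by
    intro S _ _ y
    simp only [qf, Fin.sum_univ_five, hB4, map_one, Model.QB, m]
    simp [Fin.ext_iff]
    ring
  have hsm : m.toBi.Smooth := by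
    intro u v r s w huv hrs hq hu hv hr hs' hw
    let y : Fin 5 → K := ![u * r, u * s, v * r, v * s, w]
    have hy : y ≠ 0 := by
      intro h
      have y0 := congrFun h 0
      have y1 := congrFun h 1
      have y2 := congrFun h 2
      have y3 := congrFun h 3
      simp [y] at y0 y1 y2 y3
      rcases huv with h1 | h1 <;> rcases hrs with h2 | h2 <;> simp_all
    have e1 : qf A y = 0 := by rw [qA]; simp [y]; ring
    have e2 : qf B y = 0 := by rw [qB, Model.QB_eq]; exact hq
    have p0 : ∀ i, gr B y i = ∑ j, (B i j + B j i) * y j := fun i => rfl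
    simp only [Fin.sum_univ_five] at p0
    have f4 : gr B y 4 = 0 := by
      rw [p0, ← hw]
      simp [y, m, Model.toBi, BiForm.qw, BiForm.e, BiForm.d, hB4, Fin.ext_iff]; ring
    have fr : gr B y 0 * u + gr B y 2 * v = 0 := by
      rw [p0, p0, ← hr]
      simp [y, m, Model.toBi, BiForm.qr, BiForm.e, BiForm.a, BiForm.f, hB4, Fin.ext_iff]; ring
    have fs : gr B y 1 * u + gr B y 3 * v = 0 := by
      rw [p0, p0, ← hs']
      simp [y, m, Model.toBi, BiForm.qs, BiForm.d, BiForm.b, BiForm.f, hB4, Fin.ext_iff]; ring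
    have fu : gr B y 0 * r + gr B y 1 * s = 0 := by
      rw [p0, p0, ← hu]
      simp [y, m, Model.toBi, BiForm.qu, hB4, Fin.ext_iff]; ring
    have fv : gr B y 2 * r + gr B y 3 * s = 0 := by
      rw [p0, p0, ← hv]
      simp [y, m, Model.toBi, BiForm.qv, hB4, Fin.ext_iff]; ring
    obtain ⟨α, g0, g2⟩ := proportional huv fr
    obtain ⟨β, g1, g3⟩ := proportional huv fs
    have hαβ : α * r + β * s = 0 := by
      rw [g0, g1] at fu
      rw [g2, g3] at fv
      rcases huv with h | h
      · apply mul_left_cancel₀ h; linear_combination -fv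
      · apply mul_left_cancel₀ h; linear_combination fu
    obtain ⟨c, rfl, rfl⟩ := proportional hrs hαβ
    refine one_ne_zero (hs y hy e1 e2 (-c) 1 fun i => ?_).2
    have pA : ∀ i, gr A y i = ∑ j, (A i j + A j i) * y j := fun i => rfl
    simp only [Fin.sum_univ_five] at pA
    have y0 : y 0 = u * r := rfl
    have y1 : y 1 = u * s := rfl
    have y2 : y 2 = v * r := rfl
    have y3 : y 3 = v * s := rfl
    have h40 := h4 0
    have h41 := h4 1
    have h42 := h4 2
    have h43 := h4 3
    fin_cases i
    · change -c * gr A y 0 + 1 * gr B y 0 = 0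
      rw [pA, g0, hA0, h03, h01, h02, h40, y3]; ring
    · change -c * gr A y 1 + 1 * gr B y 1 = 0
      rw [pA, g1, hA0, h12, add_comm (A 1 0), h01, h13, h41, y2]; ring
    · change -c * gr A y 2 + 1 * gr B y 2 = 0
      rw [pA, g2, hA0, add_comm (A 2 1), h12, add_comm (A 2 0), h02, h23, h42, y1]; ring
    · change -c * gr A y 3 + 1 * gr B y 3 = 0
      rw [pA, g3, hA0, add_comm (A 3 0), h03, add_comm (A 3 1), h13, add_comm (A 3 2), h23, h43,
        y0]
      ring
    · change -c * gr A y 4 + 1 * gr B y 4 = 0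
      rw [pA, f4, hA0, add_comm (A 4 0), h40, add_comm (A 4 1), h41, add_comm (A 4 2), h42,
        add_comm (A 4 3), h43]
      ring
  refine m.rank_le hsm x e hdeg htop huni (sub_eq_zero.1 (qA x ▸ hA)) (qB x ▸ hB) ?_ hgen
  rintro ⟨w₁, w₂, hw, hq, f, g, hx⟩
  refine hline ⟨w₁, w₂, hw, fun a b => ?_, f, g, hx⟩
  rw [qA, qB, (hq a b).2, sub_eq_zero]
  exact ⟨(hq a b).1, rfl⟩

/-- The hypotheses on a polynomial vector `x` carry over to its coordinate vector `y` with respect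
to another basis `b`. -/
theorem rank_pb {A B : Fin 5 → Fin 5 → K} (x : Fin 5 → L[X]) (e : ℕ)
    (hdeg : ∀ i, (x i).natDegree ≤ e) (htop : ∃ i, (x i).coeff e ≠ 0)
    (huni : ∃ b : Fin 5 → L[X], ∑ i, b i * x i = 1)
    (hA : qf A x = 0) (hB : qf B x = 0) (hline : ¬ OnLine A B x)
    (hgen : ∀ D : Derivation K L L, (∀ i, dd D (x i) = 0) → D = 0)
    {b : Fin 5 → Fin 5 → K} (hb : LinearIndependent K b) :
    ∃ y : Fin 5 → L[X], (∀ i, (y i).natDegree ≤ e) ∧ (∃ i, (y i).coeff e ≠ 0) ∧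
      (∃ b : Fin 5 → L[X], ∑ i, b i * y i = 1) ∧ qf (pb A b) y = 0 ∧ qf (pb B b) y = 0 ∧
      ¬ OnLine (pb A b) (pb B b) y ∧
      ∀ D : Derivation K L L, (∀ i, dd D (y i) = 0) → D = 0 := by
  have hz : ∀ j : Fin 5, ∃ z : Fin 5 → K, ∀ i, (Pi.single j 1 : Fin 5 → K) i = ∑ k, z k * b k i :=
    fun j => exists_comb hb _
  choose z hz using hz
  let i' := algebraMap K L[X]
  let y : Fin 5 → L[X] := fun k => ∑ j, x j * i' (z j k)
  have hxy : x = fun i => ∑ k, y k * i' (b k i) := by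
    ext1 i
    simp only [y, Finset.sum_mul]
    rw [Finset.sum_comm]
    have : ∀ j, ∑ k, x j * i' (z j k) * i' (b k i) = x j * i' ((Pi.single j 1 : Fin 5 → K) i) := by
      intro j
      rw [hz, map_sum, Finset.mul_sum]
      exact Finset.sum_congr rfl fun k _ => by rw [map_mul]; ring
    rw [Finset.sum_congr rfl fun j _ => this j]
    simp [Pi.single_apply, apply_ite i', map_zero, map_one]
  refine ⟨y, fun k => ?_, ?_, ?_, ?_, ?_, ?_, fun D hD => hgen D fun i => ?_⟩
  · refine natDegree_sum_le_of_forall_le _ _ fun j _ => ?_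
    exact ((Lead.self (hdeg j)).mul (Lead.const K _)).le
  · by_contra hc
    push Not at hc
    obtain ⟨i, hi⟩ := htop
    apply hi
    rw [hxy, finsetSum_coeff]
    refine Finset.sum_eq_zero fun k _ => ?_
    have : i' (b k i) = C (algebraMap K L (b k i)) := rfl
    rw [this, coeff_mul_C, hc, zero_mul]
  · obtain ⟨c, hc⟩ := huni
    refine ⟨fun k => ∑ i, c i * i' (b k i), ?_⟩
    rw [← hc]
    conv_rhs => rw [hxy]
    simp only [Finset.sum_mul, Finset.mul_sum]
    rw [Finset.sum_comm]
    exact Finset.sum_congr rfl fun i _ => Finset.sum_congr rfl fun k _ => by ring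
  · rw [← qf_pb]; exact hxy ▸ hA
  · rw [← qf_pb]; exact hxy ▸ hB
  · rintro ⟨w₁, w₂, hw, hq, f, g, hy⟩
    refine hline ⟨fun i => ∑ k, w₁ k * b k i, fun i => ∑ k, w₂ k * b k i, ?_, fun s t => ?_, f, g,
      fun i => ?_⟩
    · rw [LinearIndependent.pair_iff] at hw ⊢
      intro s t hst
      apply hw
      apply comb_ne_zero hb
      rw [← hst]
      ext i
      simp only [Pi.add_apply, Pi.smul_apply, smul_eq_mul, Finset.mul_sum,
        ← Finset.sum_add_distrib]
      exact Finset.sum_congr rfl fun k _ => by ring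
    · have e1 : (fun i => s * (∑ k, w₁ k * b k i) + t * ∑ k, w₂ k * b k i)
          = fun i => ∑ k, (s * w₁ k + t * w₂ k) * algebraMap K K (b k i) := by
        ext i
        simp only [Finset.mul_sum, ← Finset.sum_add_distrib]
        exact Finset.sum_congr rfl fun k _ => by simp; ring
      rw [e1, qf_pb, qf_pb]
      exact hq s t
    · rw [hxy]
      simp only [map_sum, map_mul, Finset.sum_mul, ← Finset.sum_add_distrib]
      exact Finset.sum_congr rfl fun k _ => by rw [hy k]; ring
  · rw [hxy, map_sum]
    refine Finset.sum_eq_zero fun k _ => ?_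
    have : i' (b k i) = algebraMap K L[X] (b k i) := rfl
    rw [Derivation.leibniz, hD k, this, Derivation.map_algebraMap]
    simp

/-- The variety of parametrised rational curves of degree `e`, none of them a line, on a smooth
quartic del Pezzo surface has dimension at most `e + 3` at each of its points, in the form of a
bound on the derivations of a field generated by the coefficients of the curve. -/
theorem rank_le {A B : Fin 5 → Fin 5 → K} (hs : Sm A B) (x : Fin 5 → L[X]) (e : ℕ)
    (hdeg : ∀ i, (x i).natDegree ≤ e) (htop : ∃ i, (x i).coeff e ≠ 0)
    (huni : ∃ b : Fin 5 → L[X], ∑ i, b i * x i = 1)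
    (hA : qf A x = 0) (hB : qf B x = 0) (hline : ¬ OnLine A B x)
    (hgen : ∀ D : Derivation K L L, (∀ i, dd D (x i) = 0) → D = 0) :
    Module.rank L (Derivation K L L) ≤ (e + 3 : ℕ) := by
  obtain ⟨α, β, v, hαβ, hv0, hv, hgv⟩ := exists_singular A B
  obtain ⟨γ, δ, hd⟩ : ∃ γ δ : K, α * δ - β * γ ≠ 0 := by
    rcases hαβ with h | h
    · exact ⟨0, 1, by simpa using h⟩
    · exact ⟨1, 0, by simpa using h⟩
  have hs' := hs.pencil hd
  obtain ⟨b, hb, b1, b2, b3, b4, b5, b6, b7, b8, b9⟩ := exists_hyperbolic hs' v hv0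
    (by rw [qf_comb]; exact hv) (fun i => by rw [gr_comb]; exact hgv i)
  have hline' : ¬ OnLine (fun i j => α * A i j + β * B i j) (fun i j => γ * A i j + δ * B i j) x := by
    rintro ⟨w₁, w₂, hw, hq, h⟩
    refine hline ⟨w₁, w₂, hw, fun s t => ?_, h⟩
    obtain ⟨q1, q2⟩ := hq s t
    rw [qf_comb] at q1 q2
    simp only [Algebra.algebraMap_self, RingHom.id_apply] at q1 q2
    constructor
    · apply mul_left_cancel₀ hd; linear_combination δ * q1 - β * q2
    · apply mul_left_cancel₀ hd; linear_combination α * q2 - γ * q1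
  obtain ⟨y, y1, y2, y3, y4, y5, y6, y7⟩ := rank_pb x e hdeg htop huni
    (by rw [qf_comb, hA, hB]; ring) (by rw [qf_comb, hA, hB]; ring) hline' hgen hb
  refine rank_normal (hs'.pb hb) (fun i => ?_) ?_ ?_ ?_ ?_ ?_ ?_ (fun i => ?_) ?_ y e y1 y2 y3 y4
    y5 y6 y7
  · rw [pb_self, b2]
  · rw [pb_add, b4]
  · rw [pb_add, b5]
  · rw [pb_add, b6]
  · rw [pb_add, b7]
  · rw [pb_add, b8]
  · rw [pb_add, b9]
  · rw [pb_add, b3]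
  · rw [pb_self, b1]

end DP4

/-! ### Transcendence degree -/

namespace DP4
open Polynomial

open scoped IntermediateField.algebraAdjoinAdjoin in
/-- The transcendence degree of a finitely generated field extension is at most the dimension of
its space of derivations. -/
theorem trdeg_le_of_rank_der {K L : Type} [Field K] [Field L] [Algebra K L]
    [Algebra.EssFiniteType K L] (n : ℕ) (h : Module.rank L (Derivation K L L) ≤ n) :
    Algebra.trdeg K L ≤ n := by
  have hfin : Module.finrank L (Ω[L⁄K]) ≤ n := by
    have e1 := (KaehlerDifferential.linearMapEquivDerivation K L (M := L)).rank_eq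
    rw [← Subspace.dual_finrank_eq]
    refine Module.finrank_le_of_rank_le ?_
    have : Module.rank L (Module.Dual L (Ω[L⁄K])) = Module.rank L (Derivation K L L) := e1
    rw [this]; exact h
  -- choose elements whose differentials form a basis of `Ω[L⁄K]` and let `F` be the field they
  -- generate; then `Ω[L⁄F] = 0`, so `L` is unramified, hence separable algebraic, over `F`
  obtain ⟨b, hbt, hspan, hli⟩ :=
    exists_linearIndependent L (Set.range (KaehlerDifferential.D K L))
  rw [KaehlerDifferential.span_range_derivation] at hspan
  have hbc : Cardinal.mk b ≤ n := by
    refine hli.cardinal_le_rank.trans ?_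
    rw [← Module.finrank_eq_rank]
    exact_mod_cast hfin
  have hc : ∀ y : b, ∃ a : L, KaehlerDifferential.D K L a = y.1 := fun y => hbt y.2
  choose f hf using hc
  let s : Set L := Set.range f
  have hs : Cardinal.mk s ≤ n := Cardinal.mk_range_le.trans hbc
  let F := IntermediateField.adjoin K s
  have hsub : Subsingleton (Ω[L⁄F]) := by
    refine subsingleton_of_forall_eq 0 fun ω => ?_
    obtain ⟨η, rfl⟩ := KaehlerDifferential.map_surjective K F L ω
    have hη : η ∈ Submodule.span L b := hspan ▸ Submodule.mem_top
    refine Submodule.span_induction (p := fun η _ => KaehlerDifferential.map K F L L η = 0)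
      (fun y hy => ?_) (map_zero _) (fun x y _ _ hx hy => by rw [map_add, hx, hy, add_zero])
      (fun a x _ hx => by rw [map_smul, hx, smul_zero]) hη
    have hfy : KaehlerDifferential.D K L (f ⟨y, hy⟩) = y := hf ⟨y, hy⟩
    rw [← hfy, KaehlerDifferential.map_D]
    have : f ⟨y, hy⟩ ∈ F := IntermediateField.subset_adjoin K s ⟨_, rfl⟩
    exact (KaehlerDifferential.D F L).map_algebraMap (⟨_, this⟩ : F)
  have : Algebra.FormallyUnramified F L := ⟨hsub⟩
  have : Algebra.EssFiniteType F L := Algebra.EssFiniteType.of_comp K F L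
  have hsep : Algebra.IsSeparable F L := Algebra.FormallyUnramified.isSeparable F L
  have halg : Algebra.IsAlgebraic F L := inferInstance
  have : Algebra.IsAlgebraic (Algebra.adjoin K s) L := by
    exact (IsFractionRing.comap_isAlgebraic_iff (A := Algebra.adjoin K s)
      (K := IntermediateField.adjoin K s) (C := L)).2 halg
  exact (Algebra.IsAlgebraic.trdeg_le_cardinalMk K s).trans hs

variable {K L : Type} [Field K] [IsAlgClosed K] [Field L] [Algebra K L]

/-- The field generated by the coefficients of a curve. -/
abbrev coefField (K : Type) [Field K] {L : Type} [Field L] [Algebra K L] (x : Fin 5 → L[X]) :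
    IntermediateField K L :=
  IntermediateField.adjoin K (Set.range fun p : Fin 5 × ℕ => (x p.1).coeff p.2)

/-- The coefficients of a curve of degree `e` on a smooth quartic del Pezzo surface, other than a
line, generate a field of transcendence degree at most `e + 3`. -/
theorem trdeg_le {A B : Fin 5 → Fin 5 → K} (hs : Sm A B) (x : Fin 5 → L[X]) (e : ℕ)
    (hdeg : ∀ i, (x i).natDegree ≤ e) (htop : ∃ i, (x i).coeff e ≠ 0)
    (huni : ∃ b : Fin 5 → L[X], ∑ i, b i * x i = 1)
    (hA : qf A x = 0) (hB : qf B x = 0) (hline : ¬ OnLine A B x) :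
    Algebra.trdeg K (coefField K x) ≤ (e + 3 : ℕ) := by
  set L₀ := coefField K x with hL₀
  have hmem : ∀ i n, (x i).coeff n ∈ L₀ := fun i n =>
    IntermediateField.subset_adjoin K _ ⟨(i, n), rfl⟩
  let ι := algebraMap L₀ L
  have hι : Function.Injective ι := ι.injective
  have hmι : Function.Injective (Polynomial.map ι) := Polynomial.map_injective _ hι
  have hy : ∀ i, ∃ y : L₀[X], y.map ι = x i := fun i => by
    have : x i ∈ Polynomial.lifts ι := by
      rw [Polynomial.lifts_iff_coeff_lifts]
      exact fun n => ⟨⟨_, hmem i n⟩, rfl⟩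
    exact (Polynomial.mem_lifts _).1 this
  choose y hy using hy
  have hcoef : ∀ i n, ι ((y i).coeff n) = (x i).coeff n := fun i n => by
    rw [← hy, coeff_map]
  have hK : ∀ a : K, (algebraMap K L₀[X] a).map ι = algebraMap K L[X] a := fun a => by
    change (C (algebraMap K L₀ a)).map ι = C (algebraMap K L a)
    rw [Polynomial.map_C]; rfl
  have hq : ∀ c : Fin 5 → Fin 5 → K, (qf c y).map ι = qf c x := fun c => by
    simp only [qf, Polynomial.map_sum, Polynomial.map_mul, hy, hK]
  have : Algebra.EssFiniteType K L₀ := by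
    rw [IntermediateField.essFiniteType_iff]
    have hfin : (Set.range fun p : Fin 5 × ℕ => (x p.1).coeff p.2).Finite := by
      refine ((Set.finite_range fun p : Fin 5 × Fin (e + 1) => (x p.1).coeff p.2).union
        (Set.finite_singleton 0)).subset ?_
      rintro _ ⟨⟨i, n⟩, rfl⟩
      by_cases hn : n < e + 1
      · exact Or.inl ⟨(i, ⟨n, hn⟩), rfl⟩
      · exact Or.inr (coeff_eq_zero_of_natDegree_lt (by have := hdeg i; dsimp only; omega))
    exact IntermediateField.fg_adjoin_of_finite hfin
  refine trdeg_le_of_rank_der _ (rank_le hs y e (fun i => ?_) ?_ ?_ (hmι ?_) (hmι ?_) ?_ ?_)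
  · rw [← Polynomial.natDegree_map ι, hy]; exact hdeg i
  · obtain ⟨i, hi⟩ := htop
    exact ⟨i, fun h => hi (by rw [← hcoef, h, map_zero])⟩
  · obtain ⟨b, hb⟩ := huni
    have hy0 : y ≠ 0 := by
      rintro h
      have : ∀ i, x i = 0 := fun i => by rw [← hy, h]; simp
      simp [this] at hb
    obtain ⟨g, w, a, hg, hyg, ha⟩ := exists_unimodular y hy0
    have hu : IsUnit (g.map ι) := by
      refine IsUnit.of_mul_eq_one (∑ i, b i * (w i).map ι) ?_
      rw [Finset.mul_sum, ← hb]
      exact Finset.sum_congr rfl fun i _ => by rw [← hy, hyg, Polynomial.map_mul]; ring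
    have hu' : IsUnit g := by
      rw [Polynomial.isUnit_iff_degree_eq_zero] at hu ⊢
      rwa [Polynomial.degree_map] at hu
    obtain ⟨g', hg'⟩ := hu'.exists_right_inv
    refine ⟨fun i => a i * g', ?_⟩
    rw [← ha]
    exact Finset.sum_congr rfl fun i _ => by rw [hyg]; linear_combination a i * w i * hg'
  · rw [hq, hA, Polynomial.map_zero]
  · rw [hq, hB, Polynomial.map_zero]
  · rintro ⟨w₁, w₂, hw, h, f, g, hfg⟩
    refine hline ⟨w₁, w₂, hw, h, f.map ι, g.map ι, fun i => ?_⟩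
    rw [← hy, hfg, Polynomial.map_add, Polynomial.map_mul, Polynomial.map_mul, hK, hK]
  · intro D hD
    have key : ∀ a (h : a ∈ L₀), D ⟨a, h⟩ = 0 := by
      intro a h
      refine IntermediateField.adjoin_induction K (p := fun a h => D ⟨a, h⟩ = 0)
        ?_ ?_ ?_ ?_ ?_ h
      · rintro _ ⟨⟨i, n⟩, rfl⟩
        have := congrArg (fun p => p.coeff n) (hD i)
        simp only [dd_coeff, coeff_zero] at this
        rw [← this]
        congr 1
        exact Subtype.ext (hcoef i n).symm
      · intro a; exact D.map_algebraMap a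
      · intro a b ha hb h1 h2
        have := D.map_add ⟨a, ha⟩ ⟨b, hb⟩
        rw [h1, h2, add_zero] at this
        exact this
      · intro a ha h1
        have := D.leibniz_inv ⟨a, ha⟩
        rw [h1, smul_zero] at this
        exact this
      · intro a b ha hb h1 h2
        have := D.leibniz ⟨a, ha⟩ ⟨b, hb⟩
        rw [h1, h2, smul_zero, smul_zero, add_zero] at this
        exact this
    ext a
    simpa using key a.1 a.2

end DP4

/-! ### Cutting down by generic linear combinations -/

namespace DP4
open Polynomial

open scoped IntermediateField.algebraAdjoinAdjoin in
theorem trdeg_le_of_adjoin_eq_top {K L : Type} [Field K] [Field L] [Algebra K L] (T : Set L)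
    (h : IntermediateField.adjoin K T = ⊤) : Algebra.trdeg K L ≤ Cardinal.mk T := by
  have h1 : Algebra.IsAlgebraic (IntermediateField.adjoin K T) L := by
    refine ⟨fun a => ?_⟩
    have ha : a ∈ IntermediateField.adjoin K T := h ▸ IntermediateField.mem_top
    exact isAlgebraic_algebraMap (⟨a, ha⟩ : IntermediateField.adjoin K T)
  have : Algebra.IsAlgebraic (Algebra.adjoin K T) L :=
    (IsFractionRing.comap_isAlgebraic_iff (A := Algebra.adjoin K T)
      (K := IntermediateField.adjoin K T) (C := L)).2 h1
  exact Algebra.IsAlgebraic.trdeg_le_cardinalMk K T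

/-- Generic linear combinations of the `X s ^ q - X s` cut a variety of dimension at most `|ι|`
down to points. Here `X` is the generic point of a component of the intersection, over the field
`K'` generated by the generic coefficients `c`, and `L` is the function field of the component. -/
theorem field_isAlgebraic {K K' L ι κ : Type} [Field K] [Field K'] [Field L] [Algebra K K']
    [Algebra K L] [Algebra K' L] [IsScalarTower K K' L] [Fintype ι] [Fintype κ]
    (q : ℕ) (hq : 2 ≤ q) (c : ι → κ → K') (hc : AlgebraicIndependent K fun p : ι × κ => c p.1 p.2)
    (L₀ : IntermediateField K L) (hL₀ : Algebra.trdeg K L₀ ≤ (Fintype.card ι : ℕ))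
    (X : ι ⊕ κ → L) (hX : ∀ s, X s ∈ L₀)
    (hgen : ∀ F : IntermediateField K L, (∀ j i, algebraMap K' L (c j i) ∈ F) →
      (∀ s, X s ∈ F) → F = ⊤)
    (heq : ∀ j, (X (.inl j) ^ q - X (.inl j))
      + ∑ i, algebraMap K' L (c j i) * (X (.inr i) ^ q - X (.inr i)) = 0) (s : ι ⊕ κ) :
    IsAlgebraic K' (X s) := by
  classical
  -- if all `X (inr i)` are fixed by the `q`-th power map, then so are all `X s` by the equations
  by_cases h0 : ∀ i, X (.inr i) ^ q - X (.inr i) = 0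
  · have hs : X s ^ q - X s = 0 := by
      rcases s with j | i
      · have := heq j
        rw [Finset.sum_eq_zero fun i _ => by rw [h0 i, mul_zero], add_zero] at this
        exact this
      · exact h0 i
    refine ⟨Polynomial.X ^ q - Polynomial.X, ?_, by simpa using hs⟩
    exact FiniteField.X_pow_card_sub_X_ne_zero K' hq
  · push Not at h0
    obtain ⟨i₀, hi₀⟩ := h0
    -- otherwise the equations express each `c j i₀` rationally in the other coefficients and in
    -- `X`, so that `trdeg K L ≤ |ι| + |ι| (|κ| - 1) = trdeg K (K')`
    let T : Set L := Set.range fun p : ι × {i : κ // i ≠ i₀} => algebraMap K' L (c p.1 p.2)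
    have hT : Cardinal.mk T ≤ (Fintype.card ι * (Fintype.card κ - 1) : ℕ) := by
      refine Cardinal.mk_range_le.trans ?_
      rw [Cardinal.mk_fintype, Fintype.card_prod, Fintype.card_subtype_compl,
        Fintype.card_subtype_eq]
    have htop : IntermediateField.adjoin L₀ T = ⊤ := by
      have hX' : ∀ s, X s ∈ IntermediateField.adjoin L₀ T := fun s =>
        (IntermediateField.adjoin L₀ T).algebraMap_mem ⟨X s, hX s⟩
      have hc' : ∀ j i, i ≠ i₀ → algebraMap K' L (c j i) ∈ IntermediateField.adjoin L₀ T :=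
        fun j i hi => IntermediateField.subset_adjoin L₀ T ⟨(j, ⟨i, hi⟩), rfl⟩
      have hy : ∀ s, X s ^ q - X s ∈ IntermediateField.adjoin L₀ T := fun s =>
        sub_mem (pow_mem (hX' s) q) (hX' s)
      have := hgen ((IntermediateField.adjoin L₀ T).restrictScalars K) (fun j i => ?_) hX'
      · rw [← IntermediateField.restrictScalars_eq_top_iff (K := K)]
        exact this
      · by_cases hi : i = i₀
        · subst hi
          rw [IntermediateField.mem_restrictScalars]
          have e1 : algebraMap K' L (c j i) = -((X (.inl j) ^ q - X (.inl j)) +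
              ∑ i' ∈ Finset.univ.erase i, algebraMap K' L (c j i') *
                (X (.inr i') ^ q - X (.inr i'))) / (X (.inr i) ^ q - X (.inr i)) := by
            rw [eq_div_iff hi₀]
            have := heq j
            rw [← Finset.add_sum_erase _ _ (Finset.mem_univ i)] at this
            linear_combination this
          rw [e1]
          refine div_mem (neg_mem (add_mem (hy _) (sum_mem fun i' hi' => ?_))) (hy _)
          exact mul_mem (hc' j i' (Finset.ne_of_mem_erase hi')) (hy _)
        · exact hc' j i hi
    have h1 : Algebra.trdeg L₀ L ≤ (Fintype.card ι * (Fintype.card κ - 1) : ℕ) :=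
      (trdeg_le_of_adjoin_eq_top T htop).trans hT
    have h2 : Algebra.trdeg K L ≤ (Fintype.card ι * Fintype.card κ : ℕ) := by
      rw [← trdeg_add_eq K L₀ (A := L)]
      refine (add_le_add hL₀ h1).trans ?_
      have hκ : 0 < Fintype.card κ := Fintype.card_pos_iff.2 ⟨i₀⟩
      obtain ⟨k, hk⟩ := Nat.exists_eq_add_of_lt hκ
      rw [hk]
      norm_cast
      apply le_of_eq
      simp; ring
    have h3 : ((Fintype.card ι * Fintype.card κ : ℕ) : Cardinal) ≤ Algebra.trdeg K K' := by
      have := hc.cardinalMk_le_trdeg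
      rwa [Cardinal.mk_fintype, Fintype.card_prod] at this
    have h4 : Algebra.trdeg K' L = 0 := by
      have h5 := trdeg_add_eq K K' (A := L)
      have h6 : Algebra.trdeg K L < Cardinal.aleph0 := h2.trans_lt Cardinal.natCast_lt_aleph0
      have h7 : Algebra.trdeg K L + Algebra.trdeg K' L ≤ Algebra.trdeg K L + 0 := by
        rw [add_zero]
        calc _ ≤ Algebra.trdeg K K' + Algebra.trdeg K' L := by gcongr; exact h2.trans h3
          _ = _ := h5
      exact le_antisymm ((Cardinal.add_le_add_iff_of_lt_aleph0 h6).1 (by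
        rwa [add_comm, add_comm (0 : Cardinal)])) (zero_le)
    have : Algebra.IsAlgebraic K' L := by
      exact trdeg_eq_zero_iff.mp h4
    exact Algebra.IsAlgebraic.isAlgebraic _

end DP4

/-! ### Weighted order of vanishing and isolated zeros -/

namespace DP4
section Bezout
open MvPolynomial

variable {k σ : Type} [Field k] [Fintype σ]

theorem wt_one (α : σ →₀ ℕ) : Finsupp.weight (1 : σ → ℕ) α = α.degree := by
  rw [Finsupp.degree_eq_weight_one]; rfl

/-- Translation of the origin to the point `P`. -/
noncomputable def tr (P : σ → k) : MvPolynomial σ k →ₐ[k] MvPolynomial σ k :=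
  aeval fun i => X i + C (P i)

theorem tr_neg (P : σ → k) (f : MvPolynomial σ k) : tr P (tr (-P) f) = f := by
  have : (tr P).comp (tr (-P)) = AlgHom.id k _ := by
    ext i : 1
    simp [tr, algebraMap_eq]
  exact DFunLike.congr_fun this f

theorem totalDegree_sum_mono {ι : Type} (s : Finset ι) (f : ι → MvPolynomial σ k) (n : ℕ)
    (h : ∀ i ∈ s, (f i).totalDegree ≤ n) : (∑ i ∈ s, f i).totalDegree ≤ n :=
  totalDegree_finsetSum_le h

theorem totalDegree_tr_le (P : σ → k) (f : MvPolynomial σ k) :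
    (tr P f).totalDegree ≤ f.totalDegree := by
  classical
  rw [tr, aeval_def, eval₂_eq]
  refine totalDegree_sum_mono _ _ _ fun α hα => ?_
  refine (totalDegree_mul _ _).trans ?_
  rw [algebraMap_eq, totalDegree_C, zero_add]
  refine (totalDegree_finsetProd _ _).trans ?_
  refine le_trans ?_ (le_totalDegree hα)
  rw [Finsupp.sum]
  refine Finset.sum_le_sum fun i _ => ?_
  refine (totalDegree_pow _ _).trans ?_
  have : (X i + C (P i) : MvPolynomial σ k).totalDegree ≤ 1 := by
    refine (totalDegree_add _ _).trans ?_
    simp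
  nlinarith

/-- The ideal of polynomials all of whose monomials at `P` have `d`-weight at least `n`. -/
noncomputable def wtI (d : σ → ℕ) (P : σ → k) (n : ℕ) : Ideal (MvPolynomial σ k) where
  carrier := {f | ∀ α, Finsupp.weight d α < n → coeff α (tr P f) = 0}
  add_mem' := fun {f g} hf hg α hα => by rw [map_add, coeff_add, hf α hα, hg α hα, add_zero]
  zero_mem' := fun α _ => by simp
  smul_mem' := fun f g hg α hα => by
    classical
    rw [smul_eq_mul, map_mul, coeff_mul]
    refine Finset.sum_eq_zero fun p hp => ?_
    rw [hg p.2, mul_zero]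
    rw [← Finset.HasAntidiagonal.mem_antidiagonal.1 hp, map_add] at hα
    omega

theorem mem_wtI {d : σ → ℕ} {P : σ → k} {n : ℕ} {f : MvPolynomial σ k} :
    f ∈ wtI d P n ↔ ∀ α, Finsupp.weight d α < n → coeff α (tr P f) = 0 := Iff.rfl

theorem wtI_mul {d : σ → ℕ} {P : σ → k} {m n : ℕ} {f g : MvPolynomial σ k}
    (hf : f ∈ wtI d P m) (hg : g ∈ wtI d P n) : f * g ∈ wtI d P (m + n) := fun α hα => by
  classical
  rw [map_mul, coeff_mul]
  refine Finset.sum_eq_zero fun p hp => ?_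
  rw [← Finset.HasAntidiagonal.mem_antidiagonal.1 hp, map_add] at hα
  rcases lt_or_ge (Finsupp.weight d p.1) m with h | h
  · rw [hf _ h, zero_mul]
  · rw [hg, mul_zero]; omega

theorem wtI_mono {d : σ → ℕ} {P : σ → k} {m n : ℕ} (h : m ≤ n) : wtI d P n ≤ wtI d P m :=
  fun _ hf α hα => hf α (hα.trans_le h)

theorem wtI_zero {d : σ → ℕ} {P : σ → k} (f : MvPolynomial σ k) : f ∈ wtI d P 0 :=
  fun α hα => absurd hα (Nat.not_lt_zero _)

theorem wtI_pow {d : σ → ℕ} {P : σ → k} {f : MvPolynomial σ k} (hf : f ∈ wtI d P 1) (n : ℕ) :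
    f ^ n ∈ wtI d P n := by
  induction n with
  | zero => exact wtI_zero _
  | succ n ih => rw [pow_succ]; exact wtI_mul ih hf

theorem wtI_one_le {d : σ → ℕ} (hd : ∀ i, 0 < d i) (P : σ → k) (n : ℕ) :
    wtI (1 : σ → ℕ) P n ≤ wtI d P n := fun f hf α hα => by
  refine hf α (lt_of_le_of_lt ?_ hα)
  rw [Finsupp.weight_apply, Finsupp.weight_apply]
  refine Finsupp.sum_le_sum fun i _ => ?_
  have := hd i
  simp only [Pi.one_apply, smul_eq_mul]
  nlinarith

theorem coeff_zero_tr (P : σ → k) (f : MvPolynomial σ k) : coeff 0 (tr P f) = eval P f := by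
  have : (constantCoeff : MvPolynomial σ k →+* k).comp (tr P).toRingHom = eval P := by
    ext i <;> simp [tr]
  exact DFunLike.congr_fun this f

theorem mem_wtI_one {P : σ → k} {f : MvPolynomial σ k} (h : eval P f = 0) :
    f ∈ wtI (1 : σ → ℕ) P 1 := fun α hα => by
  have : α = 0 := by
    rw [wt_one, Nat.lt_one_iff] at hα
    exact (Finsupp.degree_eq_zero_iff α).1 hα
  rw [this, coeff_zero_tr, h]

theorem isCoprime_wtI {P R : σ → k} (h : P ≠ R) (n : ℕ) :
    IsCoprime (wtI (1 : σ → ℕ) P n) (wtI (1 : σ → ℕ) R n) := by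
  obtain ⟨i, hi⟩ := Function.ne_iff.1 h
  have h1 : IsCoprime (X i - C (P i) : MvPolynomial σ k) (X i - C (R i)) := by
    refine ⟨C ((R i - P i)⁻¹), -C ((R i - P i)⁻¹), ?_⟩
    have : C ((R i - P i)⁻¹) * C (R i - P i) = (1 : MvPolynomial σ k) := by
      rw [← C_mul, inv_mul_cancel₀ (sub_ne_zero.2 hi.symm), C_1]
    rw [C_sub] at this
    linear_combination this
  obtain ⟨a, b, hab⟩ := (h1.pow (m := n) (n := n))
  rw [Ideal.isCoprime_iff_exists]
  exact ⟨_, Ideal.mul_mem_left _ a (wtI_pow (mem_wtI_one (by simp)) n),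
    _, Ideal.mul_mem_left _ b (wtI_pow (mem_wtI_one (by simp)) n), hab⟩

/-- Jets at finitely many points can be prescribed independently. -/
theorem exists_interp (S : Finset (σ → k)) (n : ℕ) (f : S → MvPolynomial σ k) :
    ∃ r, ∀ P : S, r - f P ∈ wtI (1 : σ → ℕ) P.1 n :=
  Ideal.exists_forall_sub_mem_ideal (I := fun P : S => wtI (1 : σ → ℕ) P.1 n)
    (fun P R hPR => isCoprime_wtI (fun h => hPR (Subtype.ext h)) n) f

/-- Taylor polynomials at `P`. -/
theorem exists_trunc (P : σ → k) (n : ℕ) (f : MvPolynomial σ k) :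
    ∃ g : MvPolynomial σ k, g.totalDegree ≤ n ∧ f - g ∈ wtI (1 : σ → ℕ) P n := by
  classical
  let T : MvPolynomial σ k :=
    ∑ α ∈ (tr P f).support with α.degree < n, monomial α (coeff α (tr P f))
  have hT : ∀ α : σ →₀ ℕ, α.degree < n → coeff α T = coeff α (tr P f) := by
    intro α hα
    simp only [T, coeff_sum, coeff_monomial, Finset.sum_ite_eq', Finset.mem_filter,
      mem_support_iff, hα, and_true]
    split_ifs with h
    · rfl
    · exact (not_ne_iff.1 h).symm
  refine ⟨tr (-P) T, (totalDegree_tr_le _ _).trans ?_, fun α hα => ?_⟩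
  · refine totalDegree_sum_mono _ _ _ fun α hα => (totalDegree_monomial_le _ _).trans ?_
    exact (Finset.mem_filter.1 hα).2.le
  · rw [map_sub, tr_neg, coeff_sub, hT α (by rwa [wt_one] at hα), sub_self]

/-- Jets of order `n` at the points of `S` are realised by polynomials of bounded degree. -/
theorem exists_low (S : Finset (σ → k)) (n : ℕ) :
    ∃ δ : ℕ, ∀ f : MvPolynomial σ k, ∃ w : MvPolynomial σ k, w.totalDegree ≤ δ ∧
      ∀ P ∈ S, f - w ∈ wtI (1 : σ → ℕ) P n := by
  classical
  choose u hu using fun P : S => exists_interp S n (Pi.single P 1)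
  refine ⟨n + Finset.univ.sup fun P : S => (u P).totalDegree, fun f => ?_⟩
  choose g hg using fun P : S => exists_trunc P.1 n f
  refine ⟨∑ P, g P * u P, totalDegree_sum_mono _ _ _ fun P _ => ?_, fun P hP => ?_⟩
  · refine (totalDegree_mul _ _).trans (add_le_add (hg P).1 ?_)
    exact Finset.le_sup (f := fun P : S => (u P).totalDegree) (Finset.mem_univ P)
  · have e : f - ∑ R, g R * u R = (f - g ⟨P, hP⟩)
        - ∑ R, g R * (u R - (Pi.single R 1 : S → MvPolynomial σ k) ⟨P, hP⟩) := by
      simp only [mul_sub, Finset.sum_sub_distrib]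
      have : ∑ R : S, g R * (Pi.single R 1 : S → MvPolynomial σ k) ⟨P, hP⟩ = g ⟨P, hP⟩ := by
        simp [Pi.single_apply]
      rw [this]; ring
    rw [e]
    refine sub_mem (hg ⟨P, hP⟩).2 (sum_mem fun R _ => Ideal.mul_mem_left _ _ ?_)
    exact hu R ⟨P, hP⟩

/-- `P` is an isolated point of the zero locus of `J`, or not a zero of `J` at all: some `h` with
`h(P) ≠ 0` multiplies every polynomial vanishing to order `n` at `P` into `J`. -/
def Isol (J : Ideal (MvPolynomial σ k)) (P : σ → k) : Prop :=
  ∃ (h : MvPolynomial σ k) (n : ℕ), eval P h ≠ 0 ∧ ∀ f ∈ wtI (1 : σ → ℕ) P n, h * f ∈ J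

/-- Near its isolated zeros the ideal `J` contains all functions vanishing to sufficiently high
order `m`: such a function agrees with an element of `J` to any order `n` at the points of `S`. -/
theorem exists_mem_of_isol {J : Ideal (MvPolynomial σ k)} (S : Finset (σ → k)) (m : ℕ)
    (hS : ∀ P ∈ S, ∃ h : MvPolynomial σ k, eval P h ≠ 0 ∧
      ∀ f ∈ wtI (1 : σ → ℕ) P m, h * f ∈ J) (n : ℕ) (f : MvPolynomial σ k)
    (hf : ∀ P ∈ S, f ∈ wtI (1 : σ → ℕ) P m) :
    ∃ g ∈ J, ∀ P ∈ S, f - g ∈ wtI (1 : σ → ℕ) P n := by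
  classical
  have h1 : ∀ P : S, ∃ g ∈ J, f - g ∈ wtI (1 : σ → ℕ) P.1 n := by
    rintro ⟨P, hP⟩
    obtain ⟨h, h0, hh⟩ := hS P hP
    let z : MvPolynomial σ k := 1 - C ((eval P h)⁻¹) * h
    have hz : z ∈ wtI (1 : σ → ℕ) P 1 := mem_wtI_one (by simp [z, h0])
    refine ⟨f - z ^ n * f, ?_, ?_⟩
    · have e : f - z ^ n * f = (∑ i ∈ Finset.range n, z ^ i) * C ((eval P h)⁻¹) * (h * f) := by
        have := geom_sum_mul_neg z n
        simp only [z] at this ⊢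
        linear_combination (-f) * this
      rw [e]
      exact Ideal.mul_mem_left _ _ (hh f (hf P hP))
    · rw [sub_sub_cancel]
      exact Ideal.mul_mem_right _ _ (wtI_pow hz n)
  choose g hgJ hg using h1
  choose u hu using fun P : S => exists_interp S n (Pi.single P 1)
  refine ⟨∑ P, g P * u P, sum_mem fun P _ => Ideal.mul_mem_right _ _ (hgJ P), fun P hP => ?_⟩
  have e : f - ∑ R, g R * u R = (f - g ⟨P, hP⟩)
      - ∑ R, g R * (u R - (Pi.single R 1 : S → MvPolynomial σ k) ⟨P, hP⟩) := by
    simp only [mul_sub, Finset.sum_sub_distrib]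
    have : ∑ R : S, g R * (Pi.single R 1 : S → MvPolynomial σ k) ⟨P, hP⟩ = g ⟨P, hP⟩ := by
      simp [Pi.single_apply]
    rw [this]; ring
  rw [e]
  exact sub_mem (hg ⟨P, hP⟩) (sum_mem fun R _ => Ideal.mul_mem_left _ _ (hu R ⟨P, hP⟩))

/-- Every polynomial agrees to weight `n` at the points of `S` with one of degree less than `n +
δ`, where `δ` does not depend on `n`. -/
theorem exists_reduce {d : σ → ℕ} (hd : ∀ i, 0 < d i) (F : σ → MvPolynomial σ k)
    (hF : ∀ i, (F i).totalDegree ≤ d i) (S : Finset (σ → k))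
    (hw : ∀ P ∈ S, ∀ i, F i ∈ wtI d P (d i))
    (hS : ∀ P ∈ S, Isol (Ideal.span (Set.range F)) P) :
    ∃ δ : ℕ, ∀ (n : ℕ) (f : MvPolynomial σ k), ∃ g : MvPolynomial σ k,
      g.totalDegree < n + δ ∧ ∀ P ∈ S, f - g ∈ wtI d P n := by
  classical
  choose! h m hh hm using hS
  obtain ⟨δ, hδ⟩ := exists_low S (S.sup m)
  refine ⟨δ + 1, fun n => ?_⟩
  -- `G` is a product of the `F i`, with degree at most `a` and weight at least `a`; replace `f` by
  -- a polynomial of degree at most `δ` plus a combination of the `F i`, and descend on `n - a`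
  have key : ∀ j a (G : MvPolynomial σ k), n ≤ a + j → G.totalDegree ≤ a →
      (∀ P ∈ S, G ∈ wtI d P a) → ∀ f : MvPolynomial σ k, ∃ g : MvPolynomial σ k,
        g.totalDegree < n + (δ + 1) ∧ ∀ P ∈ S, G * f - g ∈ wtI d P n := by
    intro j
    induction j with
    | zero =>
      intro a G hn hG hGw f
      refine ⟨0, by simp, fun P hP => ?_⟩
      rw [sub_zero]
      exact Ideal.mul_mem_right _ _ (wtI_mono hn (hGw P hP))
    | succ j ih =>
      intro a G hn hG hGw f
      by_cases han : n ≤ a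
      · refine ⟨0, by simp, fun P hP => ?_⟩
        rw [sub_zero]
        exact Ideal.mul_mem_right _ _ (wtI_mono han (hGw P hP))
      obtain ⟨w, hwδ, hw'⟩ := hδ f
      obtain ⟨z, hzJ, hz⟩ := exists_mem_of_isol (J := Ideal.span (Set.range F)) S (S.sup m)
        (fun P hP => ⟨h P, hh P hP, fun f hf =>
          hm P hP f (wtI_mono (Finset.le_sup (f := m) hP) hf)⟩) n (f - w) hw'
      obtain ⟨c, rfl⟩ := (Ideal.mem_span_range_iff_exists_fun).1 hzJ
      choose g hg hg' using fun i => ih (a + d i) (G * F i) (by have := hd i; omega)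
        ((totalDegree_mul _ _).trans (add_le_add hG (hF i)))
        (fun P hP => wtI_mul (hGw P hP) (hw P hP i)) (c i)
      refine ⟨G * w + ∑ i, g i, ?_, fun P hP => ?_⟩
      · rw [← add_assoc, Nat.lt_succ_iff]
        refine (totalDegree_add _ _).trans (max_le ?_ ?_)
        · refine (totalDegree_mul _ _).trans ?_
          omega
        · exact totalDegree_sum_mono _ _ _ fun i _ => by have := hg i; omega
      · have e : G * f - (G * w + ∑ i, g i) = G * (f - w - ∑ i, c i * F i)
            + ∑ i, (G * F i * c i - g i) := by
          rw [Finset.sum_sub_distrib]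
          have : ∑ i, G * F i * c i = G * ∑ i, c i * F i := by
            rw [Finset.mul_sum]; exact Finset.sum_congr rfl fun i _ => by ring
          rw [this]; ring
        rw [e]
        refine add_mem (Ideal.mul_mem_left _ _ ?_) (sum_mem fun i _ => hg' i P hP)
        exact wtI_one_le hd P n (hz P hP)
  intro f
  obtain ⟨g, hg⟩ := key n 0 1 (by omega) (by simp) (fun P _ => wtI_zero _) f
  exact ⟨g, by simpa using hg⟩

end Bezout
end DP4

/-! ### The weighted Bézout inequality -/

namespace DP4
section Bezout
open MvPolynomial

variable {k σ : Type} [Field k] [Fintype σ]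

/-- Exponent vectors of `d`-weight less than `n`. -/
abbrev Low (d : σ → ℕ) (n : ℕ) : Type := {α : σ →₀ ℕ // Finsupp.weight d α < n}

theorem apply_lt_of_weight_lt {d : σ → ℕ} (hd : ∀ i, 0 < d i) {n : ℕ} (α : Low d n) (i : σ) :
    α.1 i < n := by
  refine lt_of_le_of_lt ?_ α.2
  rw [Finsupp.weight_apply, Finsupp.sum_fintype _ _ (by simp)]
  refine le_trans ?_ (Finset.single_le_sum (f := fun i => α.1 i • d i) (fun _ _ => Nat.zero_le _)
    (Finset.mem_univ i))
  have := hd i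
  simp only [smul_eq_mul]
  nlinarith

theorem low_inj {d : σ → ℕ} (hd : ∀ i, 0 < d i) (n : ℕ) : Function.Injective
    (fun (α : Low d n) (i : σ) => (⟨α.1 i, apply_lt_of_weight_lt hd α i⟩ : Fin n)) := by
  intro α β h
  ext i
  simpa using congr_fun h i

theorem low_finite {d : σ → ℕ} (hd : ∀ i, 0 < d i) (n : ℕ) : Finite (Low d n) :=
  Finite.of_injective _ (low_inj hd n)

theorem low_card_le {d : σ → ℕ} (hd : ∀ i, 0 < d i) (n : ℕ) :
    Nat.card (Low d n) ≤ n ^ Fintype.card σ := by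
  classical
  refine (Nat.card_le_card_of_injective _ (low_inj hd n)).trans ?_
  simp

/-- Dividing with remainder by `d` bounds the number of unweighted exponents by weighted ones. -/
theorem low_one_card_le {d : σ → ℕ} (hd : ∀ i, 0 < d i) (n : ℕ) :
    Nat.card (Low (1 : σ → ℕ) n) ≤ (∏ i, d i) * Nat.card (Low d n) := by
  classical
  have := low_finite hd n
  have h : ∀ α : Low (1 : σ → ℕ) n,
      Finsupp.weight d (Finsupp.equivFunOnFinite.symm fun i => α.1 i / d i) < n := by
    intro α
    refine lt_of_le_of_lt ?_ α.2
    rw [Finsupp.weight_apply, Finsupp.sum_fintype _ _ (by simp), Finsupp.weight_apply,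
      Finsupp.sum_fintype _ _ (by simp)]
    refine Finset.sum_le_sum fun i _ => ?_
    simpa using Nat.div_mul_le_self (α.1 i) (d i)
  have := Nat.card_le_card_of_injective
    (fun α : Low (1 : σ → ℕ) n => ((fun i => ⟨α.1 i % d i, Nat.mod_lt _ (hd i)⟩, ⟨_, h α⟩) :
      (∀ i, Fin (d i)) × Low d n)) (by
    intro α β hαβ
    simp only [Prod.mk.injEq, Subtype.mk.injEq] at hαβ
    ext i
    have h1 := congr_fun hαβ.1 i
    have h2 := DFunLike.congr_fun hαβ.2 i
    simp only [Fin.mk.injEq] at h1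
    simp only [Finsupp.equivFunOnFinite_symm_apply_apply] at h2
    rw [← Nat.div_add_mod (α.1 i) (d i), ← Nat.div_add_mod (β.1 i) (d i), h1, h2])
  rw [Nat.card_prod, Nat.card_pi] at this
  simpa using this

/-- Weighted jets at the points of `S` are realised by polynomials of degree less than `n + δ`;
compare the dimensions. -/
theorem card_mul_low_le {d : σ → ℕ} (hd : ∀ i, 0 < d i) (F : σ → MvPolynomial σ k)
    (hF : ∀ i, (F i).totalDegree ≤ d i) (S : Finset (σ → k))
    (hw : ∀ P ∈ S, ∀ i, F i ∈ wtI d P (d i))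
    (hS : ∀ P ∈ S, Isol (Ideal.span (Set.range F)) P) :
    ∃ δ : ℕ, ∀ n : ℕ, S.card * Nat.card (Low d n) ≤ Nat.card (Low (1 : σ → ℕ) (n + δ)) := by
  classical
  obtain ⟨δ, hδ⟩ := exists_reduce hd F hF S hw hS
  refine ⟨δ, fun n => ?_⟩
  have := low_finite hd n
  have := low_finite (d := (1 : σ → ℕ)) (fun _ => one_pos) (n + δ)
  have := Fintype.ofFinite (Low d n)
  have := Fintype.ofFinite (Low (1 : σ → ℕ) (n + δ))
  let Φ : (Low (1 : σ → ℕ) (n + δ) → k) →ₗ[k] (S × Low d n → k) :=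
    LinearMap.pi fun p => (lcoeff k p.2.1) ∘ₗ (tr p.1.1).toLinearMap ∘ₗ
      (∑ α : Low (1 : σ → ℕ) (n + δ), (monomial α.1) ∘ₗ LinearMap.proj α)
  have hΦ : Function.Surjective Φ := by
    intro y
    obtain ⟨r, hr⟩ := exists_interp S n fun P =>
      tr (-P.1) (∑ α : Low d n, monomial α.1 (y (P, α)))
    obtain ⟨g, hgd, hg⟩ := hδ n r
    refine ⟨fun α => coeff α.1 g, funext fun p => ?_⟩
    have e : ∑ α : Low (1 : σ → ℕ) (n + δ), monomial α.1 (coeff α.1 g) = g := by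
      ext β
      simp only [coeff_sum, coeff_monomial]
      by_cases hβ : Finsupp.weight (1 : σ → ℕ) β < n + δ
      · rw [Finset.sum_eq_single ⟨β, hβ⟩]
        · simp
        · intro α _ hα
          rw [if_neg fun h => hα (Subtype.ext h)]
        · simp
      · rw [Finset.sum_eq_zero fun α _ => if_neg fun h => hβ (by rw [← h]; exact α.2)]
        symm
        refine coeff_eq_zero_of_totalDegree_lt ?_
        rw [wt_one] at hβ
        have : β.degree = ∑ i ∈ β.support, β i := rfl
        omega
    obtain ⟨⟨P, hP⟩, α⟩ := p
    simp only [Φ, LinearMap.pi_apply, LinearMap.comp_apply, LinearMap.sum_apply,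
      LinearMap.proj_apply, e, AlgHom.toLinearMap_apply, lcoeff_apply]
    have h1 := hg P hP α.1 α.2
    have h2 := wtI_one_le hd P n (hr ⟨P, hP⟩) α.1 α.2
    rw [map_sub, coeff_sub, sub_eq_zero] at h1 h2
    rw [← h1, h2, tr_neg, coeff_sum, Finset.sum_eq_single α]
    · simp
    · intro β _ hβ
      rw [coeff_monomial, if_neg fun h => hβ (Subtype.ext h)]
    · simp
  have h3 := Φ.finrank_range_le
  rw [LinearMap.range_eq_top.2 hΦ, finrank_top, Module.finrank_fintype_fun_eq_card,
    Module.finrank_fintype_fun_eq_card, Fintype.card_prod, Fintype.card_coe] at h3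
  rwa [Nat.card_eq_fintype_card, Nat.card_eq_fintype_card]

/-- A weighted Bézout inequality for isolated common zeros: `|S|` is at most `∏ d i` if `F i` has
degree at most `d i` and `d`-weight at least `d i` at every point of `S`. -/
theorem card_le_prod {d : σ → ℕ} (hd : ∀ i, 0 < d i) (F : σ → MvPolynomial σ k)
    (hF : ∀ i, (F i).totalDegree ≤ d i) (S : Finset (σ → k))
    (hw : ∀ P ∈ S, ∀ i, F i ∈ wtI d P (d i))
    (hS : ∀ P ∈ S, Isol (Ideal.span (Set.range F)) P) : S.card ≤ ∏ i, d i := by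
  classical
  obtain ⟨δ, hδ⟩ := card_mul_low_le hd F hF S hw hS
  by_contra! hlt
  set D := ∏ i, d i with hD
  have hDpos : 0 < D := Finset.prod_pos fun i _ => hd i
  let B : ℕ → ℕ := fun n => Nat.card (Low (1 : σ → ℕ) n)
  have h1 : ∀ n, (D + 1) * B n ≤ D * B (n + δ) := fun n => by
    calc (D + 1) * B n ≤ S.card * (D * Nat.card (Low d n)) :=
          Nat.mul_le_mul hlt (low_one_card_le hd n)
      _ = D * (S.card * Nat.card (Low d n)) := by ring
      _ ≤ _ := Nat.mul_le_mul le_rfl (hδ n)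
  have hB1 : 0 < B 1 := by
    have := low_finite (d := (1 : σ → ℕ)) (fun _ => one_pos) 1
    have : Nonempty (Low (1 : σ → ℕ) 1) := ⟨⟨0, by simp⟩⟩
    exact Nat.card_pos
  -- if `|S| > D`, then `B` grows by the factor `1 + 1 / D` in each step of length `δ`, which is
  -- impossible for a function of polynomial growth
  have h2 : ∀ j, (D + 1) ^ j ≤ D ^ j * B (1 + j * δ) := fun j => by
    induction j with
    | zero => rw [pow_zero, pow_zero, one_mul, zero_mul]; exact hB1
    | succ j ih =>
      calc (D + 1) ^ (j + 1) = (D + 1) ^ j * (D + 1) := pow_succ _ _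
        _ ≤ D ^ j * B (1 + j * δ) * (D + 1) := Nat.mul_le_mul ih le_rfl
        _ = D ^ j * ((D + 1) * B (1 + j * δ)) := by ring
        _ ≤ D ^ j * (D * B (1 + j * δ + δ)) := Nat.mul_le_mul le_rfl (h1 _)
        _ = D ^ (j + 1) * B (1 + (j + 1) * δ) := by
          rw [pow_succ, show 1 + j * δ + δ = 1 + (j + 1) * δ by ring]; ring
  set N := Fintype.card σ
  set r : ℝ := (D + 1) / D with hr
  have hD' : (0 : ℝ) < D := by exact_mod_cast hDpos
  have hr1 : 1 < r := by rw [hr, one_lt_div hD']; linarith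
  have h3 : ∀ j : ℕ, 1 ≤ j → r ^ j ≤ ((1 + δ) ^ N : ℝ) * (j : ℝ) ^ N := fun j hj => by
    have hb : B (1 + j * δ) ≤ ((1 + δ) * j) ^ N :=
      (low_card_le (fun _ => one_pos) _).trans (Nat.pow_le_pow_left (by nlinarith) _)
    have h4 : ((D : ℝ) + 1) ^ j ≤ D ^ j * ((1 + δ) * j) ^ N := by
      exact_mod_cast (h2 j).trans (Nat.mul_le_mul le_rfl hb)
    rw [hr, div_pow, div_le_iff₀ (pow_pos hD' _), ← mul_pow]
    linarith
  have hlim := (tendsto_pow_const_div_const_pow_of_one_lt N hr1).const_mul ((1 + δ) ^ N : ℝ)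
  rw [mul_zero] at hlim
  obtain ⟨j, hj, hj1⟩ := ((hlim.eventually (gt_mem_nhds one_pos)).and
    (Filter.eventually_ge_atTop 1)).exists
  have h5 := h3 j hj1
  have hrj : 0 < r ^ j := pow_pos (by linarith) _
  rw [← mul_div_assoc, div_lt_one hrj] at hj
  linarith

/-- A point whose maximal ideal is a minimal prime over `J` is isolated. -/
theorem isol_of_minimal {J : Ideal (MvPolynomial σ k)} {P : σ → k}
    (h : RingHom.ker (eval P) ∈ J.minimalPrimes) : Isol J P := by
  classical
  set m := RingHom.ker (eval P) with hm
  have hmp : m.IsPrime := h.1.1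
  let R := Localization.AtPrime m
  have h1 : (J.map (algebraMap _ R)).radical = m.map (algebraMap _ R) :=
    IsLocalization.AtPrime.radical_map_of_mem_minimalPrimes R m J h
  obtain ⟨n, hn⟩ := Ideal.exists_radical_pow_le_of_fg (J.map (algebraMap _ R))
    (IsNoetherian.noetherian _)
  rw [h1, ← Ideal.map_pow] at hn
  -- in the local ring at `P` the ideal `J` contains a power of the maximal ideal; clear the
  -- denominators of finitely many generators
  have h2 : ∀ f ∈ m ^ n, ∃ s, s ∉ m ∧ s * f ∈ J := by
    intro f hf
    have h3 := hn (Ideal.mem_map_of_mem _ hf)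
    obtain ⟨s, hs, hsf⟩ := (IsLocalization.algebraMap_mem_map_algebraMap_iff m.primeCompl R J f).1 h3
    exact ⟨s, hs, hsf⟩
  obtain ⟨T, hT⟩ := (IsNoetherian.noetherian (m ^ n) : (m ^ n).FG)
  choose s hs hsJ using fun f : T => h2 f.1 (hT ▸ Ideal.subset_span f.2)
  refine ⟨∏ f, s f, n, ?_, fun f hf => ?_⟩
  · intro h0
    have : ∏ f, s f ∈ m := h0
    obtain ⟨f, -, hf⟩ := (hmp.prod_mem_iff).1 this
    exact hs f hf
  · have hfm : f ∈ m ^ n := by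
      have h6 : tr P f ∈ idealOfVars σ k ^ n := by
        rw [mem_pow_idealOfVars_iff']
        exact fun α hα => hf α (by rwa [wt_one])
      have h7 := Ideal.mem_map_of_mem (tr (-P)) h6
      rw [Ideal.map_pow] at h7
      have h8 := tr_neg (-P) f
      rw [neg_neg] at h8
      rw [h8] at h7
      refine Ideal.pow_right_mono ?_ n h7
      rw [idealOfVars, Ideal.map_span, Ideal.span_le]
      rintro _ ⟨_, ⟨i, rfl⟩, rfl⟩
      simp [hm, tr, RingHom.mem_ker]
    rw [← hT] at hfm
    refine Submodule.span_induction (p := fun f _ => (∏ f, s f) * f ∈ J) ?_ ?_ ?_ ?_ hfm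
    · intro f hf
      rw [← Finset.prod_erase_mul _ _ (Finset.mem_univ (⟨f, hf⟩ : T)), mul_assoc]
      exact Ideal.mul_mem_left _ _ (hsJ ⟨f, hf⟩)
    · simp
    · intro f g _ _ hf hg; rw [mul_add]; exact add_mem hf hg
    · intro a f _ hf
      rw [smul_eq_mul, mul_left_comm]; exact Ideal.mul_mem_left _ _ hf

end Bezout
end DP4

/-! ### Polynomial vectors with indeterminate coefficients -/

namespace DP4
open Polynomial

theorem qf_algHom {K R S : Type} [CommRing K] [CommRing R] [CommRing S] [Algebra K R] [Algebra K S]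
    (φ : R →ₐ[K] S) (c : Fin 5 → Fin 5 → K) (x : Fin 5 → R) :
    φ (qf c x) = qf c fun i => φ (x i) := by
  simp only [qf, map_sum, map_mul, AlgHom.commutes]

/-- Over a local ring, a polynomial vector one of whose entries has a unit as leading coefficient is
unimodular as soon as it is so modulo the maximal ideal. -/
theorem unimodular_of_local {R : Type} [CommRing R] [IsLocalRing R] (x : Fin 5 → R[X]) (e : ℕ)
    (i₀ : Fin 5) (hdeg : (x i₀).natDegree ≤ e) (hu : IsUnit ((x i₀).coeff e)) (b : Fin 5 → R[X])
    (hb : ∀ n, (∑ i, b i * x i - 1).coeff n ∈ IsLocalRing.maximalIdeal R) :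
    ∃ b : Fin 5 → R[X], ∑ i, b i * x i = 1 := by
  by_contra hne
  set I : Ideal R[X] := Ideal.span (Set.range x) with hI
  have hI1 : I ≠ ⊤ := fun h => hne ((Ideal.mem_span_range_iff_exists_fun).1
    (h ▸ Submodule.mem_top : (1 : R[X]) ∈ I))
  obtain ⟨M, hM, hIM⟩ := Ideal.exists_le_maximal I hI1
  have hxM : ∀ i, x i ∈ M := fun i => hIM (Ideal.subset_span ⟨i, rfl⟩)
  obtain ⟨u, hu'⟩ := hu
  have hmon : (C (↑u⁻¹ : R) * x i₀).Monic := by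
    refine Polynomial.monic_of_natDegree_le_of_coeff_eq_one e
      ((natDegree_C_mul_le _ _).trans hdeg) ?_
    rw [coeff_C_mul, ← hu', Units.inv_mul]
  have hint := hmon.quotient_isIntegral (I := M) (Ideal.mul_mem_left _ _ (hxM i₀))
  have hfield : (⊥ : Ideal (R[X] ⧸ M)).IsMaximal := Ideal.bot_quotient_isMaximal_iff M |>.2 hM
  have hmax := Ideal.isMaximal_comap_of_isIntegral_of_isMaximal' _ hint ⊥
  have heq := IsLocalRing.eq_maximalIdeal hmax
  have hC : ∀ a ∈ IsLocalRing.maximalIdeal R, C a ∈ M := fun a ha => by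
    rw [← heq, Ideal.mem_comap, Ideal.mem_bot] at ha
    exact Ideal.Quotient.eq_zero_iff_mem.1 ha
  have h1 : ∑ i, b i * x i - 1 ∈ M := by
    rw [Polynomial.as_sum_range_C_mul_X_pow (∑ i, b i * x i - 1)]
    exact sum_mem fun n _ => Ideal.mul_mem_right _ _ (hC _ (hb n))
  have h2 : (1 : R[X]) ∈ M := by
    have := sub_mem (sum_mem (t := Finset.univ) fun i _ => M.mul_mem_left (b i) (hxM i)) h1
    simpa using this
  exact hM.ne_top ((Ideal.eq_top_iff_one M).2 h2)

section pol
variable {R S σ : Type} [CommRing R] [CommRing S] {e : ℕ} (ε : Fin 5 × Fin (e + 1) ≃ σ)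

/-- The vector of five polynomials of degree at most `e` with coefficients `X`. -/
noncomputable def pol (X : σ → R) (a : Fin 5) : R[X] :=
  ∑ b : Fin (e + 1), C (X (ε (a, b))) * Polynomial.X ^ (b : ℕ)

theorem coeff_pol (X : σ → R) (a : Fin 5) (b : Fin (e + 1)) :
    (pol ε X a).coeff b = X (ε (a, b)) := by
  simp only [pol, finsetSum_coeff, coeff_C_mul, coeff_X_pow]
  rw [Finset.sum_eq_single b]
  · simp
  · intro c _ hc
    rw [if_neg fun h => hc (Fin.ext h.symm), mul_zero]
  · simp

theorem natDegree_pol (X : σ → R) (a : Fin 5) : (pol ε X a).natDegree ≤ e := by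
  refine natDegree_sum_le_of_forall_le _ _ fun b _ => ?_
  exact (natDegree_C_mul_X_pow_le _ _).trans (by have := b.2; omega)

theorem coeff_pol_cases (X : σ → R) (a : Fin 5) (n : ℕ) :
    (pol ε X a).coeff n = 0 ∨ ∃ s, (pol ε X a).coeff n = X s := by
  rcases lt_or_ge n (e + 1) with h | h
  · exact .inr ⟨_, coeff_pol ε X a ⟨n, h⟩⟩
  · exact .inl (coeff_eq_zero_of_natDegree_lt ((natDegree_pol ε X a).trans_lt h))

theorem map_pol (φ : R →+* S) (X : σ → R) (a : Fin 5) :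
    (pol ε X a).map φ = pol ε (fun s => φ (X s)) a := by
  simp [pol, Polynomial.map_sum]

theorem pol_coeff (x : Fin 5 → R[X]) (hx : ∀ a, (x a).natDegree ≤ e) :
    pol ε (fun s => (x (ε.symm s).1).coeff (ε.symm s).2) = x := by
  funext a
  ext n
  rcases lt_or_ge n (e + 1) with h | h
  · rw [coeff_pol ε _ a ⟨n, h⟩]; simp
  · rw [coeff_eq_zero_of_natDegree_lt ((natDegree_pol ε _ a).trans_lt h),
      coeff_eq_zero_of_natDegree_lt ((hx a).trans_lt h)]

variable {K : Type} [CommRing K] [Algebra K R] [Algebra K S]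

theorem map_qf_pol (φ : R →ₐ[K] S) (c : Fin 5 → Fin 5 → K) (X : σ → R) :
    (qf c (pol ε X)).map φ.toRingHom = qf c (pol ε fun s => φ (X s)) := by
  have := qf_algHom (Polynomial.mapAlgHom φ) c (pol ε X)
  simp only [Polynomial.coe_mapAlgHom] at this
  refine this.trans (congrArg (qf c) (funext fun a => ?_))
  exact map_pol ε φ.toRingHom X a

theorem natDegree_qf_le (c : Fin 5 → Fin 5 → K) (X : σ → R) :
    (qf c (pol ε X)).natDegree ≤ 2 * e := by
  refine natDegree_sum_le_of_forall_le _ _ fun i _ => natDegree_sum_le_of_forall_le _ _ fun j _ => ?_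
  rw [Polynomial.algebraMap_apply]
  refine (natDegree_C_mul_le _ _).trans (natDegree_mul_le.trans ?_)
  have := natDegree_pol ε X i
  have := natDegree_pol ε X j
  omega

end pol
end DP4

/-! ### The square system of equations -/

namespace DP4
section System
/-- Index type of the coefficients of two polynomials of degree at most `2 * e`. -/
abbrev Kap (e : ℕ) : Type := Fin 2 × Fin (2 * e + 1)

variable {K K' ι : Type} [Field K] [Field K'] [Algebra K K'] [Fintype ι] {e : ℕ}
  (ε : Fin 5 × Fin (e + 1) ≃ ι ⊕ Kap e) (c : ι → Kap e → K')

open MvPolynomial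

/-- The coefficients of the universal polynomial vector in coordinates adapted to the generic
linear combinations: the variable `inl j` is `Xc (inl j) + ∑ i, c j i * Xc (inr i)`. -/
noncomputable def Xc : ι ⊕ Kap e → MvPolynomial (ι ⊕ Kap e) K' :=
  Sum.elim (fun j => X (.inl j) - ∑ i, C (c j i) * X (.inr i)) fun i => X (.inr i)

/-- The polynomial system: the coefficients of the two quadratic equations, of degree `2`, and
`|ι|` generic linear combinations of the equations `x ^ q = x` cutting out the rational points. -/
noncomputable def FF (q : ℕ) (A B : Fin 5 → Fin 5 → K) :
    ι ⊕ Kap e → MvPolynomial (ι ⊕ Kap e) K' :=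
  Sum.elim
    (fun j => (Xc c (.inl j) ^ q - Xc c (.inl j))
      + ∑ i, C (c j i) * (Xc c (.inr i) ^ q - Xc c (.inr i)))
    fun l => (qf (![A, B] l.1) (pol ε (Xc c))).coeff l.2

/-- The `K'`-point with coefficients `p` in the adapted coordinates. -/
def PP (p : ι ⊕ Kap e → K) : ι ⊕ Kap e → K' :=
  Sum.elim (fun j => algebraMap K K' (p (.inl j)) + ∑ i, c j i * algebraMap K K' (p (.inr i)))
    fun i => algebraMap K K' (p (.inr i))

/-- The degrees of the system `FF`. -/
def dw (ι : Type) (e q : ℕ) : ι ⊕ Kap e → ℕ := Sum.elim (fun _ => q) fun _ => 2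

theorem X_inl (j : ι) : (X (.inl j) : MvPolynomial (ι ⊕ Kap e) K') =
    Xc c (.inl j) + ∑ i, C (c j i) * Xc c (.inr i) := by
  simp [Xc]

theorem eval_Xc (p : ι ⊕ Kap e → K) (s : ι ⊕ Kap e) :
    eval (PP c p) (Xc c s) = algebraMap K K' (p s) := by
  rcases s with j | i <;> simp [Xc, PP]

theorem PP_injective : Function.Injective (PP (K := K) c) := fun p p' h => by
  funext s
  have := eval_Xc c p s
  rw [h, eval_Xc] at this
  exact (algebraMap K K').injective this.symm

theorem totalDegree_Xc (s : ι ⊕ Kap e) : (Xc c s).totalDegree ≤ 1 := by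
  rcases s with j | i
  · refine (totalDegree_sub _ _).trans (max_le (totalDegree_X _).le ?_)
    refine totalDegree_sum_mono _ _ _ fun i _ => (totalDegree_mul _ _).trans ?_
    simp
  · exact (totalDegree_X _).le

theorem totalDegree_FF {q : ℕ} (hq : 2 ≤ q) (A B : Fin 5 → Fin 5 → K) (s : ι ⊕ Kap e) :
    (FF ε c q A B s).totalDegree ≤ dw ι e q s := by
  rcases s with j | ⟨l, n⟩
  · have h : ∀ s, (Xc c s ^ q - Xc c s).totalDegree ≤ q := fun s => by
      have h1 := totalDegree_Xc c s
      refine (totalDegree_sub _ _).trans (max_le ((totalDegree_pow _ _).trans ?_) (by omega))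
      nlinarith
    refine (totalDegree_add _ _).trans (max_le (h _) ?_)
    refine totalDegree_sum_mono _ _ _ fun i _ => (totalDegree_mul _ _).trans ?_
    rw [totalDegree_C, zero_add]
    exact h _
  · simp only [FF, dw, Sum.elim_inr, qf, Polynomial.finsetSum_coeff, Polynomial.algebraMap_apply,
      Polynomial.coeff_C_mul]
    simp only [Polynomial.coeff_mul]
    have h1 : ∀ (a : Fin 5) (n : ℕ), ((pol ε (Xc c) a).coeff n).totalDegree ≤ 1 := fun a n => by
      rcases coeff_pol_cases ε (Xc c) a n with h | ⟨s, h⟩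
      · rw [h]; simp
      · rw [h]; exact totalDegree_Xc c s
    refine totalDegree_sum_mono _ _ _ fun i _ => totalDegree_sum_mono _ _ _ fun j _ => ?_
    refine (totalDegree_mul _ _).trans ?_
    rw [IsScalarTower.algebraMap_apply K K' (MvPolynomial (ι ⊕ Kap e) K'), algebraMap_eq,
      totalDegree_C, zero_add]
    refine totalDegree_sum_mono _ _ _ fun r _ => (totalDegree_mul _ _).trans ?_
    have := h1 i r.1
    have := h1 j r.2
    omega

theorem eval_qf_coeff (c₀ : Fin 5 → Fin 5 → K) (p : ι ⊕ Kap e → K)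
    (h : qf c₀ (pol ε p) = 0) (n : ℕ) :
    eval (PP c p) ((qf c₀ (pol ε (Xc c))).coeff n) = 0 := by
  let φ : MvPolynomial (ι ⊕ Kap e) K' →ₐ[K] K' := (aeval (PP c p)).restrictScalars K
  have h1 := map_qf_pol ε φ c₀ (Xc c)
  have h2 := map_qf_pol ε (Algebra.ofId K K') c₀ p
  rw [h, Polynomial.map_zero] at h2
  have e1 : (fun s => φ (Xc c s)) = fun s => (Algebra.ofId K K') (p s) := funext fun s => by
    have := eval_Xc c p s
    simpa [φ, Algebra.ofId_apply, aeval_eq_eval] using this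
  rw [e1, ← h2] at h1
  have := congrArg (fun f => Polynomial.coeff f n) h1
  simpa [Polynomial.coeff_map, φ, aeval_eq_eval] using this

/-- At a rational point the quadratic equations vanish, hence have weight at least `2`. Additivity
of the `q`-th power map shows that the `j`-th generic combination is a sum of `q`-th powers of
functions vanishing at the point, minus the variable `inl j` centred at the point, which has weight
`q`. -/
theorem FF_mem_wtI {p₀ m : ℕ} [Fact p₀.Prime] [CharP K' p₀] (hq : 2 ≤ p₀ ^ m)
    {A B : Fin 5 → Fin 5 → K} (p : ι ⊕ Kap e → K) (hp : ∀ s, p s ^ p₀ ^ m = p s)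
    (hA : qf A (pol ε p) = 0) (hB : qf B (pol ε p) = 0) (s : ι ⊕ Kap e) :
    FF ε c (p₀ ^ m) A B s ∈ wtI (dw ι e (p₀ ^ m)) (PP c p) (dw ι e (p₀ ^ m) s) := by
  have hd : ∀ s, 2 ≤ dw ι e (p₀ ^ m) s := by rintro (j | i) <;> simp [dw, hq]
  have hd0 : ∀ s, 0 < dw ι e (p₀ ^ m) s := fun s => by have := hd s; omega
  have hchar : CharP (MvPolynomial (ι ⊕ Kap e) K') p₀ := inferInstance
  rcases s with j | l
  · have h1 : ∀ s, (Xc c s - C (algebraMap K K' (p s))) ^ p₀ ^ m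
        ∈ wtI (dw ι e (p₀ ^ m)) (PP c p) (p₀ ^ m) := fun s =>
      wtI_one_le hd0 _ _ (wtI_pow (mem_wtI_one (by rw [map_sub, eval_Xc, eval_C, sub_self])) _)
    have h2 : X (.inl j) - C (PP c p (.inl j)) ∈ wtI (dw ι e (p₀ ^ m)) (PP c p) (p₀ ^ m) := by
      intro α hα
      classical
      have : tr (PP c p) (X (.inl j) - C (PP c p (.inl j))) = X (.inl j) := by
        rw [map_sub, tr, aeval_X, aeval_C, algebraMap_eq, add_sub_cancel_right]
      rw [this, coeff_X, if_neg]
      rintro rfl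
      rw [Finsupp.weight_single] at hα
      simp [dw] at hα
    have e1 : FF ε c (p₀ ^ m) A B (.inl j) =
        (Xc c (.inl j) - C (algebraMap K K' (p (.inl j)))) ^ p₀ ^ m
        + ∑ i, C (c j i) * (Xc c (.inr i) - C (algebraMap K K' (p (.inr i)))) ^ p₀ ^ m
        - (X (.inl j) - C (PP c p (.inl j))) := by
      have h3 : ∀ s, (C (algebraMap K K' (p s)) : MvPolynomial (ι ⊕ Kap e) K') ^ p₀ ^ m
          = C (algebraMap K K' (p s)) := fun s => by
        rw [← C_pow, ← map_pow, hp]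
      have h4 : C (PP c p (.inl j)) = (C (algebraMap K K' (p (.inl j)))
          + ∑ i, C (c j i) * C (algebraMap K K' (p (.inr i))) : MvPolynomial (ι ⊕ Kap e) K') := by
        simp [PP]
      rw [X_inl c, h4]
      simp only [sub_pow_char_pow, h3, FF, Sum.elim_inl, mul_sub, Finset.sum_sub_distrib]
      ring
    rw [e1]
    exact sub_mem (add_mem (h1 _) (sum_mem fun i _ => Ideal.mul_mem_left _ _ (h1 _))) h2
  · intro α hα
    have hα0 : α = 0 := by
      by_contra hne
      obtain ⟨s, hs⟩ := Finsupp.ne_iff.1 hne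
      rw [Finsupp.weight_apply, Finsupp.sum_fintype _ _ (by simp)] at hα
      have h6 := Finset.single_le_sum (f := fun s => α s • dw ι e (p₀ ^ m) s)
        (fun _ _ => Nat.zero_le _) (Finset.mem_univ s)
      have h7 : 1 ≤ α s := Nat.one_le_iff_ne_zero.2 hs
      have h8 := hd s
      simp only [smul_eq_mul] at h6 hα
      have h9 : dw ι e (p₀ ^ m) (.inr l) = 2 := rfl
      nlinarith
    rw [hα0, coeff_zero_tr]
    obtain ⟨l, n⟩ := l
    refine eval_qf_coeff ε c _ p ?_ n
    fin_cases l
    · exact hA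
    · exact hB

end System
end DP4

/-! ### Isolatedness of the rational points -/

namespace DP4
section System
variable {K K' ι : Type} [Field K] [Field K'] [Algebra K K'] [Fintype ι] {e : ℕ}
  (ε : Fin 5 × Fin (e + 1) ≃ ι ⊕ Kap e) (c : ι → Kap e → K')

open MvPolynomial

/-- Unimodularity of the universal polynomial vector spreads out from a point to its localization,
hence to every specialization through that point. -/
theorem unimodular_image {L : Type} [Field L] (φ : MvPolynomial (ι ⊕ Kap e) K' →+* L)
    (p : ι ⊕ Kap e → K) (hker : ∀ f, φ f = 0 → eval (PP c p) f = 0)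
    (htop : ∃ a, p (ε (a, Fin.last e)) ≠ 0)
    (huni : ∃ b : Fin 5 → Polynomial K, ∑ a, b a * pol ε p a = 1) :
    ∃ b : Fin 5 → Polynomial L, ∑ a, b a * pol ε (fun s => φ (Xc c s)) a = 1 := by
  obtain ⟨a₀, ha₀⟩ := htop
  obtain ⟨b, hb⟩ := huni
  set m : Ideal (MvPolynomial (ι ⊕ Kap e) K') := RingHom.ker (eval (PP c p)) with hm
  have hmp : m.IsPrime := RingHom.ker_isPrime _
  let R := Localization.AtPrime m
  let ψ : MvPolynomial (ι ⊕ Kap e) K' →+* R := algebraMap _ R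
  let χ : K →+* MvPolynomial (ι ⊕ Kap e) K' := C.comp (algebraMap K K')
  obtain ⟨b', hb'⟩ := unimodular_of_local (R := R) (pol ε fun s => ψ (Xc c s)) e a₀
    (natDegree_pol ε _ _) (by
      have h0 := coeff_pol ε (fun s => ψ (Xc c s)) a₀ (Fin.last e)
      rw [Fin.val_last] at h0
      rw [h0]
      refine IsLocalization.map_units R (⟨_, fun h => ?_⟩ : m.primeCompl)
      have h1 : eval (PP c p) (Xc c (ε (a₀, Fin.last e))) = 0 := h
      rw [eval_Xc] at h1
      exact ha₀ ((map_eq_zero _).1 h1))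
    (fun a => (b a).map (ψ.comp χ)) (fun n => by
      have e1 : ∑ a, (b a).map (ψ.comp χ) * pol ε (fun s => ψ (Xc c s)) a - 1 =
          (∑ a, (b a).map χ * pol ε (Xc c) a - 1).map ψ := by
        simp only [Polynomial.map_sub, Polynomial.map_sum, Polynomial.map_mul,
          Polynomial.map_map, map_pol, Polynomial.map_one]
      rw [e1, Polynomial.coeff_map]
      have h2 : (∑ a, (b a).map χ * pol ε (Xc c) a - 1).map (eval (PP c p)) = 0 := by
        have h3 := congrArg (Polynomial.map (algebraMap K K')) hb
        simp only [Polynomial.map_sum, Polynomial.map_mul, Polynomial.map_one, map_pol] at h3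
        simp only [Polynomial.map_sub, Polynomial.map_sum, Polynomial.map_mul,
          Polynomial.map_map, map_pol, Polynomial.map_one, eval_Xc]
        have h4 : (eval (PP c p)).comp χ = algebraMap K K' := by
          ext r; simp [χ]
        rw [h4, h3, sub_self]
      have h5 := congrArg (fun f => Polynomial.coeff f n) h2
      simp only [Polynomial.coeff_map, Polynomial.coeff_zero] at h5
      rw [← Localization.AtPrime.map_eq_maximalIdeal]
      exact Ideal.mem_map_of_mem _ h5)
  have hunit : ∀ y : m.primeCompl, IsUnit (φ y) := fun y =>
    IsUnit.mk0 _ fun h => y.2 (hker _ h)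
  refine ⟨fun a => (b' a).map (IsLocalization.lift hunit), ?_⟩
  have h6 := congrArg (Polynomial.map (IsLocalization.lift hunit)) hb'
  simp only [Polynomial.map_sum, Polynomial.map_mul, Polynomial.map_one, map_pol] at h6
  simpa only [ψ, IsLocalization.lift_eq] using h6

/-- If the generic point of a subvariety through `p` lies on a line of the surface, then so does
the point `p`. -/
theorem onLine_of_image {L : Type} [Field L] [Algebra K L]
    [Algebra K' L] [IsScalarTower K K' L] (φ : MvPolynomial (ι ⊕ Kap e) K' →ₐ[K'] L)
    (p : ι ⊕ Kap e → K) (hker : ∀ f, φ f = 0 → eval (PP c p) f = 0) (A B : Fin 5 → Fin 5 → K)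
    (h : OnLine A B (pol ε fun s => φ (Xc c s))) : OnLine A B (pol ε p) := by
  obtain ⟨w₁, w₂, hli, hq, f, g, hfg⟩ := h
  obtain ⟨i, j, hij⟩ : ∃ i j, w₁ i * w₂ j - w₁ j * w₂ i ≠ 0 := by
    by_contra! hall
    obtain ⟨i, hi⟩ := Function.ne_iff.1 (hli.ne_zero 0)
    simp only [Matrix.cons_val_zero, Pi.zero_apply] at hi
    have := LinearIndependent.pair_iff.1 hli (w₂ i) (-w₁ i) (by
      funext l
      have := hall i l
      simp only [Pi.add_apply, Pi.smul_apply, smul_eq_mul, Pi.zero_apply]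
      linear_combination -this)
    exact hi (neg_eq_zero.1 this.2)
  set Δ := w₁ i * w₂ j - w₁ j * w₂ i with hΔ
  -- a linear relation with coefficients in `K` between the coefficients specializes to the point
  have hrel : ∀ l n, Δ * (pol ε p l).coeff n = w₁ l * (w₂ j * (pol ε p i).coeff n
      - w₂ i * (pol ε p j).coeff n) + w₂ l * (w₁ i * (pol ε p j).coeff n
      - w₁ j * (pol ε p i).coeff n) := by
    intro l n
    rcases lt_or_ge n (e + 1) with hn | hn
    swap
    · simp only [Polynomial.coeff_eq_zero_of_natDegree_lt ((natDegree_pol ε p _).trans_lt hn)]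
      ring
    have hc : ∀ a, φ (Xc c (ε (a, ⟨n, hn⟩))) = algebraMap K L (w₁ a) * f.coeff n
        + algebraMap K L (w₂ a) * g.coeff n := fun a => by
      have h1 := congrArg (fun f => Polynomial.coeff f n) (hfg a)
      have h2 := coeff_pol ε (fun s => φ (Xc c s)) a ⟨n, hn⟩
      simp only at h1 h2
      rw [h2] at h1
      simpa [Polynomial.algebraMap_apply, Polynomial.coeff_C_mul] using h1
    let k : K → MvPolynomial (ι ⊕ Kap e) K' := fun a => C (algebraMap K K' a)
    have hk : ∀ a, φ (k a) = algebraMap K L a := fun a => by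
      simp only [k]
      rw [← algebraMap_eq, AlgHom.commutes, ← IsScalarTower.algebraMap_apply]
    have h3 := hker (k Δ * Xc c (ε (l, ⟨n, hn⟩)) - (k (w₁ l) * (k (w₂ j) * Xc c (ε (i, ⟨n, hn⟩))
      - k (w₂ i) * Xc c (ε (j, ⟨n, hn⟩))) + k (w₂ l) * (k (w₁ i) * Xc c (ε (j, ⟨n, hn⟩))
      - k (w₁ j) * Xc c (ε (i, ⟨n, hn⟩))))) (by
        simp only [map_sub, map_add, map_mul, hk, hc, hΔ]
        ring)
    simp only [map_sub, map_add, map_mul, eval_Xc, k, eval_C] at h3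
    simp only [coeff_pol ε p _ ⟨n, hn⟩]
    have h4 := coeff_pol ε p
    refine (algebraMap K K').injective ?_
    have h5 : ∀ a, (pol ε p a).coeff n = p (ε (a, ⟨n, hn⟩)) := fun a => coeff_pol ε p a ⟨n, hn⟩
    simp only [h5, map_sub, map_add, map_mul]
    linear_combination h3
  refine ⟨w₁, w₂, hli, hq, Polynomial.C Δ⁻¹ * (Polynomial.C (w₂ j) * pol ε p i
    - Polynomial.C (w₂ i) * pol ε p j), Polynomial.C Δ⁻¹ * (Polynomial.C (w₁ i) * pol ε p j
    - Polynomial.C (w₁ j) * pol ε p i), fun l => ?_⟩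
  ext n
  have := hrel l n
  simp only [Polynomial.algebraMap_apply, Algebra.algebraMap_self, RingHom.id_apply,
    Polynomial.coeff_add, Polynomial.coeff_C_mul, Polynomial.coeff_sub]
  have h6 : (pol ε p l).coeff n = Δ⁻¹ * (Δ * (pol ε p l).coeff n) := by
    rw [inv_mul_cancel_left₀ hij]
  rw [h6, this]; ring

/-- The function field of a component through `p` of the zero locus of the system is algebraic over
`K'`: the generic point of the component is again a curve of degree `e` on the surface, other than
a line, so that the dimension bound applies to it. -/
theorem isAlgebraic_image [IsAlgClosed K] {L : Type} [Field L] [Algebra K L]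
    [Algebra K' L] [IsScalarTower K K' L] (φ : MvPolynomial (ι ⊕ Kap e) K' →ₐ[K'] L)
    (hfrac : ∀ z, ∃ a b, z = φ a / φ b) (hι : Fintype.card ι = e + 3)
    (hc : AlgebraicIndependent K fun p : ι × Kap e => c p.1 p.2)
    (hcgen : IntermediateField.adjoin K (Set.range fun p : ι × Kap e => c p.1 p.2) = ⊤)
    {q : ℕ} (hq : 2 ≤ q) {A B : Fin 5 → Fin 5 → K} (hs : Sm A B)
    (hF : ∀ s, φ (FF ε c q A B s) = 0)
    (p : ι ⊕ Kap e → K) (hker : ∀ f, φ f = 0 → eval (PP c p) f = 0)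
    (htop : ∃ a, p (ε (a, Fin.last e)) ≠ 0)
    (huni : ∃ b : Fin 5 → Polynomial K, ∑ a, b a * pol ε p a = 1)
    (hline : ¬ OnLine A B (pol ε p)) (f : MvPolynomial (ι ⊕ Kap e) K') :
    IsAlgebraic K' (φ f) := by
  set x := pol ε fun s => φ (Xc c s) with hx
  have hcoef : ∀ (a : Fin 5) (b : Fin (e + 1)), (x a).coeff b = φ (Xc c (ε (a, b))) := fun a b =>
    coeff_pol ε _ a b
  have hq0 : ∀ l : Fin 2, qf (![A, B] l) x = 0 := fun l => by
    let φ' : MvPolynomial (ι ⊕ Kap e) K' →ₐ[K] L := φ.restrictScalars K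
    have h1 := map_qf_pol ε φ' (![A, B] l) (Xc c)
    have h2 : qf (![A, B] l) x = (qf (![A, B] l) (pol ε (Xc c))).map φ'.toRingHom := h1.symm
    rw [h2]
    ext n
    rw [Polynomial.coeff_map, Polynomial.coeff_zero]
    rcases lt_or_ge n (2 * e + 1) with hn | hn
    · exact hF (.inr (l, ⟨n, hn⟩))
    · rw [Polynomial.coeff_eq_zero_of_natDegree_lt
        ((natDegree_qf_le ε _ _).trans_lt hn), map_zero]
  have htr : Algebra.trdeg K (coefField K x) ≤ (e + 3 : ℕ) := by
    refine trdeg_le hs x e (natDegree_pol ε _) ?_ ?_ (hq0 0) (hq0 1) ?_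
    · obtain ⟨a, ha⟩ := htop
      refine ⟨a, fun h => ha ?_⟩
      have h3 := hcoef a (Fin.last e)
      rw [Fin.val_last, h] at h3
      have h4 := hker _ h3.symm
      rw [eval_Xc] at h4
      exact (map_eq_zero _).1 h4
    · exact unimodular_image ε c φ.toRingHom p hker htop huni
    · exact fun h => hline (onLine_of_image ε c φ p hker A B h)
  have hsurj : ∀ F : IntermediateField K L, (∀ j i, algebraMap K' L (c j i) ∈ F) →
      (∀ s, φ (Xc c s) ∈ F) → F = ⊤ := by
    intro F hF1 hF2
    have hK' : ∀ r, algebraMap K' L r ∈ F := by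
      have : (⊤ : IntermediateField K K') ≤ F.comap (IsScalarTower.toAlgHom K K' L) := by
        rw [← hcgen, IntermediateField.adjoin_le_iff]
        rintro _ ⟨⟨j, i⟩, rfl⟩
        exact hF1 j i
      exact fun r => this IntermediateField.mem_top
    have hall : ∀ f, φ f ∈ F := by
      intro f
      induction f using MvPolynomial.induction_on with
      | C r => rw [← algebraMap_eq, AlgHom.commutes]; exact hK' r
      | add f g hf hg => rw [map_add]; exact add_mem hf hg
      | mul_X f s hf =>
        rw [map_mul]
        refine mul_mem hf ?_
        rcases s with j | i
        · rw [X_inl c, map_add, map_sum]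
          refine add_mem (hF2 _) (sum_mem fun i _ => ?_)
          rw [map_mul, ← algebraMap_eq, AlgHom.commutes]
          exact mul_mem (hK' _) (hF2 _)
        · exact hF2 (.inr i)
    rw [eq_top_iff]
    rintro z -
    obtain ⟨a, b, rfl⟩ := hfrac z
    exact div_mem (hall a) (hall b)
  have hX : ∀ s, IsAlgebraic K' (φ (Xc c s)) := by
    refine field_isAlgebraic q hq c hc (coefField K x) (by rwa [hι]) (fun s => φ (Xc c s))
      (fun s => ?_) hsurj fun j => ?_
    · obtain ⟨⟨a, b⟩, rfl⟩ := ε.surjective s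
      rw [← hcoef]
      exact IntermediateField.subset_adjoin K _ ⟨(a, (b : ℕ)), rfl⟩
    · have := hF (.inl j)
      simp only [FF, Sum.elim_inl, map_add, map_sub, map_pow, map_sum, map_mul] at this
      have hC : ∀ r, φ (C r) = algebraMap K' L r := fun r => by
        rw [← algebraMap_eq, AlgHom.commutes]
      simpa only [hC] using this
  induction f using MvPolynomial.induction_on with
  | C r => rw [← algebraMap_eq, AlgHom.commutes]; exact isAlgebraic_algebraMap r
  | add f g hf hg => rw [map_add]; exact hf.add hg
  | mul_X f s hf =>
    rw [map_mul]
    refine hf.mul ?_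
    rcases s with j | i
    · rw [X_inl c, map_add, map_sum]
      refine (hX _).add (Finset.sum_induction _ _ (fun _ _ => IsAlgebraic.add)
        isAlgebraic_zero fun i _ => ?_)
      rw [map_mul, ← algebraMap_eq, AlgHom.commutes]
      exact (isAlgebraic_algebraMap _).mul (hX _)
    · exact hX (.inr i)

/-- Rational points which are curves of degree exactly `e`, not on a line, are isolated zeros of
the system. -/
theorem isol_point [IsAlgClosed K] (hι : Fintype.card ι = e + 3)
    (hc : AlgebraicIndependent K fun p : ι × Kap e => c p.1 p.2)
    (hcgen : IntermediateField.adjoin K (Set.range fun p : ι × Kap e => c p.1 p.2) = ⊤)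
    {q : ℕ} (hq : 2 ≤ q) {A B : Fin 5 → Fin 5 → K} (hs : Sm A B)
    (p : ι ⊕ Kap e → K) (hF : ∀ s, eval (PP c p) (FF ε c q A B s) = 0)
    (htop : ∃ a, p (ε (a, Fin.last e)) ≠ 0)
    (huni : ∃ b : Fin 5 → Polynomial K, ∑ a, b a * pol ε p a = 1)
    (hline : ¬ OnLine A B (pol ε p)) :
    Isol (Ideal.span (Set.range (FF ε c q A B))) (PP c p) := by
  refine isol_of_minimal ⟨⟨RingHom.ker_isPrime _, ?_⟩, ?_⟩
  · rw [Ideal.span_le]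
    rintro _ ⟨s, rfl⟩
    exact hF s
  · rintro P ⟨hP, hFP⟩ hle
    have hlt : RingHom.ker (eval (PP c p)) ≠ ⊤ := RingHom.ker_ne_top _
    suffices hmax : P.IsMaximal from (hmax.eq_of_le hlt hle).ge
    let D := MvPolynomial (ι ⊕ Kap e) K' ⧸ P
    let L := FractionRing D
    have : IsScalarTower K K' L := inferInstance
    let φ : MvPolynomial (ι ⊕ Kap e) K' →ₐ[K'] L :=
      (IsScalarTower.toAlgHom K' D L).comp (Ideal.Quotient.mkₐ K' P)
    have hφ : ∀ f, φ f = algebraMap D L (Ideal.Quotient.mk P f) := fun f => rfl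
    have hφ0 : ∀ f, φ f = 0 ↔ f ∈ P := fun f => by
      rw [hφ, FaithfulSMul.algebraMap_eq_zero_iff, Ideal.Quotient.eq_zero_iff_mem]
    have halg := isAlgebraic_image ε c φ (fun z => by
        obtain ⟨a, b, -, rfl⟩ := IsFractionRing.div_surjective (A := D) z
        obtain ⟨a, rfl⟩ := Ideal.Quotient.mk_surjective a
        obtain ⟨b, rfl⟩ := Ideal.Quotient.mk_surjective b
        exact ⟨a, b, rfl⟩) hι hc hcgen hq hs
      (fun s => (hφ0 _).2 (hFP (Ideal.subset_span ⟨s, rfl⟩))) p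
      (fun f hf => hle ((hφ0 f).1 hf)) htop huni hline
    have hint : Algebra.IsIntegral K' D := ⟨fun d => by
      obtain ⟨f, rfl⟩ := Ideal.Quotient.mk_surjective d
      have h1 := halg f
      rw [hφ, isAlgebraic_algebraMap_iff (IsFractionRing.injective D L)] at h1
      exact h1.isIntegral⟩
    exact Ideal.Quotient.maximal_of_isField _
      (isField_of_isIntegral_of_isField' (R := K') (Field.toIsField K'))

end System
end DP4

/-! ### The count in exact degree -/

namespace DP4
section Count
open MvPolynomial

/-- The bound for curves of degree exactly `e` whose coefficients are fixed by the `q`-th power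
map, with `q = p₀ ^ m`. -/
theorem card_le_of_top {K : Type} [Field K] [IsAlgClosed K] (p₀ m : ℕ) [Fact p₀.Prime] [CharP K p₀]
    (hq : 2 ≤ p₀ ^ m) {A B : Fin 5 → Fin 5 → K} (hs : Sm A B) (e : ℕ)
    (T : Finset (Fin 5 → Polynomial K))
    (hfix : ∀ x ∈ T, ∀ i n, (x i).coeff n ^ p₀ ^ m = (x i).coeff n)
    (hdeg : ∀ x ∈ T, ∀ i, (x i).natDegree ≤ e)
    (htop : ∀ x ∈ T, ∃ i, (x i).coeff e ≠ 0)
    (huni : ∀ x ∈ T, ∃ b : Fin 5 → Polynomial K, ∑ i, b i * x i = 1)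
    (hA : ∀ x ∈ T, qf A x = 0) (hB : ∀ x ∈ T, qf B x = 0)
    (hline : ∀ x ∈ T, ¬ OnLine A B x) :
    T.card ≤ (p₀ ^ m) ^ (e + 3) * 2 ^ (2 * (2 * e + 1)) := by
  classical
  let ι := Fin (e + 3)
  -- `5 (e + 1) = (e + 3) + 2 (2 e + 1)`: as many equations as unknowns
  have hcard : Fintype.card (Fin 5 × Fin (e + 1)) = Fintype.card (ι ⊕ Kap e) := by
    simp [ι]; ring
  let ε : Fin 5 × Fin (e + 1) ≃ ι ⊕ Kap e := Fintype.equivOfCardEq hcard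
  let R := MvPolynomial (ι × Kap e) K
  let K' := FractionRing R
  have : IsScalarTower K R K' := inferInstance
  have : CharP K' p₀ := charP_of_injective_algebraMap (algebraMap K K').injective p₀
  let c : ι → Kap e → K' := fun j i => algebraMap R K' (X (j, i))
  have hc : AlgebraicIndependent K fun p : ι × Kap e => c p.1 p.2 :=
    (algebraicIndependent_X (ι × Kap e) K).map' (f := IsScalarTower.toAlgHom K R K')
      (IsFractionRing.injective R K')
  have hcgen : IntermediateField.adjoin K (Set.range fun p : ι × Kap e => c p.1 p.2) = ⊤ := by
    set F := IntermediateField.adjoin K (Set.range fun p : ι × Kap e => c p.1 p.2)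
    have hR : ∀ r : R, algebraMap R K' r ∈ F := by
      intro r
      induction r using MvPolynomial.induction_on with
      | C r =>
        rw [← algebraMap_eq, ← IsScalarTower.algebraMap_apply]
        exact F.algebraMap_mem r
      | add f g hf hg => rw [map_add]; exact add_mem hf hg
      | mul_X f s hf =>
        rw [map_mul]
        exact mul_mem hf (IntermediateField.subset_adjoin K _ ⟨s, rfl⟩)
    rw [eq_top_iff]
    rintro z -
    obtain ⟨a, b, -, rfl⟩ := IsFractionRing.div_surjective (A := R) z
    exact div_mem (hR a) (hR b)
  let P : (Fin 5 → Polynomial K) → ι ⊕ Kap e → K :=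
    fun x s => (x (ε.symm s).1).coeff (ε.symm s).2
  have hP : ∀ x ∈ T, pol ε (P x) = x := fun x hx => pol_coeff ε x (hdeg x hx)
  have hinj : Set.InjOn (fun x => PP c (P x)) T := fun x hx y hy hxy => by
    rw [← hP x hx, ← hP y hy, PP_injective c hxy]
  have hd : ∀ s, 0 < dw ι e (p₀ ^ m) s := by
    rintro (j | i)
    · exact (by omega : 0 < p₀ ^ m)
    · exact two_pos
  have hw : ∀ x ∈ T, ∀ s,
      FF ε c (p₀ ^ m) A B s ∈ wtI (dw ι e (p₀ ^ m)) (PP c (P x)) (dw ι e (p₀ ^ m) s) :=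
    fun x hx s => FF_mem_wtI ε c hq (P x) (fun s => hfix x hx _ _)
      (by rw [hP x hx]; exact hA x hx) (by rw [hP x hx]; exact hB x hx) s
  have := card_le_prod hd (FF ε c (p₀ ^ m) A B) (totalDegree_FF ε c hq A B)
    (T.image fun x => PP c (P x)) (by
      intro R hR s
      obtain ⟨x, hx, rfl⟩ := Finset.mem_image.1 hR
      exact hw x hx s) (by
      intro R hR
      obtain ⟨x, hx, rfl⟩ := Finset.mem_image.1 hR
      refine isol_point ε c (by simp [ι]) hc hcgen hq hs (P x) (fun s => ?_) ?_ ?_ ?_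
      · rw [← coeff_zero_tr]
        exact hw x hx s 0 (by rw [map_zero]; exact hd s)
      · obtain ⟨i, hi⟩ := htop x hx
        exact ⟨i, by simpa [P] using hi⟩
      · rw [hP x hx]; exact huni x hx
      · rw [hP x hx]; exact hline x hx)
  rw [Finset.card_image_of_injOn hinj, Fintype.prod_sum_type] at this
  simpa [dw, ι] using this

/-- A quadratic form is given by an array of coefficients. -/
theorem exists_array {k : Type} [Field k] (Q : MvPolynomial (Fin 5) k) (hQ : Q.IsHomogeneous 2) :
    ∃ a : Fin 5 → Fin 5 → k, Q = ∑ i, ∑ j, C (a i j) * (X i * X j) := by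
  classical
  rw [Q.as_sum]
  refine Finset.sum_induction _ (fun Q : MvPolynomial (Fin 5) k =>
    ∃ a : Fin 5 → Fin 5 → k, Q = ∑ i, ∑ j, C (a i j) * (X i * X j)) ?_ ?_ ?_
  · rintro _ _ ⟨a, rfl⟩ ⟨b, rfl⟩
    refine ⟨fun i j => a i j + b i j, ?_⟩
    simp only [C_add, add_mul, Finset.sum_add_distrib]
  · exact ⟨0, by simp⟩
  · intro α hα
    have h2 : α.degree = 2 := by
      have := hQ (mem_support_iff.1 hα)
      rw [← this, Finsupp.degree_eq_weight_one]; rfl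
    obtain ⟨i, hi⟩ : ∃ i, α i ≠ 0 := by
      by_contra! h
      have : α = 0 := Finsupp.ext h
      simp [this] at h2
    obtain ⟨β, rfl⟩ : ∃ β, α = Finsupp.single i 1 + β :=
      ⟨α - Finsupp.single i 1, (add_tsub_cancel_of_le (by
        rw [Finsupp.single_le_iff]; omega)).symm⟩
    have h1 : β.degree = 1 := by
      rw [map_add, Finsupp.degree_single] at h2; omega
    obtain ⟨j, hj⟩ : ∃ i, β i ≠ 0 := by
      by_contra! h
      have : β = 0 := Finsupp.ext h
      simp [this] at h1
    obtain ⟨γ, rfl⟩ : ∃ γ, β = Finsupp.single j 1 + γ :=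
      ⟨β - Finsupp.single j 1, (add_tsub_cancel_of_le (by
        rw [Finsupp.single_le_iff]; omega)).symm⟩
    have h0 : γ = 0 := by
      rw [map_add, Finsupp.degree_single] at h1
      exact (Finsupp.degree_eq_zero_iff γ).1 (by omega)
    subst h0
    set r := coeff (Finsupp.single i 1 + (Finsupp.single j 1 + 0)) Q
    refine ⟨fun k l => if k = i ∧ l = j then r else 0, ?_⟩
    rw [Finset.sum_eq_single i, Finset.sum_eq_single j]
    · simp only [and_self, if_true, add_zero]
      rw [X, X, monomial_mul, C_mul_monomial]
      simp
    · intro l _ hl; simp [hl]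
    · simp
    · intro l _ hl; simp [hl]
    · simp

section Array
variable {k K : Type} [Field k] [Field K] [Algebra k K] (a : Fin 5 → Fin 5 → k)

theorem eval_array (v : Fin 5 → K) :
    eval v (MvPolynomial.map (algebraMap k K) (∑ i, ∑ j, C (a i j) * (X i * X j))) =
      qf (fun i j => algebraMap k K (a i j)) v := by
  simp [qf]

theorem pderiv_array (v : Fin 5 → K) (i : Fin 5) :
    eval v (pderiv i (MvPolynomial.map (algebraMap k K) (∑ i, ∑ j, C (a i j) * (X i * X j)))) =
      gr (fun i j => algebraMap k K (a i j)) v i := by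
  classical
  simp only [gr, map_sum, map_mul, map_C, map_X, Derivation.leibniz, pderiv_C, pderiv_X,
    smul_eq_mul, map_add, eval_C, eval_X, mul_zero, add_zero, Algebra.algebraMap_self,
    RingHom.id_apply, add_mul, mul_add, Finset.sum_add_distrib]
  rw [add_comm]
  congr 1
  · rw [Finset.sum_eq_single i]
    · refine Finset.sum_congr rfl fun j _ => ?_
      simp
    · intro l _ hl
      exact Finset.sum_eq_zero fun j _ => by simp [Pi.single_apply, hl]
    · simp
  · refine Finset.sum_congr rfl fun l _ => ?_
    rw [Finset.sum_eq_single i]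
    · simp
    · intro j _ hj
      simp [Pi.single_apply, hj]
    · simp

theorem aeval_array (x : Fin 5 → Polynomial k) :
    (aeval x (∑ i, ∑ j, C (a i j) * (X i * X j))).map (algebraMap k K) =
      qf (fun i j => algebraMap k K (a i j)) fun i => (x i).map (algebraMap k K) := by
  simp [qf, Polynomial.map_sum, Polynomial.algebraMap_apply, Polynomial.algebraMap_eq]

end Array
end Count
end DP4

/-! ### Summation over the degrees -/

namespace DP4
section Final
open MvPolynomial

theorem finite_of_degree {k : Type} [Field k] [Fintype k] (e : ℕ) :
    {x : Fin 5 → Polynomial k | ∀ i, (x i).natDegree ≤ e}.Finite := by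
  classical
  refine Set.Finite.of_injOn (t := Set.univ)
    (f := fun (x : Fin 5 → Polynomial k) (i : Fin 5) (n : Fin (e + 1)) => (x i).coeff n)
    (fun _ _ => Set.mem_univ _) ?_ Set.finite_univ
  intro x hx y hy hxy
  funext i
  ext n
  rcases lt_or_ge n (e + 1) with h | h
  · exact congr_fun (congr_fun hxy i) ⟨n, h⟩
  · rw [Polynomial.coeff_eq_zero_of_natDegree_lt ((hx i).trans_lt h),
      Polynomial.coeff_eq_zero_of_natDegree_lt ((hy i).trans_lt h)]

theorem geom_le (r : ℕ) (hr : 2 ≤ r) (e : ℕ) :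
    ∑ n ∈ Finset.range (e + 1), r ^ n ≤ 2 * r ^ e := by
  induction e with
  | zero => simp
  | succ e ih =>
    rw [Finset.sum_range_succ]
    have : 2 * r ^ e ≤ r ^ (e + 1) := by
      rw [pow_succ, mul_comm]
      exact Nat.mul_le_mul le_rfl hr
    omega

/-- Summing bounds for vectors of exact degree `n ≤ e` gives a bound for degree at most `e`. -/
theorem ncard_le_of_fibers {k : Type} [Field k] [Fintype k] (q : ℕ) (hq : 2 ≤ q) (e : ℕ)
    (G : Set (Fin 5 → Polynomial k)) (hG : ∀ x ∈ G, ∀ i, (x i).natDegree ≤ e)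
    (hne : ∀ x ∈ G, x ≠ 0)
    (h : ∀ n : ℕ, ∀ T : Finset (Fin 5 → Polynomial k), (∀ x ∈ T, x ∈ G ∧ (∀ i, (x i).natDegree ≤ n) ∧
      ∃ i, (x i).coeff n ≠ 0) → T.card ≤ q ^ (n + 3) * 2 ^ (2 * (2 * n + 1))) :
    G.Finite ∧ G.ncard ≤ 8 * q ^ 3 * (16 * q) ^ e := by
  classical
  have hfin : G.Finite := (finite_of_degree e).subset hG
  refine ⟨hfin, ?_⟩
  rw [Set.ncard_eq_toFinset_card G hfin]
  let top : (Fin 5 → Polynomial k) → ℕ := fun x => Finset.univ.sup fun i => (x i).natDegree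
  have hmaps : ∀ x ∈ hfin.toFinset, top x ∈ Finset.range (e + 1) := fun x hx => by
    rw [Finset.mem_range, Nat.lt_succ_iff]
    exact Finset.sup_le fun i _ => hG x (hfin.mem_toFinset.1 hx) i
  rw [Finset.card_eq_sum_card_fiberwise hmaps]
  have hfib : ∀ n, (hfin.toFinset.filter fun x => top x = n).card ≤ 4 * q ^ 3 * (16 * q) ^ n := by
    intro n
    refine (h n _ fun x hx => ?_).trans (le_of_eq ?_)
    · obtain ⟨hxG, hxn⟩ := Finset.mem_filter.1 hx
      rw [hfin.mem_toFinset] at hxG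
      refine ⟨hxG, fun i => hxn ▸ Finset.le_sup (f := fun i => (x i).natDegree)
        (Finset.mem_univ i), ?_⟩
      obtain ⟨i, -, hi⟩ := Finset.exists_mem_eq_sup Finset.univ ⟨0, Finset.mem_univ _⟩
        fun i => (x i).natDegree
      have hi' : n = (x i).natDegree := by rw [← hxn]; exact hi
      by_cases hx0 : x i = 0
      · have hn : n = 0 := by rw [hi', hx0, Polynomial.natDegree_zero]
        obtain ⟨j, hj⟩ := Function.ne_iff.1 (hne x hxG)
        refine ⟨j, fun h0 => hj ?_⟩
        have h1 : (x j).natDegree ≤ n := hxn ▸ Finset.le_sup (f := fun i => (x i).natDegree)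
          (Finset.mem_univ j)
        rw [hn] at h1 h0
        rw [Polynomial.eq_C_of_natDegree_le_zero h1, h0]
        simp
      · exact ⟨i, by rw [hi']; exact Polynomial.leadingCoeff_ne_zero.2 hx0⟩
    · rw [show 2 * (2 * n + 1) = 4 * n + 2 by ring, pow_add, pow_add, pow_mul, mul_pow]
      norm_num
      ring
  refine (Finset.sum_le_sum fun n _ => hfib n).trans ?_
  rw [← Finset.mul_sum, show 8 * q ^ 3 = 4 * q ^ 3 * 2 by ring, mul_assoc (4 * q ^ 3)]
  refine Nat.mul_le_mul le_rfl ?_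
  exact geom_le (16 * q) (by omega) e

end Final
end DP4

open MvPolynomial

/-- Let `Q₁, Q₂` be quadratic forms in 5 variables over `F_q` whose common
zero locus `X ⊂ P^4` is a smooth complete intersection surface (del Pezzo of degree 4) over
the algebraic closure `K`. There is a constant `c > 0` such that for every `e ≥ 0`, the
number of tuples `x ∈ F_q[t]^5` with `gcd = 1`, `max_i deg x_i ≤ e`,
`Q₁(x(t)) = Q₂(x(t)) = 0`, and not lying in the `K(t)`-span of any 2-dimensional
`K`-subspace `W ⊆ K^5` on which both `Q₁` and `Q₂` vanish (i.e. not lying on a line of `X`),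
is at most `c * (16q)^e`. -/
theorem stmt_7 (q : ℕ) (hq : ∃ p k : ℕ, p.Prime ∧ 0 < k ∧ q = p ^ k)
    (Fq : Type) [Field Fq] [Fintype Fq] (hcard : Fintype.card Fq = q)
    (Q₁ Q₂ : MvPolynomial (Fin 5) Fq) (hQ₁ : Q₁ ≠ 0) (hQ₂ : Q₂ ≠ 0)
    (hhom₁ : Q₁.IsHomogeneous 2) (hhom₂ : Q₂.IsHomogeneous 2)
    (hsmooth : ∀ v : Fin 5 → AlgebraicClosure Fq, v ≠ 0 →
      eval v (MvPolynomial.map (algebraMap Fq (AlgebraicClosure Fq)) Q₁) = 0 →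
      eval v (MvPolynomial.map (algebraMap Fq (AlgebraicClosure Fq)) Q₂) = 0 →
      LinearIndependent (AlgebraicClosure Fq)
        ![fun i => eval v (pderiv i (MvPolynomial.map (algebraMap Fq (AlgebraicClosure Fq)) Q₁)),
          fun i => eval v (pderiv i (MvPolynomial.map (algebraMap Fq (AlgebraicClosure Fq)) Q₂))]) :
    ∃ c : ℕ, 0 < c ∧ ∀ e : ℕ,
      {x : Fin 5 → Polynomial Fq |
          (∃ b : Fin 5 → Polynomial Fq, ∑ i, b i * x i = 1) ∧
          (∀ i, (x i).degree ≤ (e : ℕ)) ∧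
          MvPolynomial.aeval x Q₁ = 0 ∧ MvPolynomial.aeval x Q₂ = 0 ∧
          ¬ ∃ w₁ w₂ : Fin 5 → AlgebraicClosure Fq,
              LinearIndependent (AlgebraicClosure Fq) ![w₁, w₂] ∧
              (∀ a b : AlgebraicClosure Fq,
                eval (fun i => a * w₁ i + b * w₂ i)
                  (MvPolynomial.map (algebraMap Fq (AlgebraicClosure Fq)) Q₁) = 0 ∧
                eval (fun i => a * w₁ i + b * w₂ i)
                  (MvPolynomial.map (algebraMap Fq (AlgebraicClosure Fq)) Q₂) = 0) ∧
              ∃ f g : Polynomial (AlgebraicClosure Fq), ∀ i,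
                Polynomial.map (algebraMap Fq (AlgebraicClosure Fq)) (x i)
                  = Polynomial.C (w₁ i) * f + Polynomial.C (w₂ i) * g}.Finite ∧
      {x : Fin 5 → Polynomial Fq |
          (∃ b : Fin 5 → Polynomial Fq, ∑ i, b i * x i = 1) ∧
          (∀ i, (x i).degree ≤ (e : ℕ)) ∧
          MvPolynomial.aeval x Q₁ = 0 ∧ MvPolynomial.aeval x Q₂ = 0 ∧
          ¬ ∃ w₁ w₂ : Fin 5 → AlgebraicClosure Fq,
              LinearIndependent (AlgebraicClosure Fq) ![w₁, w₂] ∧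
              (∀ a b : AlgebraicClosure Fq,
                eval (fun i => a * w₁ i + b * w₂ i)
                  (MvPolynomial.map (algebraMap Fq (AlgebraicClosure Fq)) Q₁) = 0 ∧
                eval (fun i => a * w₁ i + b * w₂ i)
                  (MvPolynomial.map (algebraMap Fq (AlgebraicClosure Fq)) Q₂) = 0) ∧
              ∃ f g : Polynomial (AlgebraicClosure Fq), ∀ i,
                Polynomial.map (algebraMap Fq (AlgebraicClosure Fq)) (x i)
                  = Polynomial.C (w₁ i) * f + Polynomial.C (w₂ i) * g}.ncard
        ≤ c * (16 * q) ^ e := by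
  classical
  let K := AlgebraicClosure Fq
  obtain ⟨p₀, hp₀⟩ := CharP.exists Fq
  obtain ⟨m, hp, hm⟩ := FiniteField.card Fq p₀
  have : Fact p₀.Prime := ⟨hp⟩
  have : CharP K p₀ := charP_of_injective_algebraMap (algebraMap Fq K).injective p₀
  have hq2 : 2 ≤ q := by rw [← hcard]; exact Fintype.one_lt_card
  have hqm : q = p₀ ^ (m : ℕ) := by rw [← hcard, hm]
  obtain ⟨a, rfl⟩ := DP4.exists_array Q₁ hhom₁
  obtain ⟨b, rfl⟩ := DP4.exists_array Q₂ hhom₂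
  let A : Fin 5 → Fin 5 → K := fun i j => algebraMap Fq K (a i j)
  let B : Fin 5 → Fin 5 → K := fun i j => algebraMap Fq K (b i j)
  simp only [DP4.eval_array, DP4.pderiv_array] at hsmooth ⊢
  have hs : DP4.Sm A B := by
    intro v hv hA hB α β h
    refine LinearIndependent.pair_iff.1 (hsmooth v hv hA hB) α β (funext fun i => ?_)
    simpa using h i
  let M : (Fin 5 → Polynomial Fq) → (Fin 5 → Polynomial K) :=
    fun x i => (x i).map (algebraMap Fq K)
  have hM : Function.Injective M := fun x y h => funext fun i =>
    Polynomial.map_injective _ (algebraMap Fq K).injective (congr_fun h i)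
  refine ⟨8 * q ^ 3, by positivity, fun e => ?_⟩
  refine DP4.ncard_le_of_fibers q hq2 e _ (fun x hx i => ?_) (fun x hx h0 => ?_) fun n T hT => ?_
  · exact Polynomial.natDegree_le_of_degree_le (hx.2.1 i)
  · obtain ⟨c, hc⟩ := hx.1
    simp [h0] at hc
  · rw [← Finset.card_image_of_injective T hM, hqm]
    have hall : ∀ y ∈ T.image M, ∃ x ∈ T, M x = y := fun y hy => Finset.mem_image.1 hy
    refine DP4.card_le_of_top p₀ m (hqm ▸ hq2) hs n _ ?_ ?_ ?_ ?_ ?_ ?_ ?_ <;>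
      intro y hy <;> obtain ⟨x, hx, rfl⟩ := hall y hy <;>
      obtain ⟨⟨huni, -, hA, hB, hl⟩, hd, ht⟩ := hT x hx
    · intro i k
      simp only [M, Polynomial.coeff_map]
      rw [← map_pow, ← hm, FiniteField.pow_card]
    · exact fun i => Polynomial.natDegree_map_le.trans (hd i)
    · obtain ⟨i, hi⟩ := ht
      refine ⟨i, ?_⟩
      simpa [M, Polynomial.coeff_map] using hi
    · obtain ⟨c, hc⟩ := huni
      refine ⟨fun i => (c i).map (algebraMap Fq K), ?_⟩
      have := congrArg (Polynomial.map (algebraMap Fq K)) hc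
      simpa [Polynomial.map_sum] using this
    · rw [← DP4.aeval_array, hA, Polynomial.map_zero]
    · rw [← DP4.aeval_array, hB, Polynomial.map_zero]
    · exact hl
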